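/- arXiv:1810.01303 — 3 statements merged into one kernel-verified Lean document; each statement's English description precedes it below -/
import Mathlib

section
/- There exist constants C > 0 and K > 0 depending only on k such that the following holds for every prime power q ≥ 2, every subset S of {1,…,k} with S and S^c nonempty, and every d ∈ ℤ^k for which there exists σ ∈ S_k with σ({1,…,|S|}) = S, d_{σ(i)} ≥ i−1 for 1 ≤ i ≤ |S|, and d_{σ(i)} ≤ i−1 for |S| < i ≤ k: |c_S(d)| ≤ C · (2 + k(k−1)/2 + Σ_{i∈S} d_i − Σ_{i∉S} d_i)^K · min( q^{(−max_{i∈S} d_i + min_{i∉S} d_i − 1)/2}, q^{(−Σ_{i∈S} d_i + binom(|S|,2))/2}, q^{(Σ_{i∉S} d_i + binom(|S|,2) − binom(k,2))/2}, q^{−|Σ_{i∈S} d_i + Σ_{i∉S} d_i − binom(k,2)|/2} ), where binom(a,2) = a(a−1)/2. -/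
open Polynomial

noncomputable section

/-- `N_S(d)`: the number of `k`-tuples of monic polynomials over `F_q` with
`deg f_i = d_i` for `i ∈ S`, `deg f_i = -d_i` for `i ∉ S`, such that
`T^a ∏_{i∈S} f_i = T^b ∏_{i∉S} f_i` for some naturals `a, b`. -/
def NS (F : Type) [Field F] {k : ℕ} (S : Finset (Fin k)) (d : Fin k → ℤ) : ℕ :=
  Set.ncard {f : Fin k → Polynomial F |
    (∀ i, (f i).Monic) ∧
    (∀ i ∈ S, ((f i).natDegree : ℤ) = d i) ∧
    (∀ i ∉ S, ((f i).natDegree : ℤ) = -d i) ∧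
    ∃ a b : ℕ, Polynomial.X ^ a * ∏ i ∈ S, f i = Polynomial.X ^ b * ∏ i ∈ Sᶜ, f i}

/-- `w(d) = q^{-(∑_{i∈S} d_i - ∑_{i∉S} d_i)/2} N_S(d)`, the coefficient of
`∏ q^{α_i d_i}` in the diagonal sum. -/
def wS (F : Type) [Field F] [Fintype F] {k : ℕ} (S : Finset (Fin k)) (d : Fin k → ℤ) : ℝ :=
  (Fintype.card F : ℝ) ^ ((-((((∑ i ∈ S, d i) - ∑ i ∈ Sᶜ, d i : ℤ)) : ℝ)) / 2) * NS F S d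

/-- `c_S(d)`: the coefficient of `∏ q^{α_i d_i}` in `M_S`, i.e. in the Vandermonde
determinant times the diagonal sum. -/
def cS (F : Type) [Field F] [Fintype F] {k : ℕ} (S : Finset (Fin k)) (d : Fin k → ℤ) : ℝ :=
  (-1 : ℝ) ^ (k * (k - 1) / 2) *
    ∑ σ : Equiv.Perm (Fin k), ((Equiv.Perm.sign σ : ℤ) : ℝ) *
      wS F S (fun i => d i - ((σ i : ℕ) : ℤ))

/-- `v_J` for `J ⊆ S × Sᶜ`. -/
def vJ {k : ℕ} (S : Finset (Fin k)) (J : Finset (Fin k × Fin k)) (i : Fin k) : ℤ :=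
  if i ∈ S then ((J.filter fun p => p.1 = i).card : ℤ)
  else -(((J.filter fun p => p.2 = i).card : ℤ))

/-- `b(d) = ∑_{J ⊆ S×Sᶜ} (-1)^{|J|} w(d - v_J)`, the coefficient of `∏ q^{α_i d_i}`
in `∏_{i∈S, i'∈Sᶜ} (1 - q^{α_i - α_{i'}})` times the diagonal sum. -/
def bS (F : Type) [Field F] [Fintype F] {k : ℕ} (S : Finset (Fin k)) (d : Fin k → ℤ) : ℝ :=
  ∑ J ∈ (S ×ˢ Sᶜ).powerset, (-1 : ℝ) ^ J.card * wS F S (fun i => d i - vJ S J i)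

open Finset in
/-- toggling an element of a finset -/
theorem st_toggle {X : Type} [Fintype X] [DecidableEq X] (p : Finset X → Prop) [DecidablePred p]
    (x : X) (hp : ∀ H, p H → p (symmDiff H {x})) :
    ∑ H : Finset X with p H, (-1 : ℤ) ^ #H = 0 := by
  refine Finset.sum_involution (fun H _ => symmDiff H {x}) ?_ ?_ ?_ ?_
  · intro H _
    by_cases hx : x ∈ H
    · have h1 : symmDiff H {x} = H.erase x := by
        ext y; simp only [Finset.mem_symmDiff, Finset.mem_singleton, Finset.mem_erase]
        by_cases hy : y = x
        · subst hy; simp [hx]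
        · simp [hy]
      have h2 := Finset.card_erase_add_one hx
      rw [h1, ← h2]; ring
    · have h1 : symmDiff H {x} = insert x H := by
        ext y; simp only [Finset.mem_symmDiff, Finset.mem_singleton, Finset.mem_insert]
        by_cases hy : y = x
        · subst hy; simp [hx]
        · simp [hy]
      rw [h1, Finset.card_insert_of_notMem hx]; ring
  · intro H _ _ h
    have := congrArg (fun K => x ∈ K) h
    simp only [Finset.mem_symmDiff, Finset.mem_singleton] at this
    by_cases hx : x ∈ H <;> simp [hx] at this
  · intro H hH
    simp only [Finset.mem_filter, Finset.mem_univ, true_and] at hH ⊢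
    exact hp H hH
  · intro H _
    simp [symmDiff_assoc]

section loc
variable {I J : Type} [Fintype I] [Fintype J] [DecidableEq I] [DecidableEq J]

/-- row count -/
def st_row (H : Finset (I × J)) (i : I) : ℕ := (H.filter fun x => x.1 = i).card
/-- column count -/
def st_col (H : Finset (I × J)) (j : J) : ℕ := (H.filter fun x => x.2 = j).card
/-- admissible -/
def st_adm (e : I → ℕ) (e' : J → ℕ) (H : Finset (I × J)) : Prop :=
  (∀ i, st_row H i ≤ e i) ∧ (∀ j, st_col H j ≤ e' j)

instance st_adm_dec (e : I → ℕ) (e' : J → ℕ) : DecidablePred (st_adm e e') := by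
  intro H; unfold st_adm; infer_instance

/-- local factor -/
def st_loc (e : I → ℕ) (e' : J → ℕ) : ℤ :=
  ∑ H : Finset (I × J) with st_adm e e' H, (-1 : ℤ) ^ H.card

theorem st_row_le (H : Finset (I × J)) (i : I) : st_row H i ≤ Fintype.card J := by
  unfold st_row
  rw [← Finset.card_univ]
  refine Finset.card_le_card_of_injOn (fun x => x.2) (by simp) ?_
  rintro ⟨a, b⟩ ha ⟨c, d⟩ hc h
  simp at ha hc h
  simp [ha.2, hc.2, h]

theorem st_col_le (H : Finset (I × J)) (j : J) : st_col H j ≤ Fintype.card I := by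
  unfold st_col
  rw [← Finset.card_univ]
  refine Finset.card_le_card_of_injOn (fun x => x.1) (by simp) ?_
  rintro ⟨a, b⟩ ha ⟨c, d⟩ hc h
  simp at ha hc h
  simp [ha.2, hc.2, h]

theorem st_row_toggle (H : Finset (I × J)) (x : I × J) (i : I) (h : i ≠ x.1) :
    st_row (symmDiff H {x}) i = st_row H i := by
  unfold st_row
  congr 1
  ext y
  simp only [Finset.mem_filter, Finset.mem_symmDiff, Finset.mem_singleton]
  grind

theorem st_col_toggle (H : Finset (I × J)) (x : I × J) (j : J) (h : j ≠ x.2) :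
    st_col (symmDiff H {x}) j = st_col H j := by
  unfold st_col
  congr 1
  ext y
  simp only [Finset.mem_filter, Finset.mem_symmDiff, Finset.mem_singleton]
  grind

theorem st_loc_big (e : I → ℕ) (e' : J → ℕ) (hs : ∑ i, e i = ∑ j, e' j)
    (h : Fintype.card I * Fintype.card J < ∑ i, e i) : st_loc e e' = 0 := by
  have h1 : ∃ i, Fintype.card J < e i := by
    by_contra! hc
    have := Finset.sum_le_sum (fun i (_ : i ∈ Finset.univ) => hc i)
    simp at this; omega
  have h2 : ∃ j, Fintype.card I < e' j := by
    by_contra! hc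
    have := Finset.sum_le_sum (fun i (_ : i ∈ Finset.univ) => hc i)
    simp at this; rw [mul_comm] at h; omega
  obtain ⟨i0, hi⟩ := h1
  obtain ⟨j0, hj⟩ := h2
  refine st_toggle _ (i0, j0) ?_
  rintro H ⟨ha, hb⟩
  constructor
  · intro i
    by_cases hi0 : i = i0
    · subst hi0; exact (st_row_le _ _).trans hi.le
    · rw [st_row_toggle _ _ _ hi0]; exact ha i
  · intro i
    by_cases hi0 : i = j0
    · subst hi0; exact (st_col_le _ _).trans hj.le
    · rw [st_col_toggle _ _ _ hi0]; exact hb i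

theorem st_loc_row (e : I → ℕ) (e' : J → ℕ) (hs : ∑ i, e i = ∑ j, e' j)
    (i0 : I) (h0 : 0 < ∑ i, e i) (h : ∑ i, e i ≤ e i0) : st_loc e e' = 0 := by
  have hz : ∀ i, i ≠ i0 → e i = 0 := by
    intro i hi
    have := Finset.add_le_sum (f := e) (s := Finset.univ) (fun _ _ => Nat.zero_le _)
      (Finset.mem_univ i) (Finset.mem_univ i0) hi
    omega
  have h2 : ∃ j, 1 ≤ e' j := by
    by_contra! hc
    have : ∑ j, e' j = 0 := Finset.sum_eq_zero (fun j _ => by have := hc j; omega)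
    omega
  obtain ⟨j0, hj⟩ := h2
  have key : ∀ H : Finset (I × J), st_adm e e' H ↔ ∀ x ∈ H, x.1 = i0 ∧ 1 ≤ e' x.2 := by
    intro H
    constructor
    · rintro ⟨ha, hb⟩ x hx
      constructor
      · by_contra hne
        have h1 := ha x.1
        rw [hz _ hne] at h1
        have : 0 < st_row H x.1 := Finset.card_pos.2 ⟨x, by simp [hx]⟩
        omega
      · refine le_trans ?_ (hb x.2)
        exact Finset.card_pos.2 ⟨x, by simp [hx]⟩
    · intro hx
      have hcol : ∀ j, st_col H j ≤ e' j := by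
        intro j
        by_cases hj : ∃ x ∈ H, x.2 = j
        · obtain ⟨x, hxH, rfl⟩ := hj
          refine le_trans ?_ (hx x hxH).2
          unfold st_col
          rw [Finset.card_le_one]
          intro a ha b hb
          simp only [Finset.mem_filter] at ha hb
          exact Prod.ext ((hx a ha.1).1.trans (hx b hb.1).1.symm) (ha.2.trans hb.2.symm)
        · push Not at hj
          have : st_col H j = 0 := by
            unfold st_col; rw [Finset.card_eq_zero]
            exact Finset.filter_eq_empty_iff.2 (fun x hx => hj x hx)
          omega
      refine ⟨?_, hcol⟩
      intro i
      by_cases hi : i = i0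
      · subst hi
        have h1 : st_row H i ≤ H.card := Finset.card_filter_le _ _
        have h2 : H.card = ∑ j, st_col H j := by
          unfold st_col
          exact Finset.card_eq_sum_card_fiberwise (f := fun x : I × J => x.2) (t := Finset.univ) (fun _ _ => Finset.mem_coe.2 (Finset.mem_univ _))
        have h3 := Finset.sum_le_sum (fun j (_ : j ∈ Finset.univ) => hcol j)
        omega
      · have : st_row H i = 0 := by
          unfold st_row; rw [Finset.card_eq_zero]
          refine Finset.filter_eq_empty_iff.2 (fun x hxx => ?_)
          rw [(hx x hxx).1]; exact fun h => hi h.symm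
        omega
  refine st_toggle _ (i0, j0) ?_
  intro H hH
  rw [key] at hH ⊢
  intro x hx
  rw [Finset.mem_symmDiff, Finset.mem_singleton] at hx
  rcases hx with hx | hx
  · exact hH x hx.1
  · rw [hx.1]; exact ⟨rfl, hj⟩

theorem st_loc_swap (e : I → ℕ) (e' : J → ℕ) : st_loc e e' = st_loc e' e := by
  unfold st_loc
  have hr : ∀ (H : Finset (I × J)) j, st_row (H.map (Equiv.prodComm I J).toEmbedding) j = st_col H j := by
    intro H j
    unfold st_row st_col
    rw [Finset.filter_map, Finset.card_map]; rfl
  have hc : ∀ (H : Finset (I × J)) j, st_col (H.map (Equiv.prodComm I J).toEmbedding) j = st_row H j := by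
    intro H j
    unfold st_row st_col
    rw [Finset.filter_map, Finset.card_map]; rfl
  refine Finset.sum_equiv (Equiv.finsetCongr (Equiv.prodComm I J)) ?_ ?_
  · intro H
    rw [Finset.mem_filter, Finset.mem_filter]
    simp only [Finset.mem_univ, true_and, st_adm, Equiv.finsetCongr_apply, hr, hc]
    exact and_comm
  · intro H _
    simp

theorem st_loc_col (e : I → ℕ) (e' : J → ℕ) (hs : ∑ i, e i = ∑ j, e' j)
    (j0 : J) (h0 : 0 < ∑ i, e i) (h : ∑ i, e i ≤ e' j0) : st_loc e e' = 0 := by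
  rw [st_loc_swap]
  exact st_loc_row e' e hs.symm j0 (hs ▸ h0) (hs ▸ h)

/-- the good local exponents -/
def st_good (e : I → ℕ) (e' : J → ℕ) : Prop :=
  ∑ i, e i ≤ Fintype.card I * Fintype.card J ∧ (0 < ∑ i, e i →
    (∀ i, e i + 1 ≤ ∑ i, e i) ∧ (∀ j, e' j + 1 ≤ ∑ i, e i))

theorem st_good_of_ne (e : I → ℕ) (e' : J → ℕ) (hs : ∑ i, e i = ∑ j, e' j)
    (h : st_loc e e' ≠ 0) : st_good e e' := by
  refine ⟨?_, fun h0 => ⟨fun i => ?_, fun j => ?_⟩⟩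
  · by_contra hc; exact h (st_loc_big e e' hs (by omega))
  · by_contra hc; exact h (st_loc_row e e' hs i h0 (by omega))
  · by_contra hc; exact h (st_loc_col e e' hs j h0 (by omega))
end loc

section abs
variable {I J : Type} [Fintype I] [Fintype J] [DecidableEq I] [DecidableEq J]
variable {P : Type} [Fintype P] [DecidableEq P] (deg : P → ℕ) (T : P)

/-- degree -/
def st_dg (u : P → ℕ) : ℕ := ∑ π, u π * deg π

/-- elements of degree n -/
def st_Pn (n : ℤ) : Finset (P → ℕ) :=
  (Fintype.piFinset fun _ => Finset.range (n.toNat + 1)).filter (fun u => (st_dg deg u : ℤ) = n)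

theorem st_le_dg (hdeg : ∀ π, 1 ≤ deg π) (u : P → ℕ) (π : P) : u π ≤ st_dg deg u := by
  unfold st_dg
  refine le_trans ?_ (Finset.single_le_sum (f := fun π => u π * deg π)
    (fun _ _ => Nat.zero_le _) (Finset.mem_univ π))
  exact Nat.le_mul_of_pos_right _ (hdeg π)

theorem st_mem_Pn (hdeg : ∀ π, 1 ≤ deg π) (n : ℤ) (u : P → ℕ) :
    u ∈ st_Pn deg n ↔ (st_dg deg u : ℤ) = n := by
  unfold st_Pn
  rw [Finset.mem_filter]
  refine ⟨fun h => h.2, fun h => ⟨?_, h⟩⟩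
  rw [Fintype.mem_piFinset]
  intro π
  have := st_le_dg deg hdeg u π
  rw [Finset.mem_range]; omega

theorem st_dg_add (u v : P → ℕ) : st_dg deg (fun π => u π + v π) = st_dg deg u + st_dg deg v := by
  simp [st_dg, add_mul, Finset.sum_add_distrib]

/-- tuples -/
def st_N (a : I → ℤ) (b : J → ℤ) : Finset ((I → P → ℕ) × (J → P → ℕ)) :=
  ((Fintype.piFinset fun i => st_Pn deg (a i)) ×ˢ (Fintype.piFinset fun j => st_Pn deg (b j))).filter
    (fun x => ∀ π, π ≠ T → ∑ i, x.1 i π = ∑ j, x.2 j π)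

theorem st_mem_N (hdeg : ∀ π, 1 ≤ deg π) (a : I → ℤ) (b : J → ℤ) (x : (I → P → ℕ) × (J → P → ℕ)) :
    x ∈ st_N deg T a b ↔ (∀ i, (st_dg deg (x.1 i) : ℤ) = a i) ∧ (∀ j, (st_dg deg (x.2 j) : ℤ) = b j)
      ∧ ∀ π, π ≠ T → ∑ i, x.1 i π = ∑ j, x.2 j π := by
  simp [st_N, Finset.mem_filter, Finset.mem_product, Fintype.mem_piFinset, st_mem_Pn deg hdeg, and_assoc]

/-- Moebius sums -/
def st_M (n : ℕ) : ℤ := ∑ h : Finset P with ∑ π ∈ h, deg π = n, (-1 : ℤ) ^ h.card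

theorem st_dg_ind (h : Finset P) : st_dg deg (fun π => if π ∈ h then 1 else 0) = ∑ π ∈ h, deg π := by
  simp [st_dg]

theorem st_conv1 (hdeg : ∀ π, 1 ≤ deg π) (n : ℤ) (h : Finset P) :
    ((st_Pn deg n).filter (fun u => ∀ π ∈ h, u π ≠ 0)).card
      = (st_Pn deg (n - ((∑ π ∈ h, deg π : ℕ) : ℤ))).card := by
  refine Finset.card_nbij' (fun u π => u π - if π ∈ h then 1 else 0)
    (fun u π => u π + if π ∈ h then 1 else 0) ?_ ?_ ?_ ?_
  · intro u hu
    simp only [Finset.coe_filter, Set.mem_setOf_eq, st_mem_Pn deg hdeg, Finset.mem_coe] at hu ⊢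
    have h1 := st_dg_add deg (fun π => u π - if π ∈ h then 1 else 0) (fun π => if π ∈ h then 1 else 0)
    rw [st_dg_ind] at h1
    have h2 : (fun π => (u π - if π ∈ h then 1 else 0) + if π ∈ h then 1 else 0) = u := by
      funext π
      have := hu.2 π
      split_ifs with hh
      · have := this hh; omega
      · simp
    rw [h2] at h1
    omega
  · intro u hu
    simp only [Finset.coe_filter, Set.mem_setOf_eq, st_mem_Pn deg hdeg, Finset.mem_coe] at hu ⊢
    rw [st_dg_add, st_dg_ind]
    constructor
    · push_cast; push_cast at hu; omega
    · intro π hp; simp [hp]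
  · intro u hu
    simp only [Finset.coe_filter, Set.mem_setOf_eq] at hu
    funext π
    have := hu.2 π
    dsimp only
    split_ifs with hh
    · have := this hh; omega
    · simp
  · intro u hu
    funext π
    simp

theorem st_Pn_neg (n : ℤ) (hn : n < 0) : st_Pn deg n = ∅ := by
  unfold st_Pn
  rw [Finset.filter_eq_empty_iff]
  intro u _; omega

theorem st_conv (hdeg : ∀ π, 1 ≤ deg π) (q D : ℕ)
    (hc : ∀ n : ℕ, n ≤ D → (st_Pn deg (n : ℤ)).card = q ^ n) (n : ℕ) (hn : n ≤ D) :
    ∑ m ∈ Finset.range (n + 1), st_M deg m * (q : ℤ) ^ (n - m) = if n = 0 then 1 else 0 := by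
  have e1 : ∑ u ∈ st_Pn deg (n : ℤ), ∑ h ∈ (Finset.univ.filter (fun π => u π ≠ 0)).powerset,
      (-1 : ℤ) ^ h.card = if n = 0 then 1 else 0 := by
    simp_rw [Finset.sum_powerset_neg_one_pow_card]
    split_ifs with h0
    · subst h0
      rw [Finset.sum_eq_single (fun _ => 0)]
      · simp
      · intro u hu hne
        rw [if_neg]
        intro hh
        apply hne
        funext π
        by_contra hcc
        have : π ∈ (Finset.univ.filter (fun π => u π ≠ 0)) := by simp [hcc]
        rw [hh] at this; simp at this
      · intro hh
        exfalso; apply hh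
        rw [st_mem_Pn deg hdeg]; simp [st_dg]
    · apply Finset.sum_eq_zero
      intro u hu
      rw [if_neg]
      intro hh
      rw [st_mem_Pn deg hdeg] at hu
      have : st_dg deg u = 0 := by
        unfold st_dg
        apply Finset.sum_eq_zero
        intro π _
        have := (Finset.filter_eq_empty_iff.1 hh) (Finset.mem_univ π)
        simp at this; simp [this]
      omega
  rw [← e1]
  have e2 : ∑ u ∈ st_Pn deg (n : ℤ), ∑ h ∈ (Finset.univ.filter (fun π => u π ≠ 0)).powerset,
      (-1 : ℤ) ^ h.card = ∑ h : Finset P, ∑ u ∈ (st_Pn deg (n : ℤ)).filter (fun u => ∀ π ∈ h, u π ≠ 0),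
        (-1 : ℤ) ^ h.card := by
    apply Finset.sum_comm'
    intro u h
    simp only [Finset.mem_powerset, Finset.mem_filter, Finset.mem_univ, and_true, Finset.subset_iff, true_and]
  rw [e2]
  simp_rw [Finset.sum_const, st_conv1 deg hdeg, nsmul_eq_mul]
  have e3 : ∑ h : Finset P with (∑ π ∈ h, deg π) ∈ Finset.range (n + 1),
      ((st_Pn deg (n - ((∑ π ∈ h, deg π : ℕ) : ℤ))).card : ℤ) * (-1 : ℤ) ^ h.card
      = ∑ h : Finset P, ((st_Pn deg (n - ((∑ π ∈ h, deg π : ℕ) : ℤ))).card : ℤ) * (-1 : ℤ) ^ h.card := by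
    apply Finset.sum_subset (Finset.filter_subset _ _)
    intro h _ hh
    rw [st_Pn_neg]
    · simp
    · simp only [Finset.mem_filter, Finset.mem_univ, true_and, Finset.mem_range] at hh
      omega
  rw [← e3, ← Finset.sum_fiberwise_of_maps_to (t := Finset.range (n + 1)) (g := fun h => ∑ π ∈ h, deg π)]
  · apply Finset.sum_congr rfl
    intro m hm
    unfold st_M
    rw [Finset.sum_mul, Finset.filter_filter]
    refine Finset.sum_congr ?_ ?_
    · ext h
      simp only [Finset.mem_filter, Finset.mem_univ, true_and]
      constructor
      · rintro rfl; exact ⟨hm, rfl⟩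
      · exact fun h => h.2
    · intro h hh
      simp only [Finset.mem_filter, Finset.mem_univ, true_and] at hh
      rw [hh.2]
      rw [Finset.mem_range] at hm
      have : (n : ℤ) - (m : ℤ) = ((n - m : ℕ) : ℤ) := by omega
      rw [this, hc _ (by omega)]
      push_cast; ring
  · intro h hh
    exact (Finset.mem_filter.1 hh).2

theorem st_M_eq (hdeg : ∀ π, 1 ≤ deg π) (q D : ℕ)
    (hc : ∀ n : ℕ, n ≤ D → (st_Pn deg (n : ℤ)).card = q ^ n) (n : ℕ) (hn : n ≤ D) :
    st_M deg n = if n = 0 then 1 else if n = 1 then -(q : ℤ) else 0 := by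
  have h1 := st_conv deg hdeg q D hc n hn
  cases n with
  | zero => simpa using h1
  | succ n =>
    have h2 := st_conv deg hdeg q D hc n (by omega)
    rw [Finset.sum_range_succ] at h1
    have h3 : ∑ m ∈ Finset.range (n + 1), st_M deg m * (q : ℤ) ^ (n + 1 - m)
      = q * ∑ m ∈ Finset.range (n + 1), st_M deg m * (q : ℤ) ^ (n - m) := by
      rw [Finset.mul_sum]
      apply Finset.sum_congr rfl
      intro m hm
      rw [Finset.mem_range] at hm
      rw [Nat.succ_sub (by omega), pow_succ]; ring
    rw [h3, h2] at h1
    by_cases hn0 : n = 0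
    · subst hn0; simp at h1 ⊢; linarith
    · simp [hn0] at h1 ⊢; linarith

/-- regroup by degrees -/
theorem st_regroup {X : Type} [Fintype X] [DecidableEq X] (hdeg : ∀ π, 1 ≤ deg π) (q D : ℕ)
    (hc : ∀ n : ℕ, n ≤ D → (st_Pn deg (n : ℤ)).card = q ^ n)
    (Φ : (X → ℕ) → ℤ) (hΦ : ∀ n x, D < n x → Φ n = 0) :
    ∑ h : X → Finset P, (∏ x, (-1 : ℤ) ^ (h x).card) * Φ (fun x => ∑ π ∈ h x, deg π)
      = ∑ Y : Finset X, (-(q : ℤ)) ^ Y.card * Φ (fun x => if x ∈ Y then 1 else 0) := by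
  set L := ∑ π, deg π + 2 with hL
  have hle : ∀ h : Finset P, ∑ π ∈ h, deg π < L := by
    intro h
    have := Finset.sum_le_sum_of_subset (f := deg) (Finset.subset_univ h)
    omega
  rw [← Finset.sum_fiberwise_of_maps_to (t := Fintype.piFinset (fun _ : X => Finset.range L))
    (g := fun h x => ∑ π ∈ h x, deg π)]
  swap
  · intro h _
    rw [Fintype.mem_piFinset]
    intro x; rw [Finset.mem_range]; exact hle _
  symm
  refine Finset.sum_of_injOn (fun Y x => if x ∈ Y then 1 else 0) ?_ ?_ ?_ ?_
  · intro Y _ Z _ hYZ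
    ext x
    have := congrFun hYZ x
    dsimp only at this
    split_ifs at this <;> simp_all
  · intro Y _
    simp only [Finset.mem_coe, Fintype.mem_piFinset, Finset.mem_range]
    intro x
    split_ifs <;> omega
  all_goals
    have key : ∀ n : X → ℕ, ∑ h : X → Finset P with (fun x => ∑ π ∈ h x, deg π) = n,
      (∏ x, (-1 : ℤ) ^ (h x).card) * Φ (fun x => ∑ π ∈ h x, deg π)
      = (∏ x, (if n x = 0 then 1 else if n x = 1 then -(q : ℤ) else 0)) * Φ n := by
      intro n
      by_cases hD : ∀ x, n x ≤ D
      · simp_rw [← fun x => st_M_eq deg hdeg q D hc (n x) (hD x)]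
        unfold st_M
        rw [Finset.prod_univ_sum, Finset.sum_mul]
        refine Finset.sum_congr ?_ ?_
        · ext h
          simp [Fintype.mem_piFinset, funext_iff]
        · intro h hh
          rw [Fintype.mem_piFinset] at hh
          congr 2
          funext x
          have := hh x
          simpa using this
      · push Not at hD
        obtain ⟨x, hx⟩ := hD
        rw [hΦ n x hx, mul_zero]
        apply Finset.sum_eq_zero
        intro h hh
        rw [(Finset.mem_filter.1 hh).2, hΦ n x hx, mul_zero]
  · intro n hn hni
    rw [key]
    by_cases h2 : ∃ x, n x ≠ 0 ∧ n x ≠ 1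
    · obtain ⟨x, h0, h1⟩ := h2
      rw [Finset.prod_eq_zero (Finset.mem_univ x), zero_mul]
      simp [h0, h1]
    · exfalso
      push Not at h2
      apply hni
      refine ⟨Finset.univ.filter (fun x => n x ≠ 0), by simp, ?_⟩
      funext x
      by_cases hx : n x = 0
      · simp [hx]
      · simp [h2 x hx]
  · intro Y _
    rw [key]
    congr 1
    have : ∀ x, (if (if x ∈ Y then 1 else 0) = 0 then 1 else if (if x ∈ Y then 1 else 0) = 1 then -(q : ℤ) else 0)
      = if x ∈ Y then -(q : ℤ) else 1 := by
      intro x; by_cases hx : x ∈ Y <;> simp [hx]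
    simp_rw [this]
    rw [Finset.prod_ite_mem, Finset.univ_inter, Finset.prod_const]
end abs

section abs2
variable {I J : Type} [Fintype I] [Fintype J] [DecidableEq I] [DecidableEq J]
variable {P : Type} [Fintype P] [DecidableEq P] (deg : P → ℕ) (T : P)

theorem st_row_eq (H : Finset (I × J)) (i : I) : st_row H i = ∑ j, if (i, j) ∈ H then 1 else 0 := by
  unfold st_row
  rw [Finset.sum_boole, Nat.cast_id]
  refine Finset.card_nbij' (fun x => x.2) (fun j => (i, j)) ?_ ?_ ?_ ?_
  · rintro ⟨a, b⟩ h; simp at h ⊢; rw [← h.2]; exact h.1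
  · intro j h; simpa using h
  · rintro ⟨a, b⟩ h; simp at h ⊢; exact h.2.symm
  · intro j h; rfl

theorem st_col_eq (H : Finset (I × J)) (j : J) : st_col H j = ∑ i, if (i, j) ∈ H then 1 else 0 := by
  unfold st_col
  rw [Finset.sum_boole, Nat.cast_id]
  refine Finset.card_nbij' (fun x => x.1) (fun i => (i, j)) ?_ ?_ ?_ ?_
  · rintro ⟨a, b⟩ h; simp at h ⊢; rw [← h.2]; exact h.1
  · intro j h; simpa using h
  · rintro ⟨a, b⟩ h; simp at h ⊢; exact h.2.symm
  · intro j h; rfl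

theorem st_row_sum (H : Finset (I × J)) : ∑ i, st_row H i = ∑ j, st_col H j := by
  simp_rw [st_row_eq, st_col_eq]; exact Finset.sum_comm

/-- transposition -/
def st_tr {X P : Type} [Fintype X] [Fintype P] [DecidableEq X] [DecidableEq P] :
    (X → Finset P) ≃ (P → Finset X) where
  toFun h π := Finset.univ.filter (fun x => π ∈ h x)
  invFun H x := Finset.univ.filter (fun π => x ∈ H π)
  left_inv h := by funext x; ext π; simp
  right_inv h := by funext x; ext π; simp

theorem st_tr_sign {X : Type} [Fintype X] [DecidableEq X] (h : X → Finset P) :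
    ∏ x, (-1 : ℤ) ^ (h x).card = ∏ π, (-1 : ℤ) ^ (st_tr h π).card := by
  rw [Finset.prod_pow_eq_pow_sum, Finset.prod_pow_eq_pow_sum]
  congr 1
  have h1 : ∀ x, (h x).card = ∑ π, if π ∈ h x then 1 else 0 := by intro x; simp
  have h2 : ∀ π, (st_tr h π).card = ∑ x, if π ∈ h x then 1 else 0 := by intro x; simp [st_tr]
  simp_rw [h1, h2]
  exact Finset.sum_comm

theorem st_row_dg (h : I × J → Finset P) (i : I) :
    st_dg deg (fun π => st_row (st_tr h π) i) = ∑ j, ∑ π ∈ h (i, j), deg π := by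
  simp only [st_dg, st_row_eq, st_tr, Equiv.coe_fn_mk, Finset.mem_filter, Finset.mem_univ, true_and,
    Finset.sum_mul, ite_mul, one_mul, zero_mul]
  rw [Finset.sum_comm]
  simp

theorem st_col_dg (h : I × J → Finset P) (j : J) :
    st_dg deg (fun π => st_col (st_tr h π) j) = ∑ i, ∑ π ∈ h (i, j), deg π := by
  simp only [st_dg, st_col_eq, st_tr, Equiv.coe_fn_mk, Finset.mem_filter, Finset.mem_univ, true_and,
    Finset.sum_mul, ite_mul, one_mul, zero_mul]
  rw [Finset.sum_comm]
  simp

theorem st_shift (hdeg : ∀ π, 1 ≤ deg π) (a : I → ℤ) (b : J → ℤ) (H : P → Finset (I × J)) :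
    ((st_N deg T a b).filter (fun x => ∀ π, st_adm (fun i => x.1 i π) (fun j => x.2 j π) (H π))).card
    = (st_N deg T (fun i => a i - (st_dg deg (fun π => st_row (H π) i) : ℕ))
        (fun j => b j - (st_dg deg (fun π => st_col (H π) j) : ℕ))).card := by
  refine Finset.card_nbij'
    (fun x => (fun i π => x.1 i π - st_row (H π) i, fun j π => x.2 j π - st_col (H π) j))
    (fun x => (fun i π => x.1 i π + st_row (H π) i, fun j π => x.2 j π + st_col (H π) j)) ?_ ?_ ?_ ?_
  · rintro ⟨f, g⟩ hx
    rw [Finset.mem_coe, Finset.mem_filter, st_mem_N deg T hdeg] at hx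
    obtain ⟨⟨h1, h2, h3⟩, h4⟩ := hx
    rw [Finset.mem_coe, st_mem_N deg T hdeg]
    dsimp only at *
    refine ⟨?_, ?_, ?_⟩
    · intro i
      have := st_dg_add deg (fun π => f i π - st_row (H π) i) (fun π => st_row (H π) i)
      have e : (fun π => f i π - st_row (H π) i + st_row (H π) i) = f i := by
        funext π; exact Nat.sub_add_cancel ((h4 π).1 i)
      rw [e] at this
      have := h1 i
      omega
    · intro i
      have := st_dg_add deg (fun π => g i π - st_col (H π) i) (fun π => st_col (H π) i)
      have e : (fun π => g i π - st_col (H π) i + st_col (H π) i) = g i := by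
        funext π; exact Nat.sub_add_cancel ((h4 π).2 i)
      rw [e] at this
      have := h2 i
      omega
    · intro π hπ
      have e1 : ∑ i, (f i π - st_row (H π) i) + ∑ i, st_row (H π) i = ∑ i, f i π := by
        rw [← Finset.sum_add_distrib]
        exact Finset.sum_congr rfl (fun i _ => Nat.sub_add_cancel ((h4 π).1 i))
      have e2 : ∑ i, (g i π - st_col (H π) i) + ∑ i, st_col (H π) i = ∑ i, g i π := by
        rw [← Finset.sum_add_distrib]
        exact Finset.sum_congr rfl (fun i _ => Nat.sub_add_cancel ((h4 π).2 i))
      have := h3 π hπ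
      have := st_row_sum (H π)
      omega
  · rintro ⟨f, g⟩ hx
    rw [Finset.mem_coe, st_mem_N deg T hdeg] at hx
    obtain ⟨h1, h2, h3⟩ := hx
    rw [Finset.mem_coe, Finset.mem_filter, st_mem_N deg T hdeg]
    dsimp only at *
    refine ⟨⟨?_, ?_, ?_⟩, ?_⟩
    · intro i
      have := st_dg_add deg (f i) (fun π => st_row (H π) i)
      have := h1 i
      omega
    · intro i
      have := st_dg_add deg (g i) (fun π => st_col (H π) i)
      have := h2 i
      omega
    · intro π hπ
      rw [Finset.sum_add_distrib, Finset.sum_add_distrib, h3 π hπ, st_row_sum]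
    · intro π
      exact ⟨fun i => Nat.le_add_left _ _, fun j => Nat.le_add_left _ _⟩
  · rintro ⟨f, g⟩ hx
    rw [Finset.mem_coe, Finset.mem_filter] at hx
    obtain ⟨_, h4⟩ := hx
    ext i π
    · exact Nat.sub_add_cancel ((h4 π).1 i)
    · exact Nat.sub_add_cancel ((h4 π).2 i)
  · rintro ⟨f, g⟩ hx
    simp

/-- the signed sum -/
def st_B (q : ℕ) (a : I → ℤ) (b : J → ℤ) : ℤ :=
  ∑ Y : Finset (I × J), (-(q : ℤ)) ^ Y.card *
    ((st_N deg T (fun i => a i - (st_row Y i : ℤ)) (fun j => b j - (st_col Y j : ℤ))).card : ℤ)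

theorem st_N_empty (hdeg : ∀ π, 1 ≤ deg π) (a : I → ℤ) (b : J → ℤ) (i : I) (h : a i < 0) :
    st_N deg T a b = ∅ := by
  rw [Finset.eq_empty_iff_forall_notMem]
  intro x hx
  rw [st_mem_N deg T hdeg] at hx
  have := hx.1 i
  omega

theorem st_B_eq (hdeg : ∀ π, 1 ≤ deg π) (q D : ℕ)
    (hc : ∀ n : ℕ, n ≤ D → (st_Pn deg (n : ℤ)).card = q ^ n) (a : I → ℤ) (b : J → ℤ)
    (ha : ∀ i, a i ≤ D) :
    st_B deg T q a b =
      ∑ x ∈ st_N deg T a b, ∏ π, st_loc (fun i => x.1 i π) (fun j => x.2 j π) := by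
  have h1 := st_regroup (X := I × J) deg hdeg q D hc
    (fun n => ((st_N deg T (fun i => a i - ((∑ j, n (i, j) : ℕ) : ℤ))
      (fun j => b j - ((∑ i, n (i, j) : ℕ) : ℤ))).card : ℤ)) (by
      rintro n ⟨i, j⟩ hD
      rw [st_N_empty deg T hdeg _ _ i]
      · simp
      · have : n (i, j) ≤ ∑ j, n (i, j) := Finset.single_le_sum (f := fun j => n (i, j)) (fun _ _ => Nat.zero_le _) (Finset.mem_univ j)
        have := ha i
        omega)
  simp_rw [← st_row_eq, ← st_col_eq, ← st_row_dg, ← st_col_dg] at h1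
  unfold st_B
  rw [← h1]
  simp_rw [← st_shift deg T hdeg]
  have h2 := (Equiv.sum_comp st_tr (fun H : P → Finset (I × J) => (∏ π, (-1 : ℤ) ^ (H π).card) *
    ((((st_N deg T a b).filter (fun x => ∀ π, st_adm (fun i => x.1 i π) (fun j => x.2 j π) (H π))).card : ℕ) : ℤ)))
  refine Eq.trans (Finset.sum_congr rfl (fun h _ => ?_)) (h2.trans ?_)
  · rw [st_tr_sign]
  simp_rw [Finset.card_filter, Nat.cast_sum, Finset.mul_sum]
  rw [Finset.sum_comm]
  apply Finset.sum_congr rfl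
  intro x _
  unfold st_loc
  rw [Finset.prod_univ_sum]
  simp only [Nat.cast_ite, Nat.cast_one, Nat.cast_zero, mul_ite, mul_one, mul_zero]
  rw [← Finset.sum_filter]
  apply Finset.sum_congr
  · ext H; simp [Fintype.mem_piFinset]
  · intros; rfl

open Classical in
/-- the good triples -/
def st_W (a : I → ℤ) (b : J → ℤ) : Finset (((I → P → ℕ) × (J → P → ℕ)) × (P → Finset (I × J))) :=
  (st_N deg T a b ×ˢ Finset.univ).filter (fun z =>
    (∀ π, π ≠ T → st_good (fun i => z.1.1 i π) (fun j => z.1.2 j π)) ∧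
    ∀ π, st_adm (fun i => z.1.1 i π) (fun j => z.1.2 j π) (z.2 π))

theorem st_B_le (hdeg : ∀ π, 1 ≤ deg π) (q D : ℕ)
    (hc : ∀ n : ℕ, n ≤ D → (st_Pn deg (n : ℤ)).card = q ^ n) (a : I → ℤ) (b : J → ℤ)
    (ha : ∀ i, a i ≤ D) :
    |st_B deg T q a b| ≤ ((st_W deg T a b).card : ℤ) := by
  classical
  rw [st_B_eq deg T hdeg q D hc a b ha]
  refine (Finset.abs_sum_le_sum_abs _ _).trans ?_
  unfold st_W
  rw [Finset.card_filter, Finset.sum_product, Nat.cast_sum]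
  apply Finset.sum_le_sum
  intro x hx
  rw [st_mem_N deg T hdeg] at hx
  by_cases h0 : ∏ π, st_loc (fun i => x.1 i π) (fun j => x.2 j π) = 0
  · rw [h0]; simp
  · rw [← ne_eq, Finset.prod_ne_zero_iff] at h0
    have hg : ∀ π, π ≠ T → st_good (fun i => x.1 i π) (fun j => x.2 j π) :=
      fun π hπ => st_good_of_ne _ _ (hx.2.2 π hπ) (h0 π (Finset.mem_univ _))
    simp only [hg, true_and, implies_true]
    unfold st_loc
    rw [Finset.prod_univ_sum]
    refine (Finset.abs_sum_le_sum_abs _ _).trans ?_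
    rw [← Finset.card_filter]
    rw [Finset.card_eq_sum_ones, Nat.cast_sum]
    apply le_of_eq
    apply Finset.sum_congr
    · ext H; simp [Fintype.mem_piFinset]; exact fun _ => hg
    · intro H _
      simp [Finset.abs_prod, abs_pow]
end abs2

section abs3
variable {I J : Type} [Fintype I] [Fintype J] [DecidableEq I] [DecidableEq J]
variable {P : Type} [Fintype P] [DecidableEq P] (deg : P → ℕ) (T : P)

/-- families of elements of bounded total degree -/
def st_R (Θ : Type) [Fintype Θ] [DecidableEq Θ] (m : ℕ) : Finset (Θ → P → ℕ) :=
  ((Fintype.piFinset (fun _ : Θ => Finset.range (m + 1))).filter (fun r => ∑ θ, r θ ≤ m)).biUnion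
    (fun r => Fintype.piFinset (fun θ => st_Pn deg (r θ : ℤ)))

theorem st_mem_R (hdeg : ∀ π, 1 ≤ deg π) (Θ : Type) [Fintype Θ] [DecidableEq Θ] (m : ℕ)
    (R : Θ → P → ℕ) (h : ∑ θ, st_dg deg (R θ) ≤ m) : R ∈ st_R deg Θ m := by
  unfold st_R
  rw [Finset.mem_biUnion]
  refine ⟨fun θ => st_dg deg (R θ), ?_, ?_⟩
  · rw [Finset.mem_filter, Fintype.mem_piFinset]
    refine ⟨fun θ => ?_, h⟩
    have := Finset.single_le_sum (f := fun θ => st_dg deg (R θ)) (fun _ _ => Nat.zero_le _) (Finset.mem_univ θ)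
    rw [Finset.mem_range]
    omega
  · rw [Fintype.mem_piFinset]
    intro θ
    rw [st_mem_Pn deg hdeg]

theorem st_card_R (q D : ℕ) (hq : 1 ≤ q)
    (hc : ∀ n : ℕ, n ≤ D → (st_Pn deg (n : ℤ)).card = q ^ n)
    (Θ : Type) [Fintype Θ] [DecidableEq Θ] (m : ℕ) (hm : m ≤ D) :
    (st_R deg Θ m).card ≤ (m + 1) ^ Fintype.card Θ * q ^ m := by
  unfold st_R
  refine Finset.card_biUnion_le.trans ?_
  refine (Finset.sum_le_card_nsmul _ _ (q ^ m) ?_).trans ?_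
  · intro r hr
    rw [Finset.mem_filter] at hr
    rw [Fintype.card_piFinset]
    have : ∀ θ, (st_Pn deg (r θ : ℤ)).card = q ^ r θ := by
      intro θ
      apply hc
      have := Finset.single_le_sum (f := r) (fun _ _ => Nat.zero_le _) (Finset.mem_univ θ)
      omega
    simp_rw [this]
    rw [Finset.prod_pow_eq_pow_sum]
    exact Nat.pow_le_pow_right hq hr.2
  · rw [smul_eq_mul]
    apply Nat.mul_le_mul_right
    refine (Finset.card_filter_le _ _).trans ?_
    rw [Fintype.card_piFinset]
    simp

/-- the types -/
abbrev st_Th (I J : Type) [Fintype I] [Fintype J] : Type :=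
  (I → Fin (Fintype.card I * Fintype.card J + 1)) ×
  (J → Fin (Fintype.card I * Fintype.card J + 1)) × Finset (I × J)

/-- having type θ at π -/
def st_is (z : ((I → P → ℕ) × (J → P → ℕ)) × (P → Finset (I × J))) (θ : st_Th I J) (π : P) : Prop :=
  π ≠ T ∧ 0 < ∑ i, z.1.1 i π ∧ (∀ i, z.1.1 i π = θ.1 i) ∧ (∀ j, z.1.2 j π = θ.2.1 j) ∧ z.2 π = θ.2.2

open Classical in
/-- the radical parts -/
def st_rad (z : ((I → P → ℕ) × (J → P → ℕ)) × (P → Finset (I × J))) (θ : st_Th I J) (π : P) : ℕ :=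
  if st_is T z θ π then 1 else 0

open Classical in
theorem st_rad_sum (z : ((I → P → ℕ) × (J → P → ℕ)) × (P → Finset (I × J))) (π : P) :
    ∑ θ, st_rad T z θ π ≤ if π ≠ T ∧ 0 < ∑ i, z.1.1 i π then 1 else 0 := by
  unfold st_rad
  rw [Finset.sum_boole, Nat.cast_id]
  split_ifs with h
  · rw [Finset.card_le_one]
    intro θ h1 θ' h2
    simp only [Finset.mem_filter, Finset.mem_univ, true_and] at h1 h2
    refine Prod.ext ?_ (Prod.ext ?_ ?_)
    · funext i; apply Fin.ext; rw [← h1.2.2.1, ← h2.2.2.1]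
    · funext i; apply Fin.ext; rw [← h1.2.2.2.1, ← h2.2.2.2.1]
    · rw [← h1.2.2.2.2, ← h2.2.2.2.2]
  · rw [Nat.le_zero, Finset.card_eq_zero, Finset.filter_eq_empty_iff]
    intro θ _ h1
    exact h ⟨h1.1, h1.2.1⟩

theorem st_sum_dg {K : Type} [Fintype K] (f : K → P → ℕ) :
    ∑ i, st_dg deg (f i) = ∑ π, (∑ i, f i π) * deg π := by
  unfold st_dg
  rw [Finset.sum_comm]
  simp_rw [Finset.sum_mul]

theorem st_mem_W (hdeg : ∀ π, 1 ≤ deg π) (a : I → ℤ) (b : J → ℤ)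
    (z : ((I → P → ℕ) × (J → P → ℕ)) × (P → Finset (I × J))) :
    z ∈ st_W deg T a b ↔ ((∀ i, (st_dg deg (z.1.1 i) : ℤ) = a i) ∧ (∀ j, (st_dg deg (z.1.2 j) : ℤ) = b j)
      ∧ ∀ π, π ≠ T → ∑ i, z.1.1 i π = ∑ j, z.1.2 j π) ∧
      (∀ π, π ≠ T → st_good (fun i => z.1.1 i π) (fun j => z.1.2 j π)) ∧
      ∀ π, st_adm (fun i => z.1.1 i π) (fun j => z.1.2 j π) (z.2 π) := by
  classical
  unfold st_W
  rw [Finset.mem_filter, Finset.mem_product, st_mem_N deg T hdeg]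
  simp only [Finset.mem_univ, and_true]

theorem st_rho (hdeg : ∀ π, 1 ≤ deg π) (a : I → ℤ) (b : J → ℤ)
    (z : ((I → P → ℕ) × (J → P → ℕ)) × (P → Finset (I × J))) (hz : z ∈ st_W deg T a b) :
    2 * ((∑ θ, st_dg deg (st_rad T z θ) : ℕ) : ℤ) ≤ ∑ i, a i ∧
    2 * ((∑ θ, st_dg deg (st_rad T z θ) : ℕ) : ℤ) ≤ ∑ j, b j ∧
    ∀ i j, 2 * ((∑ θ, st_dg deg (st_rad T z θ) : ℕ) : ℤ) + a i + b j ≤ ∑ i, a i + ∑ j, b j := by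
  classical
  rw [st_mem_W deg T hdeg] at hz
  obtain ⟨⟨h1, h2, h3⟩, h4, -⟩ := hz
  have hA : ∑ i, a i = ((∑ π, (∑ i, z.1.1 i π) * deg π : ℕ) : ℤ) := by
    rw [← st_sum_dg, Nat.cast_sum]; exact Finset.sum_congr rfl (fun i _ => (h1 i).symm)
  have hB : ∑ i, b i = ((∑ π, (∑ i, z.1.2 i π) * deg π : ℕ) : ℤ) := by
    rw [← st_sum_dg, Nat.cast_sum]; exact Finset.sum_congr rfl (fun i _ => (h2 i).symm)
  have hR := st_sum_dg deg (st_rad T z)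
  set r : P → ℕ := fun π => ∑ θ, st_rad T z θ π with hr
  have hr1 : ∀ π, r π = 0 ∨ (r π ≤ 1 ∧ π ≠ T ∧ 0 < ∑ i, z.1.1 i π) := by
    intro π
    have := st_rad_sum T z π
    split_ifs at this with hh
    · exact Or.inr ⟨this, hh⟩
    · exact Or.inl (Nat.le_zero.1 this)
  have p1 : ∀ π, 2 * r π ≤ ∑ i, z.1.1 i π := by
    intro π
    rcases hr1 π with h | ⟨h, hT, h0⟩
    · rw [h]; simp
    · obtain ⟨i, _, hi⟩ := Finset.exists_ne_zero_of_sum_ne_zero (ne_of_gt h0)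
      have := ((h4 π hT).2 h0).1 i
      dsimp only at this
      omega
  have p2 : ∀ π, 2 * r π ≤ ∑ i, z.1.2 i π := by
    intro π
    rcases hr1 π with h | ⟨h, hT, h0⟩
    · rw [h]; simp
    · rw [← h3 π hT]; exact p1 π
  have p3 : ∀ i j π, 2 * r π + z.1.1 i π + z.1.2 j π ≤ ∑ i, z.1.1 i π + ∑ i, z.1.2 i π := by
    intro i j π
    have q1 := Finset.single_le_sum (f := fun i => z.1.1 i π) (fun _ _ => Nat.zero_le _) (Finset.mem_univ i)
    have q2 := Finset.single_le_sum (f := fun i => z.1.2 i π) (fun _ _ => Nat.zero_le _) (Finset.mem_univ j)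
    rcases hr1 π with h | ⟨h, hT, h0⟩
    · rw [h]; omega
    · have := ((h4 π hT).2 h0).1 i
      have := ((h4 π hT).2 h0).2 j
      have := h3 π hT
      dsimp only at *
      omega
  have e : ∑ θ, st_dg deg (st_rad T z θ) = ∑ π, r π * deg π := hR
  rw [e, hA, hB]
  refine ⟨?_, ?_, ?_⟩
  · have : 2 * ∑ π, r π * deg π ≤ ∑ π, (∑ i, z.1.1 i π) * deg π := by
      rw [Finset.mul_sum]
      apply Finset.sum_le_sum
      intro π _
      rw [← mul_assoc]; exact Nat.mul_le_mul_right _ (p1 π)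
    exact_mod_cast this
  · have : 2 * ∑ π, r π * deg π ≤ ∑ π, (∑ i, z.1.2 i π) * deg π := by
      rw [Finset.mul_sum]
      apply Finset.sum_le_sum
      intro π _
      rw [← mul_assoc]; exact Nat.mul_le_mul_right _ (p2 π)
    exact_mod_cast this
  · intro i j
    rw [← h1 i, ← h2 j]
    have : 2 * ∑ π, r π * deg π + st_dg deg (z.1.1 i) + st_dg deg (z.1.2 j)
        ≤ ∑ π, (∑ i, z.1.1 i π) * deg π + ∑ π, (∑ i, z.1.2 i π) * deg π := by
      unfold st_dg
      rw [Finset.mul_sum, ← Finset.sum_add_distrib, ← Finset.sum_add_distrib, ← Finset.sum_add_distrib]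
      apply Finset.sum_le_sum
      intro π _
      rw [← mul_assoc, ← add_mul, ← add_mul, ← add_mul]; exact Nat.mul_le_mul_right _ (p3 i j π)
    exact_mod_cast this

theorem st_rad_agree (hdeg : ∀ π, 1 ≤ deg π) (a : I → ℤ) (b : J → ℤ)
    (z w : ((I → P → ℕ) × (J → P → ℕ)) × (P → Finset (I × J))) (hz : z ∈ st_W deg T a b)
    (h : st_rad T z = st_rad T w) (π : P) (hT : π ≠ T) (h0 : 0 < ∑ i, z.1.1 i π) :
    (∀ i, z.1.1 i π = w.1.1 i π) ∧ (∀ j, z.1.2 j π = w.1.2 j π) ∧ z.2 π = w.2 π := by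
  rw [st_mem_W deg T hdeg] at hz
  obtain ⟨⟨h1, h2, h3⟩, h4, -⟩ := hz
  have hg := h4 π hT
  have b1 : ∀ i, z.1.1 i π < Fintype.card I * Fintype.card J + 1 := by
    intro i
    have := (hg.2 h0).1 i
    have := hg.1
    dsimp only at *; omega
  have b2 : ∀ j, z.1.2 j π < Fintype.card I * Fintype.card J + 1 := by
    intro j
    have := (hg.2 h0).2 j
    have := hg.1
    dsimp only at *; omega
  let θ : st_Th I J := (fun i => ⟨_, b1 i⟩, fun j => ⟨_, b2 j⟩, z.2 π)
  have t1 : st_is T z θ π := ⟨hT, h0, fun i => rfl, fun j => rfl, rfl⟩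
  have e := congrFun (congrFun h θ) π
  unfold st_rad at e
  rw [if_pos t1] at e
  have t2 : st_is T w θ π := by
    by_contra hh; rw [if_neg hh] at e; simp at e
  exact ⟨fun i => (t2.2.2.1 i).symm, fun j => (t2.2.2.2.1 j).symm, t2.2.2.2.2.symm⟩

theorem st_W_card (hdeg : ∀ π, 1 ≤ deg π) (q D : ℕ) (hq : 1 ≤ q)
    (hc : ∀ n : ℕ, n ≤ D → (st_Pn deg (n : ℤ)).card = q ^ n) (a : I → ℤ) (b : J → ℤ)
    (ha : ∀ i, a i ≤ D) (hb : ∀ j, b j ≤ D) (m : ℕ) (hm : m ≤ D)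
    (hρ : ∀ ρ : ℕ, 2 * (ρ : ℤ) ≤ ∑ i, a i → 2 * (ρ : ℤ) ≤ ∑ j, b j →
      (∀ i j, 2 * (ρ : ℤ) + a i + b j ≤ ∑ i, a i + ∑ j, b j) → ρ ≤ m) :
    (st_W deg T a b).card ≤ (D + 1) ^ Fintype.card I * ((D + 1) ^ Fintype.card J *
      (2 ^ (Fintype.card I * Fintype.card J) * ((m + 1) ^ Fintype.card (st_Th I J) * q ^ m))) := by
  refine le_trans ?_ (Nat.mul_le_mul_left _ (Nat.mul_le_mul_left _ (Nat.mul_le_mul_left _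
    (st_card_R deg q D hq hc (st_Th I J) m hm))))
  have e : (D + 1) ^ Fintype.card I * ((D + 1) ^ Fintype.card J *
      (2 ^ (Fintype.card I * Fintype.card J) * (st_R deg (st_Th I J) m).card))
      = ((Fintype.piFinset (fun _ : I => Finset.range (D + 1))) ×ˢ
        ((Fintype.piFinset (fun _ : J => Finset.range (D + 1))) ×ˢ
          ((Finset.univ : Finset (Finset (I × J))) ×ˢ (st_R deg (st_Th I J) m)))).card := by
    simp [Finset.card_product, Fintype.card_piFinset]
  rw [e]
  refine Finset.card_le_card_of_injOn
    (fun z => (fun i => z.1.1 i T, fun j => z.1.2 j T, z.2 T, st_rad T z)) ?_ ?_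
  · intro z hz
    rw [Finset.mem_coe] at hz
    obtain ⟨r1, r2, r3⟩ := st_rho deg T hdeg a b z hz
    have hmm := hρ _ r1 r2 r3
    rw [st_mem_W deg T hdeg] at hz
    obtain ⟨⟨h1, h2, h3⟩, h4, -⟩ := hz
    simp only [Finset.coe_product, Set.mem_prod, Finset.mem_coe, Fintype.mem_piFinset, Finset.mem_range,
      Finset.mem_univ, true_and]
    refine ⟨fun i => ?_, fun j => ?_, st_mem_R deg hdeg _ _ _ hmm⟩
    · have := st_le_dg deg hdeg (z.1.1 i) T
      have := h1 i
      have := ha i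
      omega
    · have := st_le_dg deg hdeg (z.1.2 j) T
      have := h2 j
      have := hb j
      omega
  · intro z hz w hw h
    rw [Finset.mem_coe] at hz hw
    simp only [Prod.mk.injEq] at h
    obtain ⟨k1, k2, k3, k4⟩ := h
    have key : ∀ π, (∀ i, z.1.1 i π = w.1.1 i π) ∧ (∀ j, z.1.2 j π = w.1.2 j π) ∧ z.2 π = w.2 π := by
      intro π
      by_cases hT : π = T
      · subst hT
        exact ⟨fun i => congrFun k1 i, fun j => congrFun k2 j, k3⟩
      by_cases hz0 : 0 < ∑ i, z.1.1 i π
      · exact st_rad_agree deg T hdeg a b z w hz k4 π hT hz0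
      by_cases hw0 : 0 < ∑ i, w.1.1 i π
      · obtain ⟨x1, x2, x3⟩ := st_rad_agree deg T hdeg a b w z hw k4.symm π hT hw0
        exact ⟨fun i => (x1 i).symm, fun i => (x2 i).symm, x3.symm⟩
      have zero : ∀ v ∈ st_W deg T a b, ¬ 0 < ∑ i, v.1.1 i π →
          (∀ i, v.1.1 i π = 0) ∧ (∀ j, v.1.2 j π = 0) ∧ v.2 π = ∅ := by
        intro v hv hv0
        rw [st_mem_W deg T hdeg] at hv
        obtain ⟨⟨h1, h2, h3⟩, h4, h5⟩ := hv
        have y1 : ∑ i, v.1.1 i π = 0 := by omega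
        have y2 : ∑ j, v.1.2 j π = 0 := by rw [← h3 π hT]; exact y1
        rw [Finset.sum_eq_zero_iff] at y1 y2
        refine ⟨fun i => y1 i (Finset.mem_univ _), fun i => y2 i (Finset.mem_univ _), ?_⟩
        rw [Finset.eq_empty_iff_forall_notMem]
        intro x hx
        have : _ ≤ v.1.1 x.1 π := (h5 π).1 x.1
        rw [y1 x.1 (Finset.mem_univ _)] at this
        have : 0 < st_row (v.2 π) x.1 := Finset.card_pos.2 ⟨x, by simp [hx]⟩
        omega
      obtain ⟨u1, u2, u3⟩ := zero z hz hz0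
      obtain ⟨v1, v2, v3⟩ := zero w hw hw0
      exact ⟨fun i => (u1 i).trans (v1 i).symm, fun i => (u2 i).trans (v2 i).symm, u3.trans v3.symm⟩
    refine Prod.ext (Prod.ext ?_ ?_) ?_
    · funext i π; exact (key π).1 i
    · funext i π; exact (key π).2.1 i
    · funext π; exact (key π).2.2
end abs3

section poly
variable (F : Type) [Field F] [Fintype F] (D : ℕ)

/-- monic irreducible polynomials of degree at most D -/
def st_P : Type := {p : F[X] // p.Monic ∧ Irreducible p ∧ p.natDegree ≤ D}

theorem st_P_finite : Finite (st_P F D) := by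
  refine Finite.of_injective (fun p : st_P F D => fun i : Fin (D + 1) => p.1.coeff i) ?_
  intro p r h
  apply Subtype.ext
  ext n
  by_cases hn : n < D + 1
  · exact congrFun h ⟨n, hn⟩
  · rw [Polynomial.coeff_eq_zero_of_natDegree_lt, Polynomial.coeff_eq_zero_of_natDegree_lt]
    · have := r.2.2.2; omega
    · have := p.2.2.2; omega

instance st_P_fintype : Fintype (st_P F D) := @Fintype.ofFinite _ (st_P_finite F D)
instance st_P_dec : DecidableEq (st_P F D) := Classical.decEq _

/-- the degree -/
def st_deg (π : st_P F D) : ℕ := π.1.natDegree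

theorem st_deg_pos (π : st_P F D) : 1 ≤ st_deg F D π := π.2.2.1.natDegree_pos

variable {F D}

/-- the polynomial with given factorisation -/
def st_phi (u : st_P F D → ℕ) : F[X] := ∏ π, π.1 ^ u π

theorem st_phi_monic (u : st_P F D → ℕ) : (st_phi u).Monic :=
  Polynomial.monic_prod_of_monic _ _ (fun π _ => π.2.1.pow _)

theorem st_phi_deg (u : st_P F D → ℕ) : (st_phi u).natDegree = st_dg (st_deg F D) u := by
  unfold st_phi st_dg
  rw [Polynomial.natDegree_prod_of_monic _ _ (fun π _ => π.2.1.pow _)]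
  apply Finset.sum_congr rfl
  intro π _
  rw [Polynomial.natDegree_pow]; rfl

theorem st_phi_add (u v : st_P F D → ℕ) : st_phi (fun π => u π + v π) = st_phi u * st_phi v := by
  simp [st_phi, pow_add, Finset.prod_mul_distrib]

theorem st_phi_sum {K : Type} [Fintype K] (u : K → st_P F D → ℕ) :
    st_phi (fun π => ∑ i, u i π) = ∏ i, st_phi (u i) := by
  unfold st_phi
  rw [Finset.prod_comm]
  simp [Finset.prod_pow_eq_pow_sum]

open Classical in
theorem st_phi_count (u : st_P F D → ℕ) (π : st_P F D) :
    (UniqueFactorizationMonoid.normalizedFactors (st_phi u)).count π.1 = u π := by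
  have h1 : st_phi u = (∑ π : st_P F D, u π • ({π.1} : Multiset F[X])).prod := by
    unfold st_phi
    rw [Multiset.prod_sum]
    simp [Multiset.prod_nsmul]
  have hm : ∀ a ∈ (∑ π : st_P F D, u π • ({π.1} : Multiset F[X])), ∃ π : st_P F D, a = π.1 := by
    intro a ha
    rw [Multiset.mem_sum] at ha
    obtain ⟨π, _, hπ⟩ := ha
    exact ⟨π, by simpa using Multiset.mem_of_mem_nsmul hπ⟩
  rw [h1, UniqueFactorizationMonoid.normalizedFactors_prod_eq]
  · have h2 : (∑ π : st_P F D, u π • ({π.1} : Multiset F[X])).map normalize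
      = (∑ π : st_P F D, u π • ({π.1} : Multiset F[X])).map id := by
      apply Multiset.map_congr rfl
      intro a ha
      obtain ⟨π, rfl⟩ := hm a ha
      exact π.2.1.normalize_eq_self
    rw [h2, Multiset.map_id, Multiset.count_sum']
    rw [Finset.sum_eq_single π]
    · simp
    · intro ρ _ hne
      rw [Multiset.count_nsmul, Multiset.count_singleton, if_neg, mul_zero]
      exact fun h => hne (Subtype.ext h.symm)
    · simp
  · intro a ha
    obtain ⟨π, rfl⟩ := hm a ha
    exact π.2.2.1

theorem st_phi_inj : Function.Injective (st_phi : (st_P F D → ℕ) → F[X]) := by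
  classical
  intro u v h
  funext π
  rw [← st_phi_count u π, ← st_phi_count v π, h]

theorem st_phi_surj (p : F[X]) (hp : p.Monic) (hd : p.natDegree ≤ D) :
    ∃ u : st_P F D → ℕ, st_phi u = p := by
  classical
  set s := UniqueFactorizationMonoid.normalizedFactors p with hs
  have hprod : s.prod = p := by
    rw [hs, UniqueFactorizationMonoid.prod_normalizedFactors_eq hp.ne_zero, hp.normalize_eq_self]
  have hmem : ∀ a ∈ s, a.Monic ∧ Irreducible a ∧ a.natDegree ≤ D := by
    intro a ha
    have hi := UniqueFactorizationMonoid.irreducible_of_normalized_factor a ha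
    refine ⟨?_, hi, ?_⟩
    · rw [← UniqueFactorizationMonoid.normalize_normalized_factor a ha]
      exact Polynomial.monic_normalize hi.ne_zero
    · exact (Polynomial.natDegree_le_of_dvd
        (UniqueFactorizationMonoid.dvd_of_mem_normalizedFactors ha) hp.ne_zero).trans hd
  refine ⟨fun π => s.count π.1, ?_⟩
  conv_rhs => rw [← hprod, Finset.prod_multiset_count]
  unfold st_phi
  symm
  refine Finset.prod_bij_ne_one (fun a ha _ => (⟨a, hmem a (Multiset.mem_toFinset.1 ha)⟩ : st_P F D)) ?_ ?_ ?_ ?_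
  · intros; exact Finset.mem_univ _
  · intro a _ _ b _ _ h
    exact congrArg Subtype.val h
  · intro π _ hne
    refine ⟨π.1, ?_, hne, rfl⟩
    rw [Multiset.mem_toFinset]
    by_contra hh
    apply hne
    have h0 := Multiset.count_eq_zero_of_notMem hh
    simp only [h0, pow_zero]
  · intros; rfl

theorem st_monic_count (n : ℕ) :
    {p : F[X] | p.Monic ∧ p.natDegree = n}.ncard = Fintype.card F ^ n := by
  have h1 : {p : F[X] | p.Monic ∧ p.natDegree = n}
      = (fun p : F[X] => X ^ n + p) '' (Polynomial.degreeLT F n : Set F[X]) := by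
    ext p
    constructor
    · rintro ⟨h, rfl⟩
      refine ⟨p - X ^ p.natDegree, ?_, by simp⟩
      rw [SetLike.mem_coe, Polynomial.mem_degreeLT]
      have hd : p.degree = (X ^ p.natDegree : F[X]).degree := by
        rw [Polynomial.degree_X_pow, Polynomial.degree_eq_natDegree h.ne_zero]
      have := Polynomial.degree_sub_lt_left hd h.ne_zero (by simp [h.leadingCoeff])
      rwa [Polynomial.degree_eq_natDegree h.ne_zero] at this
    · rintro ⟨r, hr, rfl⟩
      rw [SetLike.mem_coe, Polynomial.mem_degreeLT] at hr
      refine ⟨Polynomial.monic_X_pow_add hr, ?_⟩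
      dsimp only
      rw [add_comm]
      apply Polynomial.natDegree_eq_of_degree_eq_some
      rw [Polynomial.degree_add_eq_right_of_degree_lt (by simpa using hr), Polynomial.degree_X_pow]
  rw [h1, Set.ncard_image_of_injective _ (add_right_injective _), ← Nat.card_coe_set_eq]
  exact (Nat.card_congr (Polynomial.degreeLTEquiv F n).toEquiv).trans (by simp)

theorem st_count (n : ℕ) (hn : n ≤ D) :
    (st_Pn (st_deg F D) (n : ℤ)).card = Fintype.card F ^ n := by
  rw [← st_monic_count, ← Set.ncard_coe_finset, ← Set.ncard_image_of_injective _ st_phi_inj]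
  congr 1
  ext p
  constructor
  · rintro ⟨u, hu, rfl⟩
    rw [Finset.mem_coe, st_mem_Pn _ (st_deg_pos F D)] at hu
    refine ⟨st_phi_monic u, ?_⟩
    rw [st_phi_deg]; exact_mod_cast hu
  · rintro ⟨h, h2⟩
    obtain ⟨u, rfl⟩ := st_phi_surj (D := D) p h (by omega)
    refine ⟨u, ?_, rfl⟩
    rw [Finset.mem_coe, st_mem_Pn _ (st_deg_pos F D), ← st_phi_deg, h2]

/-- the prime T -/
def st_X (hD : 1 ≤ D) : st_P F D :=
  ⟨X, Polynomial.monic_X, Polynomial.irreducible_X, by simpa using hD⟩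

theorem st_phi_X (hD : 1 ≤ D) (a : ℕ) (u : st_P F D → ℕ) :
    X ^ a * st_phi u = st_phi (fun π => u π + if π = st_X hD then a else 0) := by
  rw [st_phi_add, mul_comm]
  congr 1
  unfold st_phi
  rw [Finset.prod_eq_single (st_X hD)]
  · beta_reduce; rw [if_pos rfl]; rfl
  · intro π _ h; beta_reduce; rw [if_neg h, pow_zero]
  · intro h; exact absurd (Finset.mem_univ _) h

theorem st_bal (hD : 1 ≤ D) (u v : st_P F D → ℕ) :
    (∃ a b : ℕ, X ^ a * st_phi u = X ^ b * st_phi v) ↔ ∀ π, π ≠ st_X hD → u π = v π := by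
  constructor
  · rintro ⟨a, b, h⟩ π hπ
    rw [st_phi_X hD, st_phi_X hD] at h
    have := congrFun (st_phi_inj h) π
    simpa [hπ] using this
  · intro h
    refine ⟨v (st_X hD), u (st_X hD), ?_⟩
    rw [st_phi_X hD, st_phi_X hD]
    congr 1
    funext π
    by_cases hπ : π = st_X hD
    · subst hπ; simp [add_comm]
    · simp [hπ, h π hπ]

theorem st_NS {k : ℕ} (S : Finset (Fin k)) (d : Fin k → ℤ) (hD : 1 ≤ D)
    (hA : ∑ i ∈ S, d i ≤ D) (hB : -∑ i ∈ Sᶜ, d i ≤ D) :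
    NS F S d = (st_N (st_deg F D) (st_X hD) (fun i : S => d i) (fun j : (Sᶜ : Finset (Fin k)) => - d j)).card := by
  unfold NS
  let Ψ : ((S → st_P F D → ℕ) × ((Sᶜ : Finset (Fin k)) → st_P F D → ℕ)) → Fin k → F[X] :=
    fun x i => if h : i ∈ S then st_phi (x.1 ⟨i, h⟩) else st_phi (x.2 ⟨i, Finset.mem_compl.2 h⟩)
  have hΨ1 : ∀ x (i : S), Ψ x i = st_phi (x.1 i) := by intro x i; simp [Ψ]
  have hΨ2 : ∀ x (i : (Sᶜ : Finset (Fin k))), Ψ x i = st_phi (x.2 i) := by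
    intro x i; have := Finset.mem_compl.1 i.2; simp [Ψ, this]
  have hinj : Function.Injective Ψ := by
    intro x y h
    refine Prod.ext ?_ ?_
    · funext i
      apply st_phi_inj
      rw [← hΨ1, ← hΨ1, h]
    · funext i
      apply st_phi_inj
      rw [← hΨ2, ← hΨ2, h]
  rw [← Set.ncard_coe_finset, ← Set.ncard_image_of_injective _ hinj]
  congr 1
  have hbal : ∀ x, (∃ a b : ℕ, X ^ a * ∏ i ∈ S, Ψ x i = X ^ b * ∏ i ∈ Sᶜ, Ψ x i) ↔
      ∀ π, π ≠ st_X hD → ∑ i, x.1 i π = ∑ j, x.2 j π := by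
    intro x
    have e1 : ∏ i ∈ S, Ψ x i = st_phi (fun π => ∑ i, x.1 i π) := by
      rw [st_phi_sum, ← Finset.prod_coe_sort]
      exact Finset.prod_congr rfl (fun i _ => hΨ1 x i)
    have e2 : ∏ i ∈ Sᶜ, Ψ x i = st_phi (fun π => ∑ i, x.2 i π) := by
      rw [st_phi_sum, ← Finset.prod_coe_sort]
      exact Finset.prod_congr rfl (fun i _ => hΨ2 x i)
    rw [e1, e2]
    exact st_bal hD _ _
  ext f
  constructor
  · rintro ⟨h1, h2, h3, h4⟩
    have l1 : ∀ i : S, ∃ u : st_P F D → ℕ, st_phi u = f i := by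
      intro i
      apply st_phi_surj _ (h1 i)
      have := Finset.single_le_sum (f := d) (fun i hi => by rw [← h2 i hi]; positivity) i.2
      have := h2 i i.2
      omega
    have l2 : ∀ i : (Sᶜ : Finset (Fin k)), ∃ u : st_P F D → ℕ, st_phi u = f i := by
      intro i
      apply st_phi_surj _ (h1 i)
      have := Finset.single_le_sum (f := fun i => - d i)
        (fun i hi => by rw [← h3 i (Finset.mem_compl.1 hi)]; positivity) i.2
      have := h3 i (Finset.mem_compl.1 i.2)
      rw [Finset.sum_neg_distrib] at *
      omega
    choose u hu using l1
    choose v hv using l2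
    have hf : Ψ (u, v) = f := by
      funext i
      by_cases hi : i ∈ S
      · rw [← hu ⟨i, hi⟩]; exact hΨ1 (u, v) ⟨i, hi⟩
      · rw [← hv ⟨i, Finset.mem_compl.2 hi⟩]; exact hΨ2 (u, v) ⟨i, Finset.mem_compl.2 hi⟩
    refine ⟨(u, v), ?_, hf⟩
    rw [Finset.mem_coe, st_mem_N _ _ (st_deg_pos F D)]
    refine ⟨fun i => ?_, fun i => ?_, ?_⟩
    · rw [← st_phi_deg, hu]; exact h2 i i.2
    · rw [← st_phi_deg, hv]; exact h3 i (Finset.mem_compl.1 i.2)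
    · rw [← hbal, hf]; exact h4
  · rintro ⟨x, hx, rfl⟩
    rw [Finset.mem_coe, st_mem_N _ _ (st_deg_pos F D)] at hx
    obtain ⟨h1, h2, h3⟩ := hx
    refine ⟨?_, ?_, ?_, ?_⟩
    · intro i
      by_cases hi : i ∈ S
      · rw [hΨ1 x ⟨i, hi⟩]; exact st_phi_monic _
      · rw [hΨ2 x ⟨i, Finset.mem_compl.2 hi⟩]; exact st_phi_monic _
    · intro i hi
      rw [hΨ1 x ⟨i, hi⟩, st_phi_deg]; exact h1 ⟨i, hi⟩
    · intro i hi
      rw [hΨ2 x ⟨i, Finset.mem_compl.2 hi⟩, st_phi_deg]; exact h2 ⟨i, Finset.mem_compl.2 hi⟩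
    · rw [hbal]; exact h3
end poly

section fin1
variable {k : ℕ} (S : Finset (Fin k))

/-- the shift of a set of mixed pairs -/
def st_v (Y : Finset (S × (Sᶜ : Finset (Fin k)))) : Fin k → ℤ :=
  ∑ x ∈ Y, (Pi.single (x.1 : Fin k) (1 : ℤ) - Pi.single (x.2 : Fin k) (1 : ℤ))

theorem st_v_row (Y : Finset (S × (Sᶜ : Finset (Fin k)))) (i : S) : st_v S Y i = (st_row Y i : ℤ) := by
  unfold st_v st_row
  rw [Finset.sum_apply, Finset.card_filter, Nat.cast_sum]
  apply Finset.sum_congr rfl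
  intro x _
  have h2 : (i : Fin k) ≠ x.2 := by
    intro h; exact Finset.mem_compl.1 x.2.2 (h ▸ i.2)
  by_cases h : x.1 = i
  · subst h; simp [Pi.single_apply, h2]
  · have h3 : (i : Fin k) ≠ x.1 := fun h' => h (Subtype.ext h'.symm)
    simp [Pi.single_apply, h2, h, h3]

theorem st_v_col (Y : Finset (S × (Sᶜ : Finset (Fin k)))) (j : (Sᶜ : Finset (Fin k))) :
    st_v S Y j = -(st_col Y j : ℤ) := by
  unfold st_v st_col
  rw [Finset.sum_apply, Finset.card_filter, Nat.cast_sum, ← Finset.sum_neg_distrib]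
  apply Finset.sum_congr rfl
  intro x _
  have h2 : (j : Fin k) ≠ x.1 := by
    intro h; exact Finset.mem_compl.1 j.2 (h ▸ x.1.2)
  by_cases h : x.2 = j
  · subst h; simp [Pi.single_apply, h2]
  · have h3 : (j : Fin k) ≠ x.2 := fun h' => h (Subtype.ext h'.symm)
    simp [Pi.single_apply, h2, h, h3]

theorem st_row_card {I J : Type} [Fintype I] [Fintype J] [DecidableEq I] [DecidableEq J]
    (Y : Finset (I × J)) : ∑ i, st_row Y i = Y.card := by
  unfold st_row
  exact (Finset.card_eq_sum_card_fiberwise (fun _ _ => Finset.mem_coe.2 (Finset.mem_univ _))).symm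

variable (F : Type) [Field F] [Fintype F]

/-- alternating sum -/
def st_b (e : Fin k → ℤ) : ℝ :=
  ∑ Y : Finset (S × (Sᶜ : Finset (Fin k))), (-1 : ℝ) ^ Y.card * wS F S (fun i => e i - st_v S Y i)

theorem st_b_eq (e : Fin k → ℤ) (D : ℕ) (hD : 1 ≤ D)
    (hA : ∑ i ∈ S, e i ≤ D) (hB : -∑ i ∈ Sᶜ, e i ≤ D) :
    st_b S F e = (Fintype.card F : ℝ) ^ ((-((((∑ i ∈ S, e i) - ∑ i ∈ Sᶜ, e i : ℤ)) : ℝ)) / 2) *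
      (st_B (st_deg F D) (st_X hD) (Fintype.card F) (fun i : S => e i)
        (fun j : (Sᶜ : Finset (Fin k)) => - e j) : ℤ) := by
  unfold st_b st_B
  rw [Int.cast_sum, Finset.mul_sum]
  apply Finset.sum_congr rfl
  intro Y _
  have h1 : ∑ i ∈ S, (e i - st_v S Y i) = ∑ i ∈ S, e i - Y.card := by
    rw [Finset.sum_sub_distrib, ← st_row_card Y, ← Finset.sum_coe_sort S (fun i => st_v S Y i)]
    simp only [st_v_row]; push_cast; rfl
  have h2 : ∑ i ∈ Sᶜ, (e i - st_v S Y i) = ∑ i ∈ Sᶜ, e i + Y.card := by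
    rw [Finset.sum_sub_distrib, ← st_row_card Y, st_row_sum, ← Finset.sum_coe_sort Sᶜ (fun i => st_v S Y i)]
    simp only [st_v_col, Finset.sum_neg_distrib]; push_cast; ring
  have h3 := st_NS (F := F) S (fun i => e i - st_v S Y i) hD (by rw [h1]; omega) (by rw [h2]; omega)
  have h4 : (fun i : S => e i - st_v S Y i) = fun i : S => e i - (st_row Y i : ℤ) := by
    funext i; rw [st_v_row]
  have h5 : (fun j : (Sᶜ : Finset (Fin k)) => -(e j - st_v S Y j)) = fun j : (Sᶜ : Finset (Fin k)) => -e j - (st_col Y j : ℤ) := by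
    funext j; rw [st_v_col]; ring
  rw [h4, h5] at h3
  unfold wS
  rw [h1, h2, h3]
  have hq : (0 : ℝ) < Fintype.card F := by exact_mod_cast Fintype.card_pos
  have h6 : (-(((∑ i ∈ S, e i - Y.card - (∑ i ∈ Sᶜ, e i + Y.card) : ℤ)) : ℝ)) / 2
      = (-(((∑ i ∈ S, e i - ∑ i ∈ Sᶜ, e i : ℤ)) : ℝ)) / 2 + (Y.card : ℕ) := by
    push_cast; ring
  rw [h6, Real.rpow_add hq, Real.rpow_natCast]
  push_cast
  rw [neg_pow (Fintype.card F : ℝ)]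
  ring

theorem st_N_empty2 {I J : Type} [Fintype I] [Fintype J] [DecidableEq I] [DecidableEq J]
    {P : Type} [Fintype P] [DecidableEq P] (deg : P → ℕ) (T : P)
    (hdeg : ∀ π, 1 ≤ deg π) (a : I → ℤ) (b : J → ℤ) (j : J) (h : b j < 0) :
    st_N deg T a b = ∅ := by
  rw [Finset.eq_empty_iff_forall_notMem]
  intro x hx
  rw [st_mem_N deg T hdeg] at hx
  have := hx.2.1 j
  omega

theorem st_NS_zero (e : Fin k → ℤ) (h : (∃ i ∈ S, e i < 0) ∨ (∃ j ∉ S, 0 < e j)) : NS F S e = 0 := by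
  unfold NS
  refine (congrArg Set.ncard ?_).trans (Set.ncard_empty (Fin k → F[X]))
  rw [Set.eq_empty_iff_forall_notMem]
  rintro f ⟨-, h1, h2, -⟩
  rcases h with ⟨i, hi, h⟩ | ⟨j, hj, h⟩
  · have := h1 i hi; omega
  · have := h2 j hj; omega

theorem st_b_zero (e : Fin k → ℤ) (h : (∃ i ∈ S, e i < 0) ∨ (∃ j ∉ S, 0 < e j)) : st_b S F e = 0 := by
  unfold st_b
  apply Finset.sum_eq_zero
  intro Y _
  unfold wS
  rw [st_NS_zero, Nat.cast_zero, mul_zero, mul_zero]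
  rcases h with ⟨i, hi, h⟩ | ⟨j, hj, h⟩
  · left
    refine ⟨i, hi, ?_⟩
    have := st_v_row S Y ⟨i, hi⟩
    simp only at this
    omega
  · right
    refine ⟨j, hj, ?_⟩
    have := st_v_col S Y ⟨j, Finset.mem_compl.2 hj⟩
    simp only at this
    omega

theorem st_Th_card {I J : Type} [Fintype I] [Fintype J] [DecidableEq I] [DecidableEq J]
    (h : Fintype.card I + Fintype.card J = k) :
    Fintype.card (st_Th I J) ≤ (k * k + 1) ^ k * 2 ^ (k * k) := by
  have hc : Fintype.card I * Fintype.card J ≤ k * k := Nat.mul_le_mul (by omega) (by omega)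
  have : Fintype.card (st_Th I J) = (Fintype.card I * Fintype.card J + 1) ^ k *
      2 ^ (Fintype.card I * Fintype.card J) := by
    rw [← h, pow_add]
    simp only [st_Th, Fintype.card_prod, Fintype.card_fun, Fintype.card_fin, Fintype.card_finset]
    ring
  rw [this]
  exact Nat.mul_le_mul (Nat.pow_le_pow_left (by omega) _) (Nat.pow_le_pow_right (by omega) hc)

theorem st_b_le (e : Fin k → ℤ) (A B M : ℤ) (hA : A = ∑ i ∈ S, e i) (hB : B = -∑ i ∈ Sᶜ, e i)
    (hM : M = A ∨ M = B ∨ ∃ i ∈ S, ∃ j ∉ S, M = e i - e j) (R : ℝ) (hR : ((A + B + 2 : ℤ) : ℝ) ≤ R)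
    (hR1 : 1 ≤ R) :
    |st_b S F e| ≤ 2 ^ (k * k) * R ^ (k + (k * k + 1) ^ k * 2 ^ (k * k)) *
      (Fintype.card F : ℝ) ^ (-(M : ℝ) / 2) := by
  have hq : (1 : ℝ) ≤ Fintype.card F := by exact_mod_cast Fintype.card_pos
  have hq0 : (0 : ℝ) < Fintype.card F := by linarith
  by_cases hz : (∃ i ∈ S, e i < 0) ∨ (∃ j ∉ S, 0 < e j)
  · rw [st_b_zero S F e hz, abs_zero]; positivity
  push Not at hz
  obtain ⟨ha, hb⟩ := hz
  have hA0 : 0 ≤ A := by rw [hA]; exact Finset.sum_nonneg ha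
  have hsing1 : ∀ i ∈ S, e i ≤ A := by
    intro i hi; rw [hA]; exact Finset.single_le_sum ha hi
  have hb' : ∀ j ∈ Sᶜ, 0 ≤ -e j := by
    intro j hj; have := hb j (Finset.mem_compl.1 hj); omega
  have hB' : B = ∑ j ∈ Sᶜ, -e j := by rw [hB, Finset.sum_neg_distrib]
  have hB0 : 0 ≤ B := by rw [hB']; exact Finset.sum_nonneg hb'
  have hsing2 : ∀ j ∈ Sᶜ, -e j ≤ B := by
    intro i hi; rw [hB']; exact Finset.single_le_sum (f := fun j => -e j) hb' hi
  have hMAB : M ≤ A + B := by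
    rcases hM with h | h | ⟨i, hi, j, hj, h⟩
    · omega
    · omega
    · have := hsing1 i hi; have := hsing2 j (Finset.mem_compl.2 hj); omega
  have hM0 : 0 ≤ M := by
    rcases hM with h | h | ⟨i, hi, j, hj, h⟩
    · omega
    · omega
    · have := ha i hi; have := hb j hj; omega
  obtain ⟨D, hDe⟩ : ∃ D : ℕ, (D : ℤ) = A + B + 1 := ⟨(A + B + 1).toNat, by omega⟩
  obtain ⟨m, hm⟩ : ∃ m : ℕ, (m : ℤ) = (A + B - M) / 2 := ⟨((A + B - M) / 2).toNat, by omega⟩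
  have hD : 1 ≤ D := by omega
  rw [st_b_eq S F e D hD (by omega) (by omega), abs_mul, abs_of_nonneg (by positivity)]
  have s1 : ∑ i : S, e i = A := by rw [hA]; exact Finset.sum_coe_sort S e
  have s2 : ∑ j : (Sᶜ : Finset (Fin k)), -e j = B := by rw [hB']; exact Finset.sum_coe_sort Sᶜ (fun j => -e j)
  have k1 := st_B_le (st_deg F D) (st_X hD) (st_deg_pos F D) (Fintype.card F) D
    (fun n hn => st_count n hn) (fun i : S => e i) (fun j : (Sᶜ : Finset (Fin k)) => - e j)
    (fun i => by have := hsing1 i i.2; omega)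
  have k2 := st_W_card (st_deg F D) (st_X hD) (st_deg_pos F D) (Fintype.card F) D Fintype.card_pos
    (fun n hn => st_count n hn) (fun i : S => e i) (fun j : (Sᶜ : Finset (Fin k)) => - e j)
    (fun i => by have := hsing1 i i.2; omega) (fun j => by have := hsing2 j j.2; omega) m (by omega)
    (by
      intro ρ h1 h2 h3
      rw [s1] at h1 h3
      rw [s2] at h2 h3
      rcases hM with h | h | ⟨i, hi, j, hj, h⟩
      · omega
      · omega
      · have := h3 ⟨i, hi⟩ ⟨j, Finset.mem_compl.2 hj⟩
        simp only at this
        omega)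
  have hcard : Fintype.card S + Fintype.card (Sᶜ : Finset (Fin k)) = k := by
    rw [Fintype.card_coe, Fintype.card_coe, Finset.card_add_card_compl, Fintype.card_fin]
  have k3 : |((st_B (st_deg F D) (st_X hD) (Fintype.card F) (fun i : S => e i)
        (fun j : (Sᶜ : Finset (Fin k)) => - e j) : ℤ) : ℝ)| ≤
      2 ^ (k * k) * R ^ (k + (k * k + 1) ^ k * 2 ^ (k * k)) * (Fintype.card F : ℝ) ^ m := by
    have e1 : |((st_B (st_deg F D) (st_X hD) (Fintype.card F) (fun i : S => e i)
        (fun j : (Sᶜ : Finset (Fin k)) => - e j) : ℤ) : ℝ)| ≤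
        ((st_W (st_deg F D) (st_X hD) (fun i : S => e i)
        (fun j : (Sᶜ : Finset (Fin k)) => - e j)).card : ℝ) := by
      rw [← Int.cast_abs]; exact_mod_cast k1
    refine e1.trans ?_
    refine le_trans (Nat.cast_le.2 k2) ?_
    push_cast
    have hDR : ((D : ℝ) + 1) ≤ R := by
      refine le_trans (le_of_eq ?_) hR
      have : ((D + 1 : ℤ) : ℝ) = ((A + B + 2 : ℤ) : ℝ) := by rw [hDe]; push_cast; ring
      rw [← this]; push_cast; ring
    have hmR : ((m : ℝ) + 1) ≤ R := by
      refine le_trans ?_ hDR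
      have : m ≤ D := by omega
      gcongr
    have hc : Fintype.card S * Fintype.card (Sᶜ : Finset (Fin k)) ≤ k * k := Nat.mul_le_mul (by omega) (by omega)
    calc _ ≤ R ^ Fintype.card S * (R ^ Fintype.card (Sᶜ : Finset (Fin k)) * (2 ^ (k * k) *
          (R ^ ((k * k + 1) ^ k * 2 ^ (k * k)) * (Fintype.card F : ℝ) ^ m))) := by
          have g1 : (2 : ℝ) ^ (Fintype.card S * Fintype.card (Sᶜ : Finset (Fin k))) ≤ 2 ^ (k * k) :=
            pow_le_pow_right₀ (by norm_num) hc
          have g2 : ((m : ℝ) + 1) ^ Fintype.card (st_Th S (Sᶜ : Finset (Fin k))) ≤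
              R ^ ((k * k + 1) ^ k * 2 ^ (k * k)) :=
            (pow_le_pow_left₀ (by positivity) hmR _).trans (pow_le_pow_right₀ hR1 (st_Th_card hcard))
          gcongr
      _ = _ := by
          have hp : R ^ k = R ^ Fintype.card S * R ^ Fintype.card (Sᶜ : Finset (Fin k)) := by
            rw [← pow_add]; exact congrArg (R ^ ·) hcard.symm
          rw [pow_add, hp]; ring
  refine le_trans (mul_le_mul_of_nonneg_left k3 (by positivity)) ?_
  rw [mul_left_comm]
  refine mul_le_mul_of_nonneg_left ?_ (by positivity)
  rw [← Real.rpow_natCast, ← Real.rpow_add hq0]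
  apply Real.rpow_le_rpow_of_exponent_le hq
  have hm2 : 2 * (m : ℤ) ≤ A + B - M := by omega
  have hm3 : 2 * (m : ℝ) ≤ A + B - M := by exact_mod_cast hm2
  have hAB : ((∑ i ∈ S, e i - ∑ i ∈ Sᶜ, e i : ℤ) : ℝ) = A + B := by
    rw [← Int.cast_add]; congr 1; omega
  rw [hAB]
  linarith
end fin1

section fin2
variable {k : ℕ} (S : Finset (Fin k))

/-- the nonmixed pairs -/
def st_NM : Finset (Fin k × Fin k) :=
  Finset.univ.filter (fun p => p.1 < p.2 ∧ (p.1 ∈ S ↔ p.2 ∈ S))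

/-- the shift -/
def st_sh (t : Finset (Fin k × Fin k)) : Fin k → ℤ :=
  (∑ p ∈ t, Pi.single p.2 (1 : ℤ) + ∑ p ∈ st_NM S \ t, Pi.single p.1 (1 : ℤ)) +
    ∑ x : S × (Sᶜ : Finset (Fin k)), Pi.single (x.2 : Fin k) (1 : ℤ)

/-- the linear functional -/
def st_L (W : (Fin k → ℤ) → ℝ) (d : Fin k → ℤ) : AddMonoidAlgebra ℝ (Fin k → ℤ) →ₗ[ℝ] ℝ :=
  (Finsupp.linearCombination ℝ (fun e => W (fun i => d i - e i))) ∘ₗ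
    (AddMonoidAlgebra.coeffLinearEquiv ℝ).toLinearMap

theorem st_L_single (W : (Fin k → ℤ) → ℝ) (d e : Fin k → ℤ) (r : ℝ) :
    st_L W d (AddMonoidAlgebra.single e r) = r * W (fun i => d i - e i) := by
  unfold st_L
  rw [LinearMap.comp_apply]
  exact (Finsupp.linearCombination_single ℝ r e)

/-- variables -/
def st_x (i : Fin k) : AddMonoidAlgebra ℝ (Fin k → ℤ) := AddMonoidAlgebra.single (Pi.single i 1) 1

theorem st_det (W : (Fin k → ℤ) → ℝ) (d : Fin k → ℤ) :
    st_L W d (Matrix.vandermonde (st_x (k := k))).det =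
    ∑ σ : Equiv.Perm (Fin k), ((Equiv.Perm.sign σ : ℤ) : ℝ) * W (fun i => d i - ((σ i : ℕ) : ℤ)) := by
  rw [← Matrix.det_transpose, Matrix.det_apply, map_sum]
  apply Finset.sum_congr rfl
  intro σ _
  have h1 : ∏ i, (Matrix.vandermonde (st_x (k := k))).transpose (σ i) i =
      AddMonoidAlgebra.single (fun i => ((σ i : ℕ) : ℤ)) (1 : ℝ) := by
    simp only [Matrix.transpose_apply, Matrix.vandermonde_apply, st_x, AddMonoidAlgebra.single_pow,
      AddMonoidAlgebra.prod_single, one_pow, Finset.prod_const_one]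
    congr 1
    funext i
    rw [Finset.sum_apply, Finset.sum_eq_single i]
    · simp
    · intro j _ h; simp [Pi.single_apply, h.symm]
    · simp
  rw [h1]
  have h2 := st_L_single W d (fun i => ((σ i : ℕ) : ℤ)) 1
  rw [one_mul] at h2
  rw [Units.smul_def, map_zsmul, h2, zsmul_eq_mul]

theorem st_mixed : ∃ ε : ℝ, |ε| = 1 ∧
    ∏ p : Fin k × Fin k with p.1 < p.2 ∧ ¬ (p.1 ∈ S ↔ p.2 ∈ S), (st_x p.2 - st_x p.1) =
      ε • ∏ x : S × (Sᶜ : Finset (Fin k)), (st_x (x.2 : Fin k) - st_x (x.1 : Fin k)) := by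
  refine ⟨∏ p : Fin k × Fin k with p.1 < p.2 ∧ ¬ (p.1 ∈ S ↔ p.2 ∈ S), if p.1 ∈ S then 1 else -1, ?_, ?_⟩
  · rw [Finset.abs_prod]
    apply Finset.prod_eq_one
    intro p _; split_ifs <;> simp
  · have h : ∏ x : S × (Sᶜ : Finset (Fin k)), (st_x (x.2 : Fin k) - st_x (x.1 : Fin k)) =
      ∏ p : Fin k × Fin k with p.1 < p.2 ∧ ¬ (p.1 ∈ S ↔ p.2 ∈ S),
        (if p.1 ∈ S then st_x p.2 - st_x p.1 else st_x p.1 - st_x p.2) := by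
      symm
      refine Finset.prod_bij' (fun p hp => if h : p.1 ∈ S then (⟨p.1, h⟩, ⟨p.2, ?_⟩) else (⟨p.2, ?_⟩, ⟨p.1, ?_⟩))
        (fun x _ => if (x.1 : Fin k) < x.2 then ((x.1 : Fin k), (x.2 : Fin k)) else ((x.2 : Fin k), (x.1 : Fin k))) ?_ ?_ ?_ ?_ ?_
      · rw [Finset.mem_filter] at hp; rw [Finset.mem_compl]; tauto
      · rw [Finset.mem_filter] at hp; tauto
      · rw [Finset.mem_compl]; exact h
      · intros; exact Finset.mem_univ _
      · rintro ⟨⟨i, hi⟩, ⟨j, hj⟩⟩ _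
        have hj' := Finset.mem_compl.1 hj
        have hne : i ≠ j := fun h => hj' (h ▸ hi)
        dsimp only
        split_ifs with h
        · simp [h, hi, hj']
        · simp [lt_of_le_of_ne (not_lt.1 h) hne.symm, hi, hj']
      · rintro ⟨i, j⟩ hp
        rw [Finset.mem_filter] at hp
        dsimp only at hp ⊢
        by_cases hi : i ∈ S
        · simp [hi, hp.2.1]
        · simp [hi, not_lt.2 hp.2.1.le]
      · rintro ⟨⟨i, hi⟩, ⟨j, hj⟩⟩ _
        have hj' := Finset.mem_compl.1 hj
        dsimp only
        by_cases h : i < j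
        · simp [h, hi]
        · simp [h, hj']
      · rintro ⟨i, j⟩ hp
        by_cases hi : i ∈ S
        · simp [hi]
        · simp [hi]
    rw [h, Algebra.smul_def, map_prod, ← Finset.prod_mul_distrib]
    apply Finset.prod_congr rfl
    intro p _
    split_ifs
    · rw [map_one, one_mul]
    · rw [map_neg, map_one]; ring

theorem st_mixed_exp :
    ∏ x : S × (Sᶜ : Finset (Fin k)), (st_x (x.2 : Fin k) - st_x (x.1 : Fin k)) =
    ∑ Y : Finset (S × (Sᶜ : Finset (Fin k))), AddMonoidAlgebra.single
      (∑ x : S × (Sᶜ : Finset (Fin k)), Pi.single (x.2 : Fin k) (1 : ℤ) + st_v S Y) ((-1 : ℝ) ^ Y.card) := by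
  have h0 : ∀ x : S × (Sᶜ : Finset (Fin k)), st_x (x.2 : Fin k) - st_x (x.1 : Fin k)
      = AddMonoidAlgebra.single (Pi.single (x.1 : Fin k) (1 : ℤ)) (-1 : ℝ) + st_x (x.2 : Fin k) := by
    intro x
    rw [AddMonoidAlgebra.single_neg, sub_eq_neg_add]; rfl
  simp_rw [h0]
  rw [Fintype.prod_add]
  apply Finset.sum_congr rfl
  intro Y _
  simp only [st_x, AddMonoidAlgebra.prod_single, AddMonoidAlgebra.single_mul_single, Finset.prod_const,
    one_pow, mul_one]
  congr 1
  rw [← Finset.sum_add_sum_compl Y]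
  unfold st_v
  rw [Finset.sum_sub_distrib]
  abel

theorem st_nonmixed_exp :
    ∏ p ∈ st_NM S, (st_x p.2 - st_x p.1) =
    ∑ t ∈ (st_NM S).powerset, AddMonoidAlgebra.single
      (∑ p ∈ t, Pi.single p.2 (1 : ℤ) + ∑ p ∈ st_NM S \ t, Pi.single p.1 (1 : ℤ))
      ((-1 : ℝ) ^ (st_NM S \ t).card) := by
  have h0 : ∀ x : Fin k × Fin k, st_x x.2 - st_x x.1
      = st_x x.2 + AddMonoidAlgebra.single (Pi.single x.1 (1 : ℤ)) (-1 : ℝ) := by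
    intro x
    rw [AddMonoidAlgebra.single_neg, sub_eq_add_neg]; rfl
  simp_rw [h0]
  rw [Finset.prod_add]
  apply Finset.sum_congr rfl
  intro Y _
  simp only [st_x, AddMonoidAlgebra.prod_single, AddMonoidAlgebra.single_mul_single, Finset.prod_const,
    one_pow, one_mul]

theorem st_expand (W : (Fin k → ℤ) → ℝ) (d : Fin k → ℤ) :
    |∑ σ : Equiv.Perm (Fin k), ((Equiv.Perm.sign σ : ℤ) : ℝ) * W (fun i => d i - ((σ i : ℕ) : ℤ))| ≤
    ∑ t ∈ (st_NM S).powerset, |∑ Y : Finset (S × (Sᶜ : Finset (Fin k))), (-1 : ℝ) ^ Y.card *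
      W (fun i => (d i - st_sh S t i) - st_v S Y i)| := by
  rw [← st_det, Matrix.det_vandermonde]
  obtain ⟨ε, hε, hmix⟩ := st_mixed S
  have h1 : ∏ i : Fin k, ∏ j ∈ Finset.Ioi i, (st_x j - st_x i) =
      (∏ p ∈ st_NM S, (st_x p.2 - st_x p.1)) *
      ∏ p : Fin k × Fin k with p.1 < p.2 ∧ ¬ (p.1 ∈ S ↔ p.2 ∈ S), (st_x p.2 - st_x p.1) := by
    have : ∏ i : Fin k, ∏ j ∈ Finset.Ioi i, (st_x j - st_x i) =
      ∏ p : Fin k × Fin k with p.1 < p.2, (st_x p.2 - st_x p.1) := by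
      rw [Finset.prod_filter, Fintype.prod_prod_type]
      apply Finset.prod_congr rfl
      intro i _
      rw [← Finset.prod_filter]
      apply Finset.prod_congr _ (fun _ _ => rfl)
      ext j; simp
    rw [this, ← Finset.prod_filter_mul_prod_filter_not _ (fun p => (p.1 ∈ S ↔ p.2 ∈ S))]
    rw [Finset.filter_filter, Finset.filter_filter]
    rfl
  rw [h1, hmix, st_mixed_exp, st_nonmixed_exp, mul_smul_comm, map_smul, smul_eq_mul, abs_mul, hε, one_mul,
    Finset.sum_mul, map_sum]
  refine (Finset.abs_sum_le_sum_abs _ _).trans (le_of_eq ?_)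
  apply Finset.sum_congr rfl
  intro t _
  rw [Finset.mul_sum, map_sum]
  have : ∀ Y : Finset (S × (Sᶜ : Finset (Fin k))), st_L W d (AddMonoidAlgebra.single
      (∑ p ∈ t, Pi.single p.2 (1 : ℤ) + ∑ p ∈ st_NM S \ t, Pi.single p.1 (1 : ℤ))
      ((-1 : ℝ) ^ (st_NM S \ t).card) * AddMonoidAlgebra.single
      (∑ x : S × (Sᶜ : Finset (Fin k)), Pi.single (x.2 : Fin k) (1 : ℤ) + st_v S Y) ((-1 : ℝ) ^ Y.card))
      = (-1 : ℝ) ^ (st_NM S \ t).card * ((-1 : ℝ) ^ Y.card *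
      W (fun i => (d i - st_sh S t i) - st_v S Y i)) := by
    intro Y
    rw [AddMonoidAlgebra.single_mul_single, st_L_single, mul_assoc, ← add_assoc]
    congr 3
    funext i
    show d i - (st_sh S t i + st_v S Y i) = _
    ring
  simp_rw [this]
  rw [← Finset.mul_sum, abs_mul, abs_pow, abs_neg, abs_one, one_pow, one_mul]
end fin2

section fin3
variable {k : ℕ} (S : Finset (Fin k))

theorem st_sh_apply (t : Finset (Fin k × Fin k)) (i : Fin k) :
    st_sh S t i = (((t.filter (fun p => p.2 = i)).card + ((st_NM S \ t).filter (fun p => p.1 = i)).card : ℕ) : ℤ)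
      + ((if i ∈ S then 0 else S.card : ℕ) : ℤ) := by
  unfold st_sh
  have e3 : (∑ x : S × (Sᶜ : Finset (Fin k)), (Pi.single (x.2 : Fin k) (1 : ℤ) : Fin k → ℤ)) i =
      ((if i ∈ S then 0 else S.card : ℕ) : ℤ) := by
    rw [Finset.sum_apply, Fintype.sum_prod_type]
    have : ∀ x : S, ∑ y : (Sᶜ : Finset (Fin k)), (Pi.single (y : Fin k) (1 : ℤ) : Fin k → ℤ) i
        = if i ∈ S then 0 else 1 := by
      intro _
      rw [Finset.sum_coe_sort Sᶜ (fun y => (Pi.single (y : Fin k) (1 : ℤ) : Fin k → ℤ) i)]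
      simp only [Pi.single_apply, Finset.sum_ite_eq, Finset.mem_compl]
      split_ifs <;> simp_all
    rw [Finset.sum_congr rfl (fun x _ => this x)]
    split_ifs <;> simp
  have e1 : ∀ (t : Finset (Fin k × Fin k)) (f : Fin k × Fin k → Fin k),
      (∑ p ∈ t, (Pi.single (f p) (1 : ℤ) : Fin k → ℤ)) i = ((t.filter (fun p => f p = i)).card : ℤ) := by
    intro t f
    rw [Finset.sum_apply, Finset.card_filter, Nat.cast_sum]
    apply Finset.sum_congr rfl
    intro p _
    simp only [Pi.single_apply, eq_comm]
    split_ifs <;> simp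
  rw [Pi.add_apply, Pi.add_apply, e3, e1 t (fun p => p.2), e1 (st_NM S \ t) (fun p => p.1)]
  push_cast; rfl

theorem st_sh_in (t : Finset (Fin k × Fin k)) (ht : t ⊆ st_NM S) (i : Fin k) (hi : i ∈ S) :
    st_sh S t i ≤ S.card - 1 := by
  rw [st_sh_apply, if_pos hi]
  have h1 : (t.filter (fun p => p.2 = i)).card ≤ (S.filter (fun j => j < i)).card := by
    refine Finset.card_le_card_of_injOn (fun p => p.1) ?_ ?_
    · intro p hp
      have hp := Finset.mem_filter.1 (Finset.mem_coe.1 hp)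
      have h2 := (Finset.mem_filter.1 (ht hp.1)).2
      rw [hp.2] at h2
      exact Finset.mem_coe.2 (Finset.mem_filter.2 ⟨h2.2.2 hi, h2.1⟩)
    · intro p hp r hr h
      have hp := Finset.mem_filter.1 (Finset.mem_coe.1 hp)
      have hr := Finset.mem_filter.1 (Finset.mem_coe.1 hr)
      exact Prod.ext h (hp.2.trans hr.2.symm)
  have h2 : ((st_NM S \ t).filter (fun p => p.1 = i)).card ≤ (S.filter (fun j => i < j)).card := by
    refine Finset.card_le_card_of_injOn (fun p => p.2) ?_ ?_
    · intro p hp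
      have hp := Finset.mem_filter.1 (Finset.mem_coe.1 hp)
      have h2 := (Finset.mem_filter.1 (Finset.mem_sdiff.1 hp.1).1).2
      rw [hp.2] at h2
      exact Finset.mem_coe.2 (Finset.mem_filter.2 ⟨h2.2.1 hi, h2.1⟩)
    · intro p hp r hr h
      have hp := Finset.mem_filter.1 (Finset.mem_coe.1 hp)
      have hr := Finset.mem_filter.1 (Finset.mem_coe.1 hr)
      exact Prod.ext (hp.2.trans hr.2.symm) h
  have h3 : (S.filter (fun j => j < i)).card + (S.filter (fun j => i < j)).card = (S.erase i).card := by
    rw [← Finset.card_union_of_disjoint]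
    · congr 1
      ext j
      simp only [Finset.mem_union, Finset.mem_filter, Finset.mem_erase]
      constructor
      · rintro (⟨h, h'⟩ | ⟨h, h'⟩)
        · exact ⟨h'.ne, h⟩
        · exact ⟨h'.ne', h⟩
      · rintro ⟨h, h'⟩
        rcases lt_or_gt_of_ne h with h | h
        · exact Or.inl ⟨h', h⟩
        · exact Or.inr ⟨h', h⟩
    · rw [Finset.disjoint_filter]
      intro j _ h; exact not_lt.2 h.le
  have h4 := Finset.card_erase_add_one hi
  omega

theorem st_sh_out (t : Finset (Fin k × Fin k)) (i : Fin k) (hi : i ∉ S) :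
    (S.card : ℤ) ≤ st_sh S t i := by
  rw [st_sh_apply, if_neg hi]; omega

theorem st_pairs (R : Finset (Fin k)) :
    (Finset.univ.filter (fun p : Fin k × Fin k => p.1 < p.2 ∧ p.1 ∈ R ∧ p.2 ∈ R)).card = R.card.choose 2 := by
  have h1 : (Finset.univ.filter (fun p : Fin k × Fin k => p.1 < p.2 ∧ p.1 ∈ R ∧ p.2 ∈ R)).card =
    (Finset.univ.filter (fun p : Fin k × Fin k => p.2 < p.1 ∧ p.1 ∈ R ∧ p.2 ∈ R)).card := by
    refine Finset.card_nbij' Prod.swap Prod.swap ?_ ?_ ?_ ?_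
    · rintro ⟨a, b⟩ h; simp at h ⊢; tauto
    · rintro ⟨a, b⟩ h; simp at h ⊢; tauto
    · intro x _; simp
    · intro x _; simp
  have h2 : (Finset.univ.filter (fun p : Fin k × Fin k => p.1 < p.2 ∧ p.1 ∈ R ∧ p.2 ∈ R)).card +
    (Finset.univ.filter (fun p : Fin k × Fin k => p.2 < p.1 ∧ p.1 ∈ R ∧ p.2 ∈ R)).card = R.offDiag.card := by
    rw [← Finset.card_union_of_disjoint]
    · congr 1
      ext ⟨a, b⟩
      simp only [Finset.mem_union, Finset.mem_filter, Finset.mem_offDiag, Finset.mem_univ, true_and]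
      constructor
      · rintro (⟨h, h'⟩ | ⟨h, h'⟩)
        · exact ⟨h'.1, h'.2, h.ne⟩
        · exact ⟨h'.1, h'.2, h.ne'⟩
      · rintro ⟨h, h', h''⟩
        rcases lt_or_gt_of_ne h'' with h3 | h3
        · exact Or.inl ⟨h3, h, h'⟩
        · exact Or.inr ⟨h3, h, h'⟩
    · rw [Finset.disjoint_filter]
      intro j _ h h'; exact lt_asymm h.1 h'.1
  rw [Finset.offDiag_card] at h2
  rw [Nat.choose_two_right, Nat.mul_sub_one]
  omega

theorem st_sh_sum (t : Finset (Fin k × Fin k)) (ht : t ⊆ st_NM S) (R : Finset (Fin k))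
    (hR : R = S ∨ R = Sᶜ) :
    ∑ i ∈ R, ((((t.filter (fun p => p.2 = i)).card + ((st_NM S \ t).filter (fun p => p.1 = i)).card : ℕ)) : ℤ)
      = (R.card.choose 2 : ℤ) := by
  have hmem : ∀ p ∈ st_NM S, (p.1 ∈ R ↔ p.2 ∈ R) := by
    intro p hp
    have := (Finset.mem_filter.1 hp).2.2
    rcases hR with h | h <;> rw [h]
    · exact this
    · rw [Finset.mem_compl, Finset.mem_compl, this]
  rw [← Nat.cast_sum, ← st_pairs R]
  congr 1
  rw [Finset.sum_add_distrib]
  have e : ∀ (u : Finset (Fin k × Fin k)) (f : Fin k × Fin k → Fin k),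
      ∑ i ∈ R, (u.filter (fun p => f p = i)).card = (u.filter (fun p => f p ∈ R)).card := by
    intro u f
    rw [Finset.card_eq_sum_card_fiberwise (f := f) (t := R) (by intro p hp; exact (Finset.mem_filter.1 hp).2)]
    apply Finset.sum_congr rfl
    intro i hi
    rw [Finset.filter_filter]
    congr 1
    apply Finset.filter_congr
    intro p _
    constructor
    · intro h; exact ⟨h ▸ hi, h⟩
    · exact fun h => h.2
  rw [e t (fun p => p.2), e (st_NM S \ t) (fun p => p.1)]
  rw [show t.filter (fun p => p.2 ∈ R) = t.filter (fun p => p.1 ∈ R) from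
    Finset.filter_congr (fun p hp => (hmem p (ht hp)).symm)]
  rw [← Finset.card_union_of_disjoint (Finset.disjoint_filter_filter Finset.disjoint_sdiff),
    ← Finset.filter_union, Finset.union_sdiff_of_subset ht]
  congr 1
  ext p
  simp only [st_NM, Finset.mem_filter, Finset.mem_univ, true_and]
  rcases hR with h | h <;> rw [h]
  · tauto
  · rw [Finset.mem_compl, Finset.mem_compl]; tauto

theorem st_sh_sumS (t : Finset (Fin k × Fin k)) (ht : t ⊆ st_NM S) :
    ∑ i ∈ S, st_sh S t i = (S.card.choose 2 : ℤ) := by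
  rw [← st_sh_sum S t ht S (Or.inl rfl)]
  apply Finset.sum_congr rfl
  intro i hi
  rw [st_sh_apply, if_pos hi]; simp

theorem st_sh_sumSc (t : Finset (Fin k × Fin k)) (ht : t ⊆ st_NM S) :
    ∑ i ∈ Sᶜ, st_sh S t i = (k.choose 2 : ℤ) - (S.card.choose 2 : ℤ) := by
  have h1 : ∑ i ∈ Sᶜ, st_sh S t i = ((Sᶜ).card.choose 2 : ℤ) + (Sᶜ).card * S.card := by
    rw [← st_sh_sum S t ht Sᶜ (Or.inr rfl)]
    have : ((Sᶜ).card : ℤ) * S.card = ∑ i ∈ Sᶜ, (S.card : ℤ) := by simp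
    rw [this, ← Finset.sum_add_distrib]
    apply Finset.sum_congr rfl
    intro i hi
    rw [st_sh_apply, if_neg (Finset.mem_compl.1 hi)]
  have h2 : S.card + (Sᶜ).card = k := by rw [Finset.card_add_card_compl, Fintype.card_fin]
  have h3 : k.choose 2 = S.card.choose 2 + (Sᶜ).card.choose 2 + S.card * (Sᶜ).card := by
    generalize S.card = s at *
    generalize (Sᶜ).card = m at *
    have e : ∀ n : ℕ, 2 * (n.choose 2 : ℤ) = n * n - n := by
      intro n
      have := Finset.sum_range_id_mul_two n
      rw [Finset.sum_range_id, ← Nat.choose_two_right, Nat.mul_sub_one] at this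
      have h4 : n ≤ n * n := Nat.le_mul_self n
      zify [h4] at this
      linarith
    have a1 := e k
    have a2 := e s
    have a3 := e m
    zify at h2 ⊢
    rw [← h2] at a1
    push_cast at *
    nlinarith
  rw [h1, h3]; push_cast; ring
end fin3

/-- the bound on the coefficients `c_S(d)` of `M_S`, with constants
`C, K` depending only on `k`, for `d` in the support region of Lemma `M-support`. -/
theorem statement11 (k : ℕ) (hk : 1 ≤ k) :
    ∃ C K : ℝ, 0 < C ∧ 0 < K ∧
      ∀ (F : Type) [Field F] [Fintype F],
      ∀ (S : Finset (Fin k)) (hS : S.Nonempty) (hSc : Sᶜ.Nonempty) (d : Fin k → ℤ),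
        (∃ σ : Equiv.Perm (Fin k),
          (∀ i : Fin k, ((i : ℕ) < S.card ↔ σ i ∈ S)) ∧
          (∀ i : Fin k, (i : ℕ) < S.card → ((i : ℕ) : ℤ) ≤ d (σ i)) ∧
          (∀ i : Fin k, S.card ≤ (i : ℕ) → d (σ i) ≤ ((i : ℕ) : ℤ))) →
        |cS F S d| ≤ C *
          ((((2 + (k * (k - 1) / 2 : ℕ) : ℤ) + ((∑ i ∈ S, d i) - ∑ i ∈ Sᶜ, d i))) : ℝ) ^ K *
          min
            (min ((Fintype.card F : ℝ) ^
                    ((((-(S.sup' hS d) + Sᶜ.inf' hSc d - 1 : ℤ)) : ℝ) / 2))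
                 ((Fintype.card F : ℝ) ^
                    ((((-(∑ i ∈ S, d i) + (S.card.choose 2 : ℤ) : ℤ)) : ℝ) / 2)))
            (min ((Fintype.card F : ℝ) ^
                    (((((∑ i ∈ Sᶜ, d i) + (S.card.choose 2 : ℤ) - (k.choose 2 : ℤ) : ℤ)) : ℝ) / 2))
                 ((Fintype.card F : ℝ) ^
                    (-|((((∑ i ∈ S, d i) + ∑ i ∈ Sᶜ, d i - (k.choose 2 : ℤ) : ℤ)) : ℝ)| / 2))) := by
  refine ⟨2 ^ (k * k) * 2 ^ (k * k), ((k + (k * k + 1) ^ k * 2 ^ (k * k) : ℕ) : ℝ), by positivity, ?_, ?_⟩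
  · exact_mod_cast Nat.lt_of_lt_of_le hk (Nat.le_add_right _ _)
  intro F _ _ S hS hSc d ⟨σ, h1, h2, h3⟩
  have hq : (1 : ℝ) ≤ Fintype.card F := by exact_mod_cast Fintype.card_pos
  have hq0 : (0 : ℝ) < Fintype.card F := by linarith
  have hs0 : 0 ≤ ∑ i ∈ S, d i := by
    apply Finset.sum_nonneg
    intro i hi
    have e := h1 (σ.symm i)
    rw [Equiv.apply_symm_apply] at e
    have := h2 (σ.symm i) (e.2 hi)
    rw [Equiv.apply_symm_apply] at this
    omega
  have hs1 : ∑ i ∈ Sᶜ, d i ≤ (k.choose 2 : ℤ) := by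
    have e1 : ∑ i ∈ Sᶜ, d i ≤ ∑ i ∈ Sᶜ, ((σ.symm i : ℕ) : ℤ) := by
      apply Finset.sum_le_sum
      intro i hi
      have e := h1 (σ.symm i)
      rw [Equiv.apply_symm_apply] at e
      have := h3 (σ.symm i) (not_lt.1 (fun h => Finset.mem_compl.1 hi (e.1 h)))
      rwa [Equiv.apply_symm_apply] at this
    have e2 : ∑ i ∈ Sᶜ, ((σ.symm i : ℕ) : ℤ) ≤ ∑ i, ((σ.symm i : ℕ) : ℤ) :=
      Finset.sum_le_sum_of_subset_of_nonneg (Finset.subset_univ _) (fun _ _ _ => by positivity)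
    have e3 : ∑ i, ((σ.symm i : ℕ) : ℤ) = (k.choose 2 : ℤ) := by
      rw [Equiv.sum_comp σ.symm (fun i : Fin k => ((i : ℕ) : ℤ)), ← Nat.cast_sum,
        Fin.sum_univ_eq_sum_range (fun i => i), Finset.sum_range_id, Nat.choose_two_right]
    omega
  rw [← Nat.choose_two_right]
  set R : ℝ := ((((2 + (k.choose 2 : ℕ) : ℤ) + ((∑ i ∈ S, d i) - ∑ i ∈ Sᶜ, d i))) : ℝ) with hRdef
  have hRint : R = (((2 + (k.choose 2 : ℕ) : ℤ) + ((∑ i ∈ S, d i) - ∑ i ∈ Sᶜ, d i) : ℤ) : ℝ) := by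
    rw [hRdef]; push_cast; ring
  have hR1 : 1 ≤ R := by
    rw [hRint]; exact_mod_cast (by omega)
  obtain ⟨i0, hi0, hi0'⟩ := Finset.exists_mem_eq_sup' hS d
  obtain ⟨j0, hj0, hj0'⟩ := Finset.exists_mem_eq_inf' hSc d
  have hj1 := Finset.mem_compl.1 hj0
  rw [Real.rpow_natCast]
  have main : ∀ E : ℝ, (∀ t ⊆ st_NM S, ∀ A B : ℤ, A = (∑ i ∈ S, d i) - (S.card.choose 2 : ℤ) →
      B = -(∑ i ∈ Sᶜ, d i) + (k.choose 2 : ℤ) - (S.card.choose 2 : ℤ) → 0 ≤ A → 0 ≤ B →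
      ∃ M : ℤ, -(M : ℝ) / 2 ≤ E ∧
      (M = A ∨ M = B ∨ ∃ i ∈ S, ∃ j ∉ S, M = (d i - st_sh S t i) - (d j - st_sh S t j))) →
      |cS F S d| ≤ 2 ^ (k * k) * 2 ^ (k * k) * R ^ (k + (k * k + 1) ^ k * 2 ^ (k * k)) *
        (Fintype.card F : ℝ) ^ E := by
    intro E hE
    unfold cS
    rw [abs_mul, abs_pow, abs_neg, abs_one, one_pow, one_mul]
    refine (st_expand S (wS F S) d).trans ?_
    have each : ∀ t ∈ (st_NM S).powerset, |∑ Y : Finset (S × (Sᶜ : Finset (Fin k))), (-1 : ℝ) ^ Y.card *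
      wS F S (fun i => (d i - st_sh S t i) - st_v S Y i)| ≤ 2 ^ (k * k) *
        R ^ (k + (k * k + 1) ^ k * 2 ^ (k * k)) * (Fintype.card F : ℝ) ^ E := by
      intro t ht
      rw [Finset.mem_powerset] at ht
      have a1 := st_sh_sumS S t ht
      have a2 := st_sh_sumSc S t ht
      by_cases hz : (∃ i ∈ S, d i - st_sh S t i < 0) ∨ (∃ j ∉ S, 0 < d j - st_sh S t j)
      · have hz' := st_b_zero S F (fun i => d i - st_sh S t i) hz
        unfold st_b at hz'
        rw [hz', abs_zero]; positivity
      push Not at hz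
      have c1 := Finset.sum_nonneg hz.1
      have c2 : ∑ j ∈ Sᶜ, (d j - st_sh S t j) ≤ 0 :=
        Finset.sum_nonpos (fun j hj => hz.2 j (Finset.mem_compl.1 hj))
      rw [Finset.sum_sub_distrib] at c1 c2
      obtain ⟨M, hM1, hM2⟩ := hE t ht _ _ rfl rfl (by omega) (by omega)
      have := st_b_le S F (fun i => d i - st_sh S t i) _ _ M
        (by rw [Finset.sum_sub_distrib, a1]) (by rw [Finset.sum_sub_distrib, a2]; ring) hM2 R
        (by rw [hRint]; exact_mod_cast (by omega)) hR1
      refine this.trans ?_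
      refine mul_le_mul_of_nonneg_left ?_ (by positivity)
      exact Real.rpow_le_rpow_of_exponent_le hq hM1
    refine (Finset.sum_le_card_nsmul _ _ _ each).trans ?_
    rw [nsmul_eq_mul, Finset.card_powerset]
    have hc : (st_NM S).card ≤ k * k := by
      refine (Finset.card_le_univ _).trans ?_
      simp
    have hc2 : (((2 ^ (st_NM S).card : ℕ)) : ℝ) ≤ 2 ^ (k * k) := by
      push_cast; exact pow_le_pow_right₀ (by norm_num) hc
    refine (mul_le_mul_of_nonneg_right hc2 (by positivity)).trans (le_of_eq (by ring))
  have hC : 0 ≤ 2 ^ (k * k) * 2 ^ (k * k) * R ^ (k + (k * k + 1) ^ k * 2 ^ (k * k)) := by positivity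
  rw [mul_min_of_nonneg _ _ hC, mul_min_of_nonneg _ _ hC, mul_min_of_nonneg _ _ hC]
  refine le_min (le_min ?_ ?_) (le_min ?_ ?_)
  · apply main
    intro t ht A B _ _ _ _
    refine ⟨_, ?_, Or.inr (Or.inr ⟨i0, hi0, j0, hj1, rfl⟩)⟩
    have b1 := st_sh_in S t ht i0 hi0
    have b2 := st_sh_out S t j0 hj1
    have b3 : -((d i0 - st_sh S t i0) - (d j0 - st_sh S t j0)) ≤ -(S.sup' hS d) + Sᶜ.inf' hSc d - 1 := by
      rw [hi0', hj0']; omega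
    have b4 : ((-((d i0 - st_sh S t i0) - (d j0 - st_sh S t j0)) : ℤ) : ℝ) ≤
      ((-(S.sup' hS d) + Sᶜ.inf' hSc d - 1 : ℤ) : ℝ) := by exact_mod_cast b3
    push_cast at b4 ⊢
    linarith
  · apply main
    intro t ht A B hA hB hA0 hB0
    refine ⟨A, le_of_eq ?_, Or.inl rfl⟩
    rw [hA]; push_cast; ring
  · apply main
    intro t ht A B hA hB hA0 hB0
    refine ⟨B, le_of_eq ?_, Or.inr (Or.inl rfl)⟩
    rw [hB]; push_cast; ring
  · apply main
    intro t ht A B hA hB hA0 hB0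
    have e0 : (∑ i ∈ S, d i) + ∑ i ∈ Sᶜ, d i - (k.choose 2 : ℤ) = A - B := by omega
    rw [e0]
    have hA0' : (0 : ℝ) ≤ A := by exact_mod_cast hA0
    have hB0' : (0 : ℝ) ≤ B := by exact_mod_cast hB0
    push_cast
    rcases le_total B A with h | h
    · refine ⟨A, ?_, Or.inl rfl⟩
      have h' : (B : ℝ) ≤ A := by exact_mod_cast h
      rw [abs_of_nonneg (by linarith)]; linarith
    · refine ⟨B, ?_, Or.inr (Or.inl rfl)⟩
      have h' : (A : ℝ) ≤ B := by exact_mod_cast h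
      rw [abs_of_nonpos (by linarith)]; linarith

end
end

section
/- Let r ≥ 0 and r̃ ≥ 0 be integers with k := r + r̃ ≥ 1, and let S ⊆ {1,…,k}. Suppose ν ∈ ℂ satisfies ε_χ^{r−|S|} = ν for every χ ∈ S_{n,q}. Let d_1, …, d_k be integers with 0 ≤ d_i ≤ n−1 for all i, Σ_{i∈S} d_i ≤ n−1, and Σ_{i∉S} (n−1−d_i) ≤ n−1. Then Σ_{χ ∈ S_{n,q}} ε_χ^{−r̃} ∏_{i=1}^k λ_{d_i}(χ) = ν · (q^n − q^{n−1}) · q^{−(Σ_{i∈S} d_i + Σ_{i∉S}(n−1−d_i))/2} · N, where N is the number of tuples of monic polynomials ((f_i)_{i∈S}, (g_i)_{i∉S}) in F_q[T] with deg f_i = d_i for i ∈ S, deg g_i = n−1−d_i for i ∉ S, and T^a ∏_{i∈S} f_i = T^b ∏_{i∉S} g_i for some natural numbers a, b. -/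
open Polynomial

noncomputable section

/-- The ring `F_q[x]/(x^(n+1))`. -/
abbrev QuotR (F : Type) [Field F] (n : ℕ) : Type :=
  Polynomial F ⧸ Ideal.span {(Polynomial.X : Polynomial F) ^ (n + 1)}

/-- The quotient map `F_q[x] → F_q[x]/(x^(n+1))`. -/
def mkR (F : Type) [Field F] (n : ℕ) : Polynomial F →+* QuotR F n :=
  Ideal.Quotient.mk _

/-- A Dirichlet character modulo `x^(n+1)` is even if it is trivial on the constants. -/
def IsEvenChar (F : Type) [Field F] (n : ℕ) (ψ : MulChar (QuotR F n) ℂ) : Prop :=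
  ∀ c : F, c ≠ 0 → ψ (mkR F n (Polynomial.C c)) = 1

/-- A Dirichlet character modulo `x^(n+1)` is primitive if it is nontrivial on the
units congruent to `1` modulo `x^n` (which are exactly the `1 + a x^n`). -/
def IsPrimitiveChar (F : Type) [Field F] (n : ℕ) (ψ : MulChar (QuotR F n) ℂ) : Prop :=
  ∃ a : F, ψ (mkR F n (1 + Polynomial.C a * Polynomial.X ^ n)) ≠ 1

/-- The function `χ` on (monic) polynomials attached to a Dirichlet character `ψ`:
`χ(f) = ψ(f(x⁻¹) x^(deg f) mod x^(n+1))`. -/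
def attachedChar (F : Type) [Field F] (n : ℕ) (ψ : MulChar (QuotR F n) ℂ) :
    Polynomial F → ℂ :=
  fun f => ψ (mkR F n f.reverse)

/-- The family `S_{n,q}` of functions attached to primitive even Dirichlet characters. -/
def Snq (F : Type) [Field F] (n : ℕ) : Set (Polynomial F → ℂ) :=
  {χ | ∃ ψ : MulChar (QuotR F n) ℂ,
    IsEvenChar F n ψ ∧ IsPrimitiveChar F n ψ ∧ χ = attachedChar F n ψ}

/-- The sum of `χ(f)` over monic polynomials of degree `d`. -/
def coeffSum (F : Type) [Field F] (χ : Polynomial F → ℂ) (d : ℕ) : ℂ :=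
  ∑ᶠ f ∈ {f : Polynomial F | f.Monic ∧ f.natDegree = d}, χ f

/-- `λ_d(χ) = q^(-d/2) ∑_{f monic, deg f = d} χ(f)`. -/
def lam (F : Type) [Field F] [Fintype F] (χ : Polynomial F → ℂ) (d : ℕ) : ℂ :=
  ((((Fintype.card F : ℝ) ^ (-(d : ℝ) / 2) : ℝ)) : ℂ) * coeffSum F χ d

/-- The epsilon factor `ε_χ = λ_{n-1}(χ)`. -/
def epsFactor (F : Type) [Field F] [Fintype F] (n : ℕ) (χ : Polynomial F → ℂ) : ℂ :=
  lam F χ (n - 1)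

/-- The L-function `L(s,χ) = ∑_{d=0}^{n-1} λ_d(χ) q^(d(1/2-s))`. -/
def Lfun (F : Type) [Field F] [Fintype F] (n : ℕ) (χ : Polynomial F → ℂ) (s : ℂ) : ℂ :=
  ∑ d ∈ Finset.range n, lam F χ d * (Fintype.card F : ℂ) ^ ((d : ℂ) * (1 / 2 - s))

section Aux

variable {F : Type} [Field F] {n : ℕ}

/-- coefficients of a class -/
def cf (j : ℕ) (x : QuotR F n) : F := (Quotient.out x : Polynomial F).coeff j

lemma mkR_surj : Function.Surjective (mkR F n) := Ideal.Quotient.mk_surjective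

lemma mkR_eq_iff (f g : Polynomial F) :
    mkR F n f = mkR F n g ↔ ∀ j ≤ n, f.coeff j = g.coeff j := by
  unfold mkR
  rw [Ideal.Quotient.eq, Ideal.mem_span_singleton, Polynomial.X_pow_dvd_iff]
  simp [sub_eq_zero]

lemma cf_mkR {j : ℕ} (hj : j ≤ n) (f : Polynomial F) : cf j (mkR F n f) = f.coeff j := by
  have : mkR F n (Quotient.out (mkR F n f) : Polynomial F) = mkR F n f := Quotient.out_eq _
  exact (mkR_eq_iff _ _).1 this j hj

lemma cf_ext {x y : QuotR F n} (h : ∀ j ≤ n, cf j x = cf j y) : x = y := by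
  obtain ⟨f, rfl⟩ := mkR_surj x
  obtain ⟨g, rfl⟩ := mkR_surj y
  rw [mkR_eq_iff]
  intro j hj
  simpa [cf_mkR hj] using h j hj

lemma cf_mul {j : ℕ} (hj : j ≤ n) (x y : QuotR F n) :
    cf j (x * y) = ∑ k ∈ Finset.range (j + 1), cf k x * cf (j - k) y := by
  obtain ⟨f, rfl⟩ := mkR_surj x
  obtain ⟨g, rfl⟩ := mkR_surj y
  rw [← map_mul, cf_mkR hj, Polynomial.coeff_mul, Finset.Nat.sum_antidiagonal_eq_sum_range_succ_mk]
  refine Finset.sum_congr rfl fun k hk => ?_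
  have := Finset.mem_range.1 hk
  rw [cf_mkR (by omega), cf_mkR (by omega)]

lemma cf_add {j : ℕ} (hj : j ≤ n) (x y : QuotR F n) : cf j (x + y) = cf j x + cf j y := by
  obtain ⟨f, rfl⟩ := mkR_surj x
  obtain ⟨g, rfl⟩ := mkR_surj y
  rw [← map_add, cf_mkR hj, cf_mkR hj, cf_mkR hj, Polynomial.coeff_add]

lemma cf_one {j : ℕ} (hj : j ≤ n) : cf j (1 : QuotR F n) = if j = 0 then 1 else 0 := by
  rw [← map_one (mkR F n), cf_mkR hj, Polynomial.coeff_one]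

lemma cf_zero_mul (x y : QuotR F n) : cf 0 (x * y) = cf 0 x * cf 0 y := by
  rw [cf_mul (Nat.zero_le _)]; simp

/-- constant term -/
def evH : QuotR F n →* F where
  toFun := cf 0
  map_one' := by rw [cf_one (Nat.zero_le _)]; simp
  map_mul' := cf_zero_mul

lemma isUnit_of_cf {x : QuotR F n} (h : cf 0 x = 1) : IsUnit x := by
  have hnil : IsNilpotent (x - 1) := by
    refine ⟨n + 1, ?_⟩
    obtain ⟨f, rfl⟩ := mkR_surj x
    rw [cf_mkR (Nat.zero_le _)] at h
    rw [← map_one (mkR F n), ← map_sub, ← map_pow]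
    have hd : (X : Polynomial F) ∣ f - 1 := by
      rw [Polynomial.X_dvd_iff]; simp [h]
    exact Ideal.Quotient.eq_zero_iff_mem.2 (Ideal.mem_span_singleton.2 (pow_dvd_pow_of_dvd hd _))
  simpa using hnil.isUnit_one_add

variable (F n) in
/-- one-units -/
def G1 : Subgroup (QuotR F n)ˣ := (Units.map (evH (F := F) (n := n))).ker

/-- coefficients of a one-unit -/
def gc (j : ℕ) (u : G1 F n) : F := cf j ((u : (QuotR F n)ˣ) : QuotR F n)

lemma gc_zero (u : G1 F n) : gc 0 u = 1 := by
  have := u.2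
  unfold G1 at this
  rw [MonoidHom.mem_ker] at this
  exact congrArg Units.val this

/-- build a one-unit -/
def mkG (x : QuotR F n) (h : cf 0 x = 1) : G1 F n :=
  ⟨(isUnit_of_cf h).unit, by
    unfold G1; rw [MonoidHom.mem_ker]; ext; exact h⟩

@[simp] lemma mkG_val (x : QuotR F n) (h : cf 0 x = 1) :
    ((mkG x h : (QuotR F n)ˣ) : QuotR F n) = x := rfl

lemma gc_mkG (j : ℕ) (x : QuotR F n) (h : cf 0 x = 1) : gc j (mkG x h) = cf j x := rfl

lemma G1_ext' {u v : G1 F n}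
    (h : ((u : (QuotR F n)ˣ) : QuotR F n) = ((v : (QuotR F n)ˣ) : QuotR F n)) : u = v :=
  Subtype.ext (Units.ext h)

lemma gc_ext {u v : G1 F n} (h : ∀ j ≤ n, 1 ≤ j → gc j u = gc j v) : u = v := by
  apply G1_ext'
  apply cf_ext
  intro j hj
  rcases Nat.eq_zero_or_pos j with rfl | h0
  · exact (gc_zero u).trans (gc_zero v).symm
  · exact h j hj h0

lemma gc_mul {j : ℕ} (hj : j ≤ n) (u v : G1 F n) :
    gc j (u * v) = ∑ k ∈ Finset.range (j + 1), gc k u * gc (j - k) v :=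
  cf_mul hj _ _

lemma gc_one {j : ℕ} (hj : j ≤ n) : gc j (1 : G1 F n) = if j = 0 then 1 else 0 := cf_one hj

lemma exists_gc (a : ℕ → F) : ∃ u : G1 F n, ∀ j ≤ n, 1 ≤ j → gc j u = a j := by
  let p : Polynomial F := 1 + ∑ i ∈ Finset.range n, C (a (i + 1)) * X ^ (i + 1)
  have hp : ∀ j ≤ n, p.coeff j = if j = 0 then 1 else a j := by
    intro j hj
    simp only [p, Polynomial.coeff_add, Polynomial.finsetSum_coeff, Polynomial.coeff_C_mul_X_pow,
      Polynomial.coeff_one]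
    rcases j with _ | j
    · simp
    · simp only [Nat.add_right_cancel_iff]
      rw [Finset.sum_ite_eq]
      simp; omega
  refine ⟨mkG (mkR F n p) ?_, ?_⟩
  · rw [cf_mkR (Nat.zero_le _), hp 0 (Nat.zero_le _)]; simp
  · intro j hj h1
    rw [gc_mkG, cf_mkR hj, hp j hj, if_neg (by omega)]

/-- one-units with degree at most `m` -/
def EE (F : Type) [Field F] (n m : ℕ) : Set (G1 F n) := {u | ∀ j ≤ n, m < j → gc j u = 0}

lemma EE_mul {a b : ℕ} {u v : G1 F n} (hu : u ∈ EE F n a) (hv : v ∈ EE F n b) :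
    u * v ∈ EE F n (a + b) := by
  intro j hj hlt
  rw [gc_mul hj]
  refine Finset.sum_eq_zero fun k hk => ?_
  have := Finset.mem_range.1 hk
  by_cases h : a < k
  · rw [hu k (by omega) h, zero_mul]
  · rw [hv (j - k) (by omega) (by omega), mul_zero]

lemma EE_one (a : ℕ) : (1 : G1 F n) ∈ EE F n a := by
  intro j hj hlt
  rw [gc_one hj, if_neg (by omega)]

lemma EE_mono {a b : ℕ} (h : a ≤ b) : EE F n a ⊆ EE F n b :=
  fun _ hu j hj hlt => hu j hj (by omega)

lemma EE_prod {ι : Type*} (s : Finset ι) (e : ι → ℕ) (u : ι → G1 F n)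
    (h : ∀ i ∈ s, u i ∈ EE F n (e i)) : ∏ i ∈ s, u i ∈ EE F n (∑ i ∈ s, e i) := by
  classical
  induction s using Finset.induction_on with
  | empty => simpa using EE_one 0
  | insert i s hi ih =>
    rw [Finset.prod_insert hi, Finset.sum_insert hi]
    exact EE_mul (h i (by simp)) (ih fun j hj => h j (by simp [hj]))

lemma EE_zero : EE F n 0 = {1} := by
  ext u
  constructor
  · intro hu
    refine gc_ext fun j hj h1 => ?_
    rw [hu j hj h1, gc_one hj, if_neg (by omega)]
  · rintro rfl; exact EE_one 0

lemma EE_top : EE F n n = Set.univ := by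
  ext u; simp only [Set.mem_univ, iff_true]; intro j hj h; omega

lemma EE_card [Fintype F] {m : ℕ} (hm : m ≤ n) : Nat.card (EE F n m) = Fintype.card F ^ m := by
  have : Function.Bijective (fun (u : EE F n m) (i : Fin m) => gc (i.1 + 1) u.1) := by
    constructor
    · rintro ⟨u, hu⟩ ⟨v, hv⟩ h
      apply Subtype.ext
      refine gc_ext fun j hj h1 => ?_
      by_cases hjm : m < j
      · rw [hu j hj hjm, hv j hj hjm]
      · have := congrFun h ⟨j - 1, by omega⟩
        simpa [Nat.sub_add_cancel h1] using this
    · intro c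
      obtain ⟨u, hu⟩ := exists_gc (n := n) (fun j => if h : j - 1 < m then c ⟨j - 1, h⟩ else 0)
      refine ⟨⟨u, ?_⟩, ?_⟩
      · intro j hj h1
        rw [hu j hj (by omega), dif_neg (by omega)]
      · funext i
        change gc (i.1 + 1) u = _
        rw [hu _ (by omega) (by omega)]
        simp
  rw [Nat.card_congr (Equiv.ofBijective _ this)]
  simp

instance [Fintype F] : Finite (G1 F n) := by
  have h := EE_card (F := F) (n := n) le_rfl
  rw [EE_top] at h
  have : Nat.card (G1 F n) ≠ 0 := by
    rw [← Nat.card_univ, h]; exact pow_ne_zero _ Fintype.card_ne_zero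
  exact Nat.finite_of_card_ne_zero this

lemma G1_card [Fintype F] : Nat.card (G1 F n) = Fintype.card F ^ n := by
  rw [← EE_card (F := F) (n := n) le_rfl, EE_top, Nat.card_univ]

lemma kk_aux (hn : 1 ≤ n) (a : F) : cf 0 (mkR F n (1 + C a * X ^ n)) = 1 := by
  rw [cf_mkR (Nat.zero_le _)]
  simp [Polynomial.coeff_X_pow]
  omega

/-- `1 + a x^n` -/
def kk (hn : 1 ≤ n) (a : F) : G1 F n := mkG (mkR F n (1 + C a * X ^ n)) (kk_aux hn a)

lemma gc_kk (hn : 1 ≤ n) (a : F) {j : ℕ} (hj : j ≤ n) :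
    gc j (kk hn a) = if j = 0 then 1 else if j = n then a else 0 := by
  unfold kk
  rw [gc_mkG, cf_mkR hj]
  simp only [coeff_add, coeff_one, coeff_C_mul, coeff_X_pow]
  split_ifs <;> first | omega | simp

lemma gc_kk' (hn : 1 ≤ n) (a : F) {j : ℕ} (hj : j ≤ n) (h1 : 1 ≤ j) :
    gc j (kk hn a) = if j = n then a else 0 := by
  rw [gc_kk hn a hj, if_neg (by omega)]

lemma gc_mul_kk (hn : 1 ≤ n) (a : F) (u : G1 F n) {j : ℕ} (hj : j ≤ n) :
    gc j (u * kk hn a) = gc j u + if j = n then a else 0 := by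
  rw [gc_mul hj, Finset.sum_range_succ]
  rw [Nat.sub_self, gc_kk _ _ (Nat.zero_le _), if_pos rfl, mul_one, add_comm]
  congr 1
  rcases j with _ | j
  · simp; omega
  rw [Finset.sum_range_succ', Finset.sum_eq_zero]
  · rw [gc_zero, gc_kk _ _ (by omega)]; simp
  · intro k hk
    have := Finset.mem_range.1 hk
    rw [gc_kk _ _ (by omega), if_neg (by omega), if_neg (by omega), mul_zero]

/-- the subgroup of all `1 + a x^n` as a homomorphism -/
def kkHom (F : Type) [Field F] (n : ℕ) (hn : 1 ≤ n) : Multiplicative F →* G1 F n where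
  toFun a := kk hn a.toAdd
  map_one' := by
    refine gc_ext fun j hj h1 => ?_
    rw [gc_kk _ _ hj, gc_one hj]; simp
  map_mul' a b := by
    refine gc_ext fun j hj h1 => ?_
    rw [gc_mul_kk _ _ _ hj, gc_kk' _ _ hj h1, gc_kk' _ _ hj h1]
    split_ifs <;> simp

lemma kkHom_inj (hn : 1 ≤ n) : Function.Injective (kkHom F n hn) := by
  intro a b h
  have h2 : gc n (kk hn a.toAdd) = gc n (kk hn b.toAdd) := congrArg (gc n) h
  rw [gc_kk' _ _ le_rfl hn, gc_kk' _ _ le_rfl hn] at h2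
  simpa using h2

/-- two elements of degree `< n` congruent mod `x^n` are equal -/
lemma eq_of_mem_range (hn : 1 ≤ n) {u v : G1 F n} (hu : u ∈ EE F n (n - 1))
    (hv : v ∈ EE F n (n - 1)) (h : v⁻¹ * u ∈ (kkHom F n hn).range) : u = v := by
  obtain ⟨a, ha⟩ := h
  have h1 : u = v * kk hn a.toAdd := by
    rw [eq_comm, ← eq_inv_mul_iff_mul_eq]; exact ha
  have h2 := congrArg (gc n) h1
  rw [gc_mul_kk _ _ _ le_rfl, hu n le_rfl (by omega), hv n le_rfl (by omega), if_pos rfl,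
    zero_add] at h2
  rw [h1]
  refine gc_ext fun j hj _ => ?_
  rw [gc_mul_kk _ _ _ hj, ← h2]; simp

lemma kk_mem (hn : 1 ≤ n) (a : F) : kk hn a ∈ (kkHom F n hn).range :=
  ⟨Multiplicative.ofAdd a, rfl⟩

/-- primitive characters of the one-units -/
def Prim (F : Type) [Field F] (n : ℕ) (hn : 1 ≤ n) : Set (G1 F n →* ℂˣ) :=
  {φ | ∃ a : F, φ (kk hn a) ≠ 1}

lemma prim_card [Fintype F] (hn : 1 ≤ n) :
    (Nat.card (Prim F n hn) : ℂ) = (Fintype.card F : ℂ) ^ n - (Fintype.card F : ℂ) ^ (n - 1) := by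
  classical
  let K := (kkHom F n hn).range
  have hK : Nat.card K = Fintype.card F := by
    rw [← Nat.card_congr (MonoidHom.ofInjective (kkHom_inj hn)).toEquiv]
    simp [Nat.card_eq_fintype_card]
  have hq : Nat.card (G1 F n ⧸ K) = Fintype.card F ^ (n - 1) := by
    have h := K.card_eq_card_quotient_mul_card_subgroup
    rw [hK, G1_card] at h
    have h2 : Fintype.card F ^ n = Fintype.card F ^ (n - 1) * Fintype.card F := by
      rw [← pow_succ, Nat.sub_add_cancel hn]
    rw [h2] at h
    exact (Nat.eq_of_mul_eq_mul_right Fintype.card_pos h).symm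
  have h1 := CommGroup.card_monoidHom_of_hasEnoughRootsOfUnity (G1 F n) ℂ
  have h2 := CommGroup.card_domRestrictHom_ker (G := G1 F n) ℂ K
  have hc : ((MonoidHom.domRestrictHom K ℂˣ).ker : Set (G1 F n →* ℂˣ)) = (Prim F n hn)ᶜ := by
    ext φ
    rw [SetLike.mem_coe, MonoidHom.mem_ker, MonoidHom.domRestrictHom_apply,
      MonoidHom.domRestrict_eq_one_iff]
    simp only [Prim, Set.mem_compl_iff, Set.mem_ofPred_eq, not_exists, not_not]
    constructor
    · intro h a
      exact h _ (kk_mem hn a)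
    · rintro h _ ⟨a, rfl⟩
      exact h _
  have h3 := Set.ncard_add_ncard_compl (Prim F n hn)
  rw [← hc] at h3
  rw [← Nat.card_coe_set_eq, ← Nat.card_coe_set_eq, SetLike.coe_sort_coe, h2, h1, hq, G1_card] at h3
  rw [eq_sub_iff_add_eq]
  exact_mod_cast h3

lemma prim_orth [Fintype F] (hn : 1 ≤ n) (w : G1 F n) (hw : w ∉ (kkHom F n hn).range) :
    ∑ᶠ φ ∈ Prim F n hn, ((φ w : ℂˣ) : ℂ) = 0 := by
  have h := mt (CommGroup.forall_monoidHom_apply_eq_one_iff ℂ (kkHom F n hn).range w).1 hw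
  push Not at h
  obtain ⟨η, hη, hw1⟩ := h
  have key : ∑ᶠ φ ∈ Prim F n hn, ((φ w : ℂˣ) : ℂ) =
      ((η w : ℂˣ) : ℂ) * ∑ᶠ φ ∈ Prim F n hn, ((φ w : ℂˣ) : ℂ) := by
    rw [mul_finsum_mem]
    symm
    refine finsum_mem_eq_of_bijOn (fun φ => η * φ) ⟨?_, ?_, ?_⟩ ?_
    · rintro φ ⟨a, ha⟩
      refine ⟨a, ?_⟩
      rw [MonoidHom.mul_apply, hη _ (kk_mem hn a), one_mul]
      exact ha
    · intro a _ b _ h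
      exact mul_left_cancel h
    · rintro φ ⟨a, ha⟩
      refine ⟨η⁻¹ * φ, ⟨a, ?_⟩, by simp⟩
      rw [MonoidHom.mul_apply, MonoidHom.inv_apply, hη _ (kk_mem hn a), inv_one,
        one_mul]
      exact ha
    · intro φ _
      simp
  have h1 : ((η w : ℂˣ) : ℂ) ≠ 1 := by simpa using hw1
  by_contra h0
  exact h1 (mul_right_cancel₀ h0 (by rw [one_mul]; exact key.symm))

/-- orthogonality, packaged -/
lemma prim_sum [Fintype F] (hn : 1 ≤ n) {u v : G1 F n} (hu : u ∈ EE F n (n - 1))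
    (hv : v ∈ EE F n (n - 1)) [Decidable (u = v)] :
    ∑ᶠ φ ∈ Prim F n hn, ((φ u : ℂˣ) : ℂ) * ((φ v : ℂˣ) : ℂ)⁻¹ =
      if u = v then (Fintype.card F : ℂ) ^ n - (Fintype.card F : ℂ) ^ (n - 1) else 0 := by
  have h0 : ∀ φ : G1 F n →* ℂˣ, ((φ u : ℂˣ) : ℂ) * ((φ v : ℂˣ) : ℂ)⁻¹ =
      ((φ (v⁻¹ * u) : ℂˣ) : ℂ) := by
    intro φ; simp [mul_comm]
  simp only [h0]
  split_ifs with h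
  · subst h
    simp only [inv_mul_cancel, map_one, Units.val_one]
    rw [← prim_card hn, finsum_mem_eq_finite_toFinset_sum _ (Set.toFinite _), Nat.card_coe_set_eq,
      Set.ncard_eq_toFinset_card _ (Set.toFinite _)]
    simp
  · exact prim_orth hn _ fun h2 => h (eq_of_mem_range hn hu hv h2)

/-- finset version of `EE` -/
def EF (F : Type) [Field F] [Fintype F] (n m : ℕ) : Finset (G1 F n) :=
  (Set.toFinite (EE F n m)).toFinset

@[simp] lemma mem_EF [Fintype F] {m : ℕ} {u : G1 F n} : u ∈ EF F n m ↔ u ∈ EE F n m := by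
  simp [EF]

lemma EF_card [Fintype F] {m : ℕ} (hm : m ≤ n) : (EF F n m).card = Fintype.card F ^ m := by
  rw [← EE_card hm, EF, Nat.card_coe_set_eq, Set.ncard_eq_toFinset_card _ (Set.toFinite _)]

/-- coefficient sums -/
def AA [Fintype F] (φ : G1 F n →* ℂˣ) (m : ℕ) : ℂ := ∑ u ∈ EF F n m, ((φ u : ℂˣ) : ℂ)

/-- inverse coefficient sums -/
def BB [Fintype F] (φ : G1 F n →* ℂˣ) (m : ℕ) : ℂ := ∑ u ∈ EF F n m, ((φ u : ℂˣ) : ℂ)⁻¹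

lemma mem_EE_pred (hn : 1 ≤ n) {u : G1 F n} : u ∈ EE F n (n - 1) ↔ gc n u = 0 := by
  constructor
  · intro h; exact h n le_rfl (by omega)
  · intro h j hj hlt
    obtain rfl : j = n := by omega
    exact h

lemma inv_sum_zero {G : Type*} [CommGroup G] [Fintype G] (φ : G →* ℂˣ) (k : G) (hk : φ k ≠ 1)
    (T : G → ℂ) (hT : ∀ u, T (u * k) = T u) : ∑ u, ((φ u : ℂˣ) : ℂ) * T u = 0 := by
  have key : ∑ u, ((φ u : ℂˣ) : ℂ) * T u = (φ k : ℂ) * ∑ u, ((φ u : ℂˣ) : ℂ) * T u := by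
    rw [Finset.mul_sum, ← Equiv.sum_comp (Equiv.mulRight k)]
    refine Finset.sum_congr rfl fun u _ => ?_
    simp only [Equiv.coe_mulRight, map_mul, Units.val_mul, hT]
    ring
  have h1 : ((φ k : ℂˣ) : ℂ) ≠ 1 := by simpa using hk
  by_contra h0
  exact h1 (mul_right_cancel₀ h0 (by rw [one_mul]; exact key.symm))

/-- shift by `t x^j` -/
lemma exists_shift (j : ℕ) (hj1 : 1 ≤ j) (t : F) (h : G1 F n) :
    ∃ h' : G1 F n, ∀ i ≤ n, gc i h' = gc i h + if i = j then t else 0 := by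
  obtain ⟨u, hu⟩ := exists_gc (n := n) (fun i => gc i h + if i = j then t else 0)
  refine ⟨u, fun i hi => ?_⟩
  rcases Nat.eq_zero_or_pos i with rfl | h0
  · rw [gc_zero, gc_zero, if_neg (by omega), add_zero]
  · exact hu i hi h0

open Classical in
lemma count_inv [Fintype F] (hn : 1 ≤ n) {e : ℕ} (he : e ≤ n - 1) (a : F) (u : G1 F n)
    (hW : ¬ ∀ j, 1 ≤ j → j ≤ e → gc (n - j) u = 0) :
    ((EF F n e).filter fun h => gc n (u * kk hn a * h) = 0).card =
    ((EF F n e).filter fun h => gc n (u * h) = 0).card := by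
  push Not at hW
  obtain ⟨j, hj1, hje, hne⟩ := hW
  have hjn : j ≤ n := by omega
  set t : F := a / gc (n - j) u with ht
  choose s hs using fun h : G1 F n => exists_shift j hj1 t h
  choose s' hs' using fun h : G1 F n => exists_shift j hj1 (-t) h
  have hsE : ∀ h ∈ EE F n e, s h ∈ EE F n e := by
    intro h hh i hi hlt
    rw [hs h i hi, hh i hi hlt, if_neg (by omega), add_zero]
  have hsE' : ∀ h ∈ EE F n e, s' h ∈ EE F n e := by
    intro h hh i hi hlt
    rw [hs' h i hi, hh i hi hlt, if_neg (by omega), add_zero]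
  have hss' : ∀ h, s (s' h) = h := fun h => gc_ext fun i hi _ => by
    rw [hs _ i hi, hs' _ i hi]; split_ifs <;> simp
  have hs's : ∀ h, s' (s h) = h := fun h => gc_ext fun i hi _ => by
    rw [hs' _ i hi, hs _ i hi]; split_ifs <;> simp
  have hval : ∀ h, gc n (u * s h) = gc n (u * kk hn a * h) := by
    intro h
    rw [show u * kk hn a * h = u * h * kk hn a from mul_right_comm u (kk hn a) h, gc_mul_kk _ _ _ le_rfl, if_pos rfl, gc_mul le_rfl, gc_mul le_rfl]
    have : ∀ k ∈ Finset.range (n + 1), gc k u * gc (n - k) (s h) =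
        gc k u * gc (n - k) h + if k = n - j then a else 0 := by
      intro k hk
      have := Finset.mem_range.1 hk
      rw [hs _ _ (by omega), mul_add]
      congr 1
      by_cases hkj : k = n - j
      · subst hkj
        rw [if_pos (by omega), if_pos rfl, ht]
        field_simp
      · rw [if_neg (by omega), if_neg hkj, mul_zero]
    rw [Finset.sum_congr rfl this, Finset.sum_add_distrib, Finset.sum_ite_eq', if_pos]
    simp
  refine Finset.card_bij' (fun h _ => s h) (fun h _ => s' h) ?_ ?_ ?_ ?_
  · intro h hh
    simp only [Finset.mem_filter, mem_EF] at hh ⊢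
    exact ⟨hsE h hh.1, by rw [hval]; exact hh.2⟩
  · intro h hh
    simp only [Finset.mem_filter, mem_EF] at hh ⊢
    exact ⟨hsE' h hh.1, by rw [← hval, hss']; exact hh.2⟩
  · intro h _; exact hs's h
  · intro h _; exact hss' h

lemma gc_W {e : ℕ} (u h : G1 F n) (hW : ∀ j, 1 ≤ j → j ≤ e → gc (n - j) u = 0)
    (hh : h ∈ EE F n e) : gc n (u * h) = gc n u := by
  rw [gc_mul le_rfl, Finset.sum_range_succ, Nat.sub_self, gc_zero, mul_one, Finset.sum_eq_zero,
    zero_add]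
  intro k hk
  have := Finset.mem_range.1 hk
  by_cases hke : n - k ≤ e
  · have := hW (n - k) (by omega) hke
    rw [show n - (n - k) = k by omega] at this
    rw [this, zero_mul]
  · rw [hh (n - k) (by omega) (by omega), mul_zero]

lemma feq [Fintype F] (hn : 1 ≤ n) (φ : G1 F n →* ℂˣ) (hφ : φ ∈ Prim F n hn) {e : ℕ}
    (he : e ≤ n - 1) :
    AA φ (n - 1) * BB φ e = (Fintype.card F : ℂ) ^ e * AA φ (n - 1 - e) := by
  classical
  have := Fintype.ofFinite (G1 F n)
  obtain ⟨a, ha⟩ := hφ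
  let W : G1 F n → Prop := fun u => ∀ j, 1 ≤ j → j ≤ e → gc (n - j) u = 0
  let N : G1 F n → ℂ := fun u => (((EF F n e).filter fun h => gc n (u * h) = 0).card : ℂ)
  have h1 : AA φ (n - 1) * BB φ e = ∑ u, ((φ u : ℂˣ) : ℂ) * N u := by
    unfold AA BB
    rw [Finset.sum_mul_sum, Finset.sum_comm]
    have : ∀ h ∈ EF F n e, ∑ g ∈ EF F n (n - 1), ((φ g : ℂˣ) : ℂ) * ((φ h : ℂˣ) : ℂ)⁻¹ =
        ∑ u, if gc n (u * h) = 0 then ((φ u : ℂˣ) : ℂ) else 0 := by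
      intro h _
      rw [← Finset.sum_filter]
      refine Finset.sum_bij' (fun g _ => g * h⁻¹) (fun u _ => u * h) ?_ ?_ ?_ ?_ ?_
      · intro g hg
        simpa [mem_EE_pred hn] using hg
      · intro g hg
        simpa [mem_EE_pred hn] using hg
      · intro g _; simp
      · intro g _; simp
      · intro g _; simp
    rw [Finset.sum_congr rfl this, Finset.sum_comm]
    refine Finset.sum_congr rfl fun u _ => ?_
    rw [← Finset.sum_filter]
    simp only [N, Finset.sum_const, nsmul_eq_mul]
    ring
  have h2 : ∑ u, ((φ u : ℂˣ) : ℂ) * (if W u then 0 else N u) = 0 := by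
    refine inv_sum_zero φ (kk hn a) ha _ fun u => ?_
    have hWW : W (u * kk hn a) ↔ W u := by
      refine forall_congr' fun j => forall_congr' fun h1 => forall_congr' fun h2 => ?_
      rw [gc_mul_kk _ _ _ (by omega), if_neg (by omega), add_zero]
    by_cases hw : W u
    · rw [if_pos hw, if_pos (hWW.2 hw)]
    · rw [if_neg hw, if_neg (mt hWW.1 hw)]
      simp only [N]
      rw [count_inv hn he a u hw]
  have h3 : ∑ u, ((φ u : ℂˣ) : ℂ) * N u = ∑ u, ((φ u : ℂˣ) : ℂ) * (if W u then N u else 0) := by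
    refine Eq.trans ?_ ((congrArg (_ + ·) h2).trans (add_zero _))
    rw [← Finset.sum_add_distrib]
    refine Finset.sum_congr rfl fun u _ => ?_
    split_ifs <;> simp
  rw [h1, h3, AA, Finset.mul_sum, ← Finset.sum_subset (Finset.subset_univ (EF F n (n - 1 - e)))]
  · refine Finset.sum_congr rfl fun u hu => ?_
    rw [mem_EF] at hu
    have hw : W u := fun j h1 h2 => hu _ (by omega) (by omega)
    rw [if_pos hw]
    simp only [N]
    rw [Finset.filter_true_of_mem, EF_card (by omega)]
    · push_cast; ring
    · intro h hh
      rw [gc_W u h hw (mem_EF.1 hh)]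
      exact hu n le_rfl (by omega)
  · intro u _ hu
    by_cases hw : W u
    · rw [if_pos hw]
      simp only [N]
      rw [Finset.filter_false_of_mem]
      · simp
      · intro h hh
        rw [gc_W u h hw (mem_EF.1 hh)]
        intro h0
        apply hu
        rw [mem_EF]
        intro j hj hlt
        rcases Nat.lt_or_ge j n with hjn | hjn
        · have := hw (n - j) (by omega) (by omega)
          rwa [show n - (n - j) = j by omega] at this
        · rwa [show j = n by omega]
    · rw [if_neg hw, mul_zero]

lemma AA_zero [Fintype F] (φ : G1 F n →* ℂˣ) : AA φ 0 = 1 := by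
  have : EF F n 0 = {1} := by
    ext u; rw [mem_EF, EE_zero]; simp
  simp [AA, this]

/-- constants -/
def sH : Fˣ →* (QuotR F n)ˣ := Units.map ((mkR F n).comp C : F →+* QuotR F n).toMonoidHom

lemma evH_sH (c : Fˣ) : Units.map (evH (F := F) (n := n)) (sH c) = c := by
  ext
  change cf 0 (mkR F n (C (c : F))) = c
  rw [cf_mkR (Nat.zero_le _)]; simp

lemma comm_aux {G : Type*} [CommGroup G] (a b c d : G) :
    a * b * (c * d)⁻¹ = a * c⁻¹ * (b * d⁻¹) := by
  rw [mul_inv, mul_mul_mul_comm]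

/-- projection to one-units -/
def projG : (QuotR F n)ˣ →* G1 F n where
  toFun u := ⟨u * (sH (Units.map evH u))⁻¹, by
    unfold G1
    rw [MonoidHom.mem_ker, map_mul, map_inv, evH_sH]
    simp⟩
  map_one' := by
    apply Subtype.ext
    simp
  map_mul' u v := by
    apply Subtype.ext
    simp only [map_mul, Subgroup.coe_mul]
    exact comm_aux u v _ _

lemma projG_coe (u : (QuotR F n)ˣ) :
    ((projG u : G1 F n) : (QuotR F n)ˣ) = u * (sH (Units.map evH u))⁻¹ := rfl

lemma projG_of (u : G1 F n) : projG (u : (QuotR F n)ˣ) = u := by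
  apply Subtype.ext
  have h : Units.map evH (u : (QuotR F n)ˣ) = 1 := u.2
  rw [projG_coe, h]; simp

lemma projG_sH (c : Fˣ) : projG (sH c : (QuotR F n)ˣ) = 1 := by
  apply Subtype.ext
  rw [projG_coe, evH_sH]; simp

/-- extension of a character of the one-units -/
def psi (φ : G1 F n →* ℂˣ) : MulChar (QuotR F n) ℂ := MulChar.ofUnitHom (φ.comp projG)

lemma psi_of (φ : G1 F n →* ℂˣ) (u : G1 F n) :
    psi φ ((u : (QuotR F n)ˣ) : QuotR F n) = ((φ u : ℂˣ) : ℂ) := by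
  unfold psi
  rw [MulChar.ofUnitHom_coe, MonoidHom.comp_apply, projG_of]

lemma cf_rev {f : Polynomial F} (hf : f.Monic) : cf 0 (mkR F n f.reverse) = 1 := by
  rw [cf_mkR (Nat.zero_le _), coeff_zero_reverse]; exact hf

open Classical in
/-- class of the reversed polynomial -/
def rv (n : ℕ) (f : Polynomial F) : G1 F n :=
  if h : cf 0 (mkR F n f.reverse) = 1 then mkG _ h else 1

lemma rv_val {f : Polynomial F} (hf : f.Monic) :
    ((rv n f : (QuotR F n)ˣ) : QuotR F n) = mkR F n f.reverse := by
  unfold rv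
  rw [dif_pos (cf_rev hf), mkG_val]

lemma gc_rv {f : Polynomial F} (hf : f.Monic) {j : ℕ} (hj : j ≤ n) :
    gc j (rv n f) = f.reverse.coeff j := by
  unfold gc
  rw [rv_val hf, cf_mkR hj]

lemma att_psi (φ : G1 F n →* ℂˣ) {f : Polynomial F} (hf : f.Monic) :
    attachedChar F n (psi φ) f = ((φ (rv n f) : ℂˣ) : ℂ) := by
  unfold attachedChar
  rw [← rv_val hf, psi_of]

lemma rv_mul {f g : Polynomial F} (hf : f.Monic) (hg : g.Monic) :
    rv n (f * g) = rv n f * rv n g := by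
  apply G1_ext'
  rw [rv_val (hf.mul hg), reverse_mul_of_domain, map_mul, ← rv_val hf, ← rv_val hg]
  rfl

lemma rv_prod {ι : Type*} (s : Finset ι) (f : ι → Polynomial F) (hf : ∀ i, (f i).Monic) :
    rv n (∏ i ∈ s, f i) = ∏ i ∈ s, rv n (f i) := by
  classical
  induction s using Finset.induction_on with
  | empty =>
    apply G1_ext'
    rw [Finset.prod_empty, rv_val monic_one]
    simp [← C_1, -map_one, reverse_C]
    simp
  | insert i s hi ih =>
    rw [Finset.prod_insert hi, Finset.prod_insert hi, rv_mul (hf i)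
      (monic_prod_of_monic _ _ fun j _ => hf j), ih]

lemma rv_eq_iff {f g : Polynomial F} (hf : f.Monic) (hg : g.Monic) (hfn : f.natDegree ≤ n)
    (hgn : g.natDegree ≤ n) : rv n f = rv n g ↔ ∃ a b : ℕ, X ^ a * f = X ^ b * g := by
  constructor
  · intro h
    have h1 : f.reverse = g.reverse := by
      ext j
      rcases Nat.lt_or_ge n j with hj | hj
      · rw [coeff_eq_zero_of_natDegree_lt ((reverse_natDegree_le f).trans_lt (by omega)),
          coeff_eq_zero_of_natDegree_lt ((reverse_natDegree_le g).trans_lt (by omega))]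
      · rw [← gc_rv hf hj, ← gc_rv hg hj, h]
    refine ⟨g.natDegree, f.natDegree, ?_⟩
    have h2 : reflect (g.natDegree + f.natDegree) (X ^ g.natDegree * f) =
        reflect (g.natDegree + f.natDegree) (X ^ f.natDegree * g) := by
      rw [reflect_mul _ _ (by simp) le_rfl, add_comm g.natDegree,
        reflect_mul _ _ (by simp) le_rfl, reflect_monomial, reflect_monomial,
        revAt_le le_rfl, revAt_le le_rfl, Nat.sub_self, Nat.sub_self]
      change _ * f.reverse = _ * g.reverse
      rw [h1]
    have h3 := congrArg (reflect (g.natDegree + f.natDegree)) h2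
    simpa only [reflect_reflect] using h3
  · rintro ⟨a, b, h⟩
    apply G1_ext'
    rw [rv_val hf, rv_val hg, ← reverse_X_pow_mul f a, h, reverse_X_pow_mul]

lemma rv_bij {d : ℕ} (hd : d ≤ n) :
    Set.BijOn (rv n) {f : Polynomial F | f.Monic ∧ f.natDegree = d} (EE F n d) := by
  refine ⟨?_, ?_, ?_⟩
  · rintro f ⟨hf, hfd⟩ j hj hlt
    rw [gc_rv hf hj]
    exact coeff_eq_zero_of_natDegree_lt ((reverse_natDegree_le f).trans_lt (by omega))
  · rintro f ⟨hf, hfd⟩ g ⟨hg, hgd⟩ h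
    have h1 : f.reverse = g.reverse := by
      ext j
      rcases Nat.lt_or_ge n j with hj | hj
      · rw [coeff_eq_zero_of_natDegree_lt ((reverse_natDegree_le f).trans_lt (by omega)),
          coeff_eq_zero_of_natDegree_lt ((reverse_natDegree_le g).trans_lt (by omega))]
      · rw [← gc_rv hf hj, ← gc_rv hg hj, h]
    unfold reverse at h1
    rw [hfd, hgd] at h1
    have h3 := congrArg (reflect d) h1
    simpa only [reflect_reflect] using h3
  · intro u hu
    obtain ⟨p, hp⟩ := mkR_surj (((u : (QuotR F n)ˣ) : QuotR F n))
    have hpc : ∀ j ≤ n, p.coeff j = gc j u := fun j hj => by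
      unfold gc; rw [← hp, cf_mkR hj]
    let p' : Polynomial F := ∑ i ∈ Finset.range (d + 1), C (p.coeff i) * X ^ i
    have hp' : ∀ j, p'.coeff j = if j ≤ d then p.coeff j else 0 := by
      intro j
      simp only [p', finsetSum_coeff, coeff_C_mul_X_pow, Finset.sum_ite_eq, Finset.mem_range,
        Nat.lt_succ_iff]
    have hdeg : p'.natDegree ≤ d := by
      rw [natDegree_le_iff_coeff_eq_zero]
      intro j hj
      rw [hp', if_neg (by omega)]
    have hfc : (reflect d p').coeff d = 1 := by
      rw [coeff_reflect, revAt_le le_rfl, Nat.sub_self, hp', if_pos (Nat.zero_le _),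
        hpc 0 (Nat.zero_le _), gc_zero]
    have hfle : (reflect d p').natDegree ≤ d := by
      rw [natDegree_le_iff_coeff_eq_zero]
      intro j hj
      rw [coeff_reflect, revAt_eq_self_of_lt hj, hp', if_neg (by omega)]
    have hfd : (reflect d p').natDegree = d :=
      le_antisymm hfle (le_natDegree_of_ne_zero (by rw [hfc]; exact one_ne_zero))
    have hfm : (reflect d p').Monic := by
      rw [Monic, leadingCoeff, hfd, hfc]
    refine ⟨reflect d p', ⟨hfm, hfd⟩, ?_⟩
    refine gc_ext fun j hj _ => ?_
    rw [gc_rv hfm hj, reverse, hfd, reflect_reflect, hp']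
    split_ifs with h
    · exact hpc j hj
    · exact (hu j hj (by omega)).symm

lemma coeffSum_psi [Fintype F] (φ : G1 F n →* ℂˣ) {d : ℕ} (hd : d ≤ n) :
    coeffSum F (attachedChar F n (psi φ)) d = AA φ d := by
  unfold coeffSum AA EF
  rw [← finsum_mem_eq_finite_toFinset_sum]
  exact finsum_mem_eq_of_bijOn (rv n) (rv_bij hd) fun f hf => att_psi φ hf.1

lemma Snq_eq (hn : 1 ≤ n) :
    Snq F n = (fun φ : G1 F n →* ℂˣ => attachedChar F n (psi φ)) '' Prim F n hn := by
  ext χ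
  constructor
  · rintro ⟨ψ, hev, ⟨a, ha⟩, rfl⟩
    have hs : ∀ c : Fˣ, ψ.toUnitHom (sH c) = 1 := by
      intro c
      ext
      rw [MulChar.coe_toUnitHom]
      exact hev c c.ne_zero
    let φ : G1 F n →* ℂˣ := ψ.toUnitHom.comp (G1 F n).subtype
    have hψ : psi φ = ψ := by
      refine MulChar.ext fun u => ?_
      unfold psi
      rw [MulChar.ofUnitHom_coe, ← MulChar.coe_toUnitHom]
      congr 1
      change ψ.toUnitHom ((projG u : G1 F n) : (QuotR F n)ˣ) = _
      rw [projG_coe, map_mul, map_inv, hs]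
      simp
    refine ⟨φ, ⟨a, ?_⟩, by simp only [hψ]⟩
    intro h
    apply ha
    rw [← hψ]
    have := psi_of φ (kk hn a)
    rw [h] at this
    exact this
  · rintro ⟨φ, ⟨a, ha⟩, rfl⟩
    refine ⟨psi φ, ?_, ⟨a, ?_⟩, rfl⟩
    · intro c hc
      change psi φ ((sH (Units.mk0 c hc) : (QuotR F n)ˣ) : QuotR F n) = 1
      unfold psi
      rw [MulChar.ofUnitHom_coe, MonoidHom.comp_apply, projG_sH]
      simp
    · have := psi_of φ (kk hn a)
      intro h
      apply ha
      ext
      rw [← this]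
      exact h

lemma XX_inj : Function.Injective (fun φ : G1 F n →* ℂˣ => attachedChar F n (psi φ)) := by
  intro φ φ' h
  ext u
  obtain ⟨f, hf, rfl⟩ := (rv_bij (F := F) (n := n) le_rfl).2.2 (by rw [EE_top]; trivial : u ∈ EE F n n)
  rw [← att_psi φ hf.1, ← att_psi φ' hf.1]
  exact congrFun h f

/-- `q^(-d/2)` -/
def QQ (F : Type) [Fintype F] (d : ℕ) : ℂ :=
  ((((Fintype.card F : ℝ) ^ (-(d : ℝ) / 2) : ℝ)) : ℂ)

lemma QQ_add (F : Type) [Field F] [Fintype F] (a b : ℕ) : QQ F (a + b) = QQ F a * QQ F b := by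
  have hq : (0 : ℝ) < Fintype.card F := by exact_mod_cast Fintype.card_pos
  unfold QQ
  rw [← Complex.ofReal_mul, ← Real.rpow_add hq]
  congr 2
  push_cast; ring

lemma QQ_ne (F : Type) [Field F] [Fintype F] (a : ℕ) : QQ F a ≠ 0 := by
  have hq : (0 : ℝ) < Fintype.card F := by exact_mod_cast Fintype.card_pos
  unfold QQ
  exact_mod_cast (Real.rpow_pos_of_pos hq _).ne'

lemma QQ_sq (F : Type) [Field F] [Fintype F] (a : ℕ) :
    QQ F a * QQ F a * (Fintype.card F : ℂ) ^ a = 1 := by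
  have hq : (0 : ℝ) < Fintype.card F := by exact_mod_cast Fintype.card_pos
  rw [← QQ_add]
  unfold QQ
  have : (Fintype.card F : ℝ) ^ (-((a + a : ℕ) : ℝ) / 2) * (Fintype.card F : ℝ) ^ a = 1 := by
    rw [← Real.rpow_natCast, ← Real.rpow_add hq]
    push_cast
    rw [show -((a : ℝ) + a) / 2 + a = 0 by ring, Real.rpow_zero]
  exact_mod_cast congrArg (fun x : ℝ => (x : ℂ)) this

lemma QQ_sum (F : Type) [Field F] [Fintype F] {ι : Type*} (s : Finset ι) (e : ι → ℕ) :
    QQ F (∑ i ∈ s, e i) = ∏ i ∈ s, QQ F (e i) := by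
  classical
  induction s using Finset.induction_on with
  | empty => simp [QQ]
  | insert i s hi ih => rw [Finset.prod_insert hi, Finset.sum_insert hi, QQ_add, ih]

lemma lam_psi [Fintype F] (φ : G1 F n →* ℂˣ) {d : ℕ} (hd : d ≤ n) :
    lam F (attachedChar F n (psi φ)) d = QQ F d * AA φ d := by
  unfold lam
  rw [coeffSum_psi φ hd, QQ]

lemma lam_dual [Fintype F] (hn : 1 ≤ n) (φ : G1 F n →* ℂˣ) (hφ : φ ∈ Prim F n hn) {d : ℕ}
    (hd : d ≤ n - 1) : lam F (attachedChar F n (psi φ)) d =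
      epsFactor F n (attachedChar F n (psi φ)) * (QQ F (n - 1 - d) * BB φ (n - 1 - d)) := by
  have h := feq hn φ hφ (e := n - 1 - d) (by omega)
  rw [show n - 1 - (n - 1 - d) = d by omega] at h
  unfold epsFactor
  rw [lam_psi φ (by omega), lam_psi φ (by omega)]
  have h1 : QQ F (n - 1) = QQ F (n - 1 - d) * QQ F d := by
    rw [← QQ_add]; congr 1; omega
  have h2 := QQ_sq F (n - 1 - d)
  calc QQ F d * AA φ d = QQ F d * AA φ d *
        (QQ F (n - 1 - d) * QQ F (n - 1 - d) * (Fintype.card F : ℂ) ^ (n - 1 - d)) := by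
        rw [h2, mul_one]
    _ = QQ F d * QQ F (n - 1 - d) * QQ F (n - 1 - d) *
        ((Fintype.card F : ℂ) ^ (n - 1 - d) * AA φ d) := by ring
    _ = _ := by rw [← h, h1]; ring

lemma eps_ne [Fintype F] (hn : 1 ≤ n) (φ : G1 F n →* ℂˣ) (hφ : φ ∈ Prim F n hn) :
    epsFactor F n (attachedChar F n (psi φ)) ≠ 0 := by
  have h := lam_dual hn φ hφ (d := 0) (Nat.zero_le _)
  rw [lam_psi φ (Nat.zero_le _), AA_zero, mul_one] at h
  intro h0
  rw [h0, zero_mul] at h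
  exact QQ_ne F 0 h

lemma term_eq [Fintype F] (hn : 1 ≤ n) (φ : G1 F n →* ℂˣ) (hφ : φ ∈ Prim F n hn)
    (r rt : ℕ) (S : Finset (Fin (r + rt))) (d : Fin (r + rt) → ℕ) (hd : ∀ i, d i ≤ n - 1) :
    epsFactor F n (attachedChar F n (psi φ)) ^ (-(rt : ℤ)) *
      ∏ i, lam F (attachedChar F n (psi φ)) (d i) =
    epsFactor F n (attachedChar F n (psi φ)) ^ ((r : ℤ) - (S.card : ℤ)) *
      QQ F ((∑ i ∈ S, d i) + ∑ i ∈ Sᶜ, (n - 1 - d i)) *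
      ((∏ i ∈ S, AA φ (d i)) * ∏ i ∈ Sᶜ, BB φ (n - 1 - d i)) := by
  have hε := eps_ne hn φ hφ
  set ε := epsFactor F n (attachedChar F n (psi φ)) with hεd
  rw [← Finset.prod_mul_prod_compl S, Finset.prod_congr rfl (fun i _ =>
    lam_psi φ (d := d i) (by have := hd i; omega)), Finset.prod_congr (s₁ := Sᶜ) rfl (fun i _ =>
    lam_dual hn φ hφ (hd i)), ← hεd, Finset.prod_mul_distrib, Finset.prod_mul_distrib,
    Finset.prod_mul_distrib, Finset.prod_const, QQ_add, QQ_sum, QQ_sum]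
  have hc : ε ^ ((r : ℤ) - (S.card : ℤ)) = ε ^ (-(rt : ℤ)) * ε ^ (Sᶜ.card) := by
    rw [← zpow_natCast, ← zpow_add₀ hε]
    congr 1
    have := Finset.card_add_card_compl S
    rw [Fintype.card_fin] at this
    omega
  rw [hc]
  ring

lemma expand [Fintype F] (φ : G1 F n →* ℂˣ) {k : ℕ} (S : Finset (Fin k)) (d e : Fin k → ℕ) :
    ((∏ i ∈ S, AA φ (d i)) * ∏ i ∈ Sᶜ, BB φ (e i)) =
    ∑ u ∈ Fintype.piFinset (fun i => EF F n (if i ∈ S then d i else e i)),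
      ((φ (∏ i ∈ S, u i) : ℂˣ) : ℂ) * ((φ (∏ i ∈ Sᶜ, u i) : ℂˣ) : ℂ)⁻¹ := by
  have h := Finset.prod_univ_sum (fun i => EF F n (if i ∈ S then d i else e i))
    (fun i u => if i ∈ S then ((φ u : ℂˣ) : ℂ) else ((φ u : ℂˣ) : ℂ)⁻¹)
  have hR : ∀ u : Fin k → G1 F n,
      ((φ (∏ i ∈ S, u i) : ℂˣ) : ℂ) * ((φ (∏ i ∈ Sᶜ, u i) : ℂˣ) : ℂ)⁻¹ =
      ∏ i, if i ∈ S then ((φ (u i) : ℂˣ) : ℂ) else ((φ (u i) : ℂˣ) : ℂ)⁻¹ := by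
    intro u
    rw [← Finset.prod_mul_prod_compl S, map_prod, map_prod, Units.coe_prod, Units.coe_prod,
      ← Finset.prod_inv_distrib]
    congr 1
    · exact Finset.prod_congr rfl fun i hi => by rw [if_pos hi]
    · exact Finset.prod_congr rfl fun i hi => by rw [if_neg (Finset.mem_compl.1 hi)]
  simp only [hR]
  rw [← h, ← Finset.prod_mul_prod_compl S]
  congr 1
  · exact Finset.prod_congr rfl fun i hi => by simp only [if_pos hi, AA]
  · exact Finset.prod_congr rfl fun i hi => by simp only [if_neg (Finset.mem_compl.1 hi), BB]

open Classical in
lemma count_eq [Fintype F] {k : ℕ} (S : Finset (Fin k)) (d e : Fin k → ℕ)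
    (hS : ∑ i ∈ S, d i ≤ n) (hSc : ∑ i ∈ Sᶜ, e i ≤ n) :
    Set.ncard {f : Fin k → Polynomial F |
            (∀ i, (f i).Monic) ∧ (∀ i ∈ S, (f i).natDegree = d i) ∧
            (∀ i ∉ S, (f i).natDegree = e i) ∧
            ∃ a b : ℕ, Polynomial.X ^ a * ∏ i ∈ S, f i =
              Polynomial.X ^ b * ∏ i ∈ Sᶜ, f i} =
    ((Fintype.piFinset (fun i => EF F n (if i ∈ S then d i else e i))).filter
      fun u => ∏ i ∈ S, u i = ∏ i ∈ Sᶜ, u i).card := by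
  set g : Fin k → ℕ := fun i => if i ∈ S then d i else e i with hg
  have hgn : ∀ i, g i ≤ n := by
    intro i
    by_cases hi : i ∈ S
    · simp only [hg, if_pos hi]
      exact (Finset.single_le_sum (fun _ _ => Nat.zero_le _) hi).trans hS
    · simp only [hg, if_neg hi]
      exact (Finset.single_le_sum (fun _ _ => Nat.zero_le _) (Finset.mem_compl.2 hi)).trans hSc
  have hset : {f : Fin k → Polynomial F |
            (∀ i, (f i).Monic) ∧ (∀ i ∈ S, (f i).natDegree = d i) ∧
            (∀ i ∉ S, (f i).natDegree = e i) ∧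
            ∃ a b : ℕ, Polynomial.X ^ a * ∏ i ∈ S, f i =
              Polynomial.X ^ b * ∏ i ∈ Sᶜ, f i} =
      {f : Fin k → Polynomial F | (∀ i, (f i).Monic ∧ (f i).natDegree = g i) ∧
        ∏ i ∈ S, rv n (f i) = ∏ i ∈ Sᶜ, rv n (f i)} := by
    ext f
    constructor
    · rintro ⟨hm, h1, h2, h3⟩
      refine ⟨fun i => ⟨hm i, ?_⟩, ?_⟩
      · by_cases hi : i ∈ S
        · simp only [hg, if_pos hi]; exact h1 i hi
        · simp only [hg, if_neg hi]; exact h2 i hi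
      · rw [← rv_prod _ _ hm, ← rv_prod _ _ hm]
        refine (rv_eq_iff (monic_prod_of_monic _ _ fun i _ => hm i)
          (monic_prod_of_monic _ _ fun i _ => hm i) ?_ ?_).2 h3
        · rw [natDegree_prod_of_monic _ _ fun i _ => hm i, Finset.sum_congr rfl h1]; exact hS
        · rw [natDegree_prod_of_monic _ _ fun i _ => hm i,
            Finset.sum_congr rfl fun i hi => h2 i (Finset.mem_compl.1 hi)]; exact hSc
    · rintro ⟨h0, h3⟩
      have hm := fun i => (h0 i).1
      have h1 : ∀ i ∈ S, (f i).natDegree = d i := fun i hi => by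
        rw [(h0 i).2]; simp only [hg, if_pos hi]
      have h2 : ∀ i ∉ S, (f i).natDegree = e i := fun i hi => by
        rw [(h0 i).2]; simp only [hg, if_neg hi]
      refine ⟨hm, h1, h2, ?_⟩
      rw [← rv_prod _ _ hm, ← rv_prod _ _ hm] at h3
      refine (rv_eq_iff (monic_prod_of_monic _ _ fun i _ => hm i)
          (monic_prod_of_monic _ _ fun i _ => hm i) ?_ ?_).1 h3
      · rw [natDegree_prod_of_monic _ _ fun i _ => hm i, Finset.sum_congr rfl h1]; exact hS
      · rw [natDegree_prod_of_monic _ _ fun i _ => hm i,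
            Finset.sum_congr rfl fun i hi => h2 i (Finset.mem_compl.1 hi)]; exact hSc
  rw [hset, ← Set.ncard_coe_finset, ← Set.InjOn.ncard_image (f := fun f i => rv n (f i))]
  · congr 1
    ext u
    simp only [Set.mem_image, Finset.coe_filter, Fintype.mem_piFinset, mem_EF]
    constructor
    · rintro ⟨f, ⟨h0, h1⟩, rfl⟩
      exact ⟨fun i => (rv_bij (hgn i)).1 (h0 i), h1⟩
    · rintro ⟨h0, h1⟩
      choose f hf hfu using fun i => (rv_bij (hgn i)).2.2 (h0 i)
      refine ⟨f, ⟨hf, ?_⟩, funext hfu⟩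
      simp only [hfu]
      exact h1
  · rintro f ⟨hf, _⟩ f' ⟨hf', _⟩ h
    funext i
    exact (rv_bij (hgn i)).2.1 (hf i) (hf' i) (congrFun h i)

end Aux

/-- exact evaluation of the twisted moment of coefficients
`∑_{χ ∈ S_{n,q}} ε_χ^{-r̃} ∏_i λ_{d_i}(χ)` in the range where orthogonality applies. -/
theorem statement12 (p : ℕ) (hp : p.Prime) (F : Type) [Field F] [Fintype F] (hchar : CharP F p)
    (n : ℕ) (hn : 1 ≤ n) (r rt : ℕ) (hk : 1 ≤ r + rt) (S : Finset (Fin (r + rt)))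
    (ν : ℂ) (hν : ∀ χ ∈ Snq F n, epsFactor F n χ ^ ((r : ℤ) - (S.card : ℤ)) = ν)
    (d : Fin (r + rt) → ℕ) (hd : ∀ i, d i ≤ n - 1)
    (hdS : ∑ i ∈ S, d i ≤ n - 1) (hdSc : ∑ i ∈ Sᶜ, (n - 1 - d i) ≤ n - 1) :
    (∑ᶠ χ ∈ Snq F n, epsFactor F n χ ^ (-(rt : ℤ)) * ∏ i, lam F χ (d i)) =
      ν * ((Fintype.card F : ℂ) ^ n - (Fintype.card F : ℂ) ^ (n - 1)) *
        ((((Fintype.card F : ℝ) ^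
            (-(((∑ i ∈ S, d i) + ∑ i ∈ Sᶜ, (n - 1 - d i) : ℕ) : ℝ) / 2) : ℝ)) : ℂ) *
        (Set.ncard {f : Fin (r + rt) → Polynomial F |
            (∀ i, (f i).Monic) ∧ (∀ i ∈ S, (f i).natDegree = d i) ∧
            (∀ i ∉ S, (f i).natDegree = n - 1 - d i) ∧
            ∃ a b : ℕ, Polynomial.X ^ a * ∏ i ∈ S, f i =
              Polynomial.X ^ b * ∏ i ∈ Sᶜ, f i} : ℂ) := by
  classical
  rw [count_eq (n := n) S d (fun i => n - 1 - d i) (by omega) (by omega), Snq_eq hn,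
    finsum_mem_image XX_inj.injOn]
  have hterm : ∀ φ ∈ Prim F n hn, epsFactor F n (attachedChar F n (psi φ)) ^ (-(rt : ℤ)) *
      ∏ i, lam F (attachedChar F n (psi φ)) (d i) =
      ν * QQ F ((∑ i ∈ S, d i) + ∑ i ∈ Sᶜ, (n - 1 - d i)) *
      ∑ u ∈ Fintype.piFinset (fun i => EF F n (if i ∈ S then d i else n - 1 - d i)),
        ((φ (∏ i ∈ S, u i) : ℂˣ) : ℂ) * ((φ (∏ i ∈ Sᶜ, u i) : ℂˣ) : ℂ)⁻¹ := by
    intro φ hφ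
    rw [term_eq hn φ hφ r rt S d hd, hν _ (by rw [Snq_eq hn]; exact ⟨φ, hφ, rfl⟩),
      expand φ S d (fun i => n - 1 - d i)]
  rw [finsum_mem_congr rfl hterm, ← mul_finsum_mem,
    finsum_mem_eq_finite_toFinset_sum _ (Set.toFinite _), Finset.sum_comm]
  have horth : ∀ u ∈ Fintype.piFinset (fun i => EF F n (if i ∈ S then d i else n - 1 - d i)),
      ∑ φ ∈ (Set.toFinite (Prim F n hn)).toFinset,
        ((φ (∏ i ∈ S, u i) : ℂˣ) : ℂ) * ((φ (∏ i ∈ Sᶜ, u i) : ℂˣ) : ℂ)⁻¹ =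
      if ∏ i ∈ S, u i = ∏ i ∈ Sᶜ, u i then
        (Fintype.card F : ℂ) ^ n - (Fintype.card F : ℂ) ^ (n - 1) else 0 := by
    intro u hu
    rw [← finsum_mem_eq_finite_toFinset_sum]
    have hu' : ∀ i, u i ∈ EE F n (if i ∈ S then d i else n - 1 - d i) := fun i =>
      mem_EF.1 (Fintype.mem_piFinset.1 hu i)
    refine prim_sum hn (EE_mono hdS (EE_prod S d u fun i hi => ?_))
      (EE_mono hdSc (EE_prod Sᶜ (fun i => n - 1 - d i) u fun i hi => ?_))
    · have := hu' i; rwa [if_pos hi] at this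
    · have := hu' i; rwa [if_neg (Finset.mem_compl.1 hi)] at this
  rw [Finset.sum_congr rfl horth, ← Finset.sum_filter, Finset.sum_const, nsmul_eq_mul]
  unfold QQ
  ring

end
end

section
/- Let q ≥ 2 be a prime power and let α_1, α_2, α_3, α_4 ∈ ℂ with Re α_1 > 1/2, Re α_2 > 1/2, Re α_3 < −1/2, and Re α_4 < −1/2. Then the series Σ q^{−(1/2+α_1)deg f_1 − (1/2+α_2)deg f_2 − (1/2−α_3)deg f_3 − (1/2−α_4)deg f_4}, taken over all quadruples (f_1, f_2, f_3, f_4) of monic polynomials in F_q[T] such that T^a f_1 f_2 = T^b f_3 f_4 for some natural numbers a, b, converges absolutely, and its sum equals [ (1 − q^{−1−α_1−α_2+α_3+α_4}) / (1 − q^{−2−α_1−α_2+α_3+α_4}) ] · [ (1−q^{−1/2−α_1})(1−q^{−1/2−α_2})(1−q^{−1/2+α_3})(1−q^{−1/2+α_4}) ]^{−1} · ∏_{i ∈ {1,2}, j ∈ {3,4}} (1 − q^{−1−α_i+α_j}) / (1 − q^{−α_i+α_j}). -/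
open Polynomial

noncomputable section

/-- The set of quadruples of monic polynomials with `f₁ f₂ / f₃ f₄ ∈ T^ℤ`,
i.e. `T^a f₁ f₂ = T^b f₃ f₄` for some naturals `a, b`. -/
def QuadSet (F : Type) [Field F] : Set (Fin 4 → Polynomial F) :=
  {f | (∀ i, (f i).Monic) ∧
    ∃ a b : ℕ, Polynomial.X ^ a * (f 0 * f 1) = Polynomial.X ^ b * (f 2 * f 3)}

/-- The summand `q^{-(1/2+α₁)deg f₁ - (1/2+α₂)deg f₂ - (1/2-α₃)deg f₃ - (1/2-α₄)deg f₄}`. -/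
def quadTerm (F : Type) [Field F] [Fintype F] (α : Fin 4 → ℂ)
    (f : Fin 4 → Polynomial F) : ℂ :=
  (Fintype.card F : ℂ) ^
    (-(1 / 2 + α 0) * ((f 0).natDegree : ℂ) - (1 / 2 + α 1) * ((f 1).natDegree : ℂ)
      - (1 / 2 - α 2) * ((f 2).natDegree : ℂ) - (1 / 2 - α 3) * ((f 3).natDegree : ℂ))



abbrev MX (F : Type) [Field F] := {f : F[X] // f.Monic ∧ ¬ X ∣ f}
abbrev CopX (F : Type) [Field F] := {p : MX F × MX F // IsCoprime p.1.1 p.2.1}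

lemma hasSum_monic (F : Type) [Field F] [Fintype F] (u : ℂ) (hu : Fintype.card F * ‖u‖ < 1) :
    Summable (fun f : {f : F[X] // f.Monic} => ‖u ^ f.1.natDegree‖) ∧
    ∑' f : {f : F[X] // f.Monic}, u ^ f.1.natDegree = (1 - Fintype.card F * u)⁻¹ := by
  let e0 : ∀ n : ℕ, {f : {f : F[X] // f.Monic} // f.1.natDegree = n} ≃ (Fin n → F) := fun n =>
    (Equiv.subtypeSubtypeEquivSubtypeInter (fun f : F[X] => f.Monic) (fun f => f.natDegree = n)).trans
      ((monicEquivDegreeLT n).trans (degreeLTEquiv F n).toEquiv)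
  have hfin : ∀ n : ℕ, Finite {f : {f : F[X] // f.Monic} // f.1.natDegree = n} :=
    fun n => Finite.of_equiv _ (e0 n).symm
  have hcard : ∀ n : ℕ, Nat.card {f : {f : F[X] // f.Monic} // f.1.natDegree = n}
      = Fintype.card F ^ n := fun n => by
    rw [Nat.card_congr (e0 n)]; simp
  let e := Equiv.sigmaFiberEquiv (fun f : {f : F[X] // f.Monic} => f.1.natDegree)
  have hdeg : ∀ p, (e p).1.natDegree = p.1 := fun p => p.2.2
  have key : Summable (fun p => ‖u ^ (e p).1.natDegree‖) := by
    simp only [hdeg]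
    rw [summable_sigma_of_nonneg (fun _ => norm_nonneg _)]
    refine ⟨fun n => Summable.of_finite, ?_⟩
    simp only [tsum_const, hcard, norm_pow, nsmul_eq_mul, Nat.cast_pow, ← mul_pow]
    exact summable_geometric_of_lt_one (by positivity) hu
  refine ⟨(e.summable_iff (f := fun f : {f : F[X] // f.Monic} => ‖u ^ f.1.natDegree‖)).1 key, ?_⟩
  rw [← e.tsum_eq]
  have k2 := key.of_norm
  rw [k2.tsum_sigma]
  simp only [hdeg]
  simp only [tsum_const, hcard, nsmul_eq_mul, Nat.cast_pow, ← mul_pow]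
  exact tsum_geometric_of_norm_lt_one (by simpa using hu)

lemma not_X_dvd_mul {F : Type} [Field F] {f g : F[X]} (hf : ¬ X ∣ f) (hg : ¬ X ∣ g) :
    ¬ X ∣ f * g := fun h => (prime_X.dvd_or_dvd h).elim hf hg

lemma X_pow_inj {F : Type} [Field F] {f g : F[X]} (hf : ¬ X ∣ f) (hg : ¬ X ∣ g) {a b : ℕ}
    (h : X ^ a * f = X ^ b * g) : a = b ∧ f = g := by
  have hX : (X : F[X]) ≠ 0 := X_ne_zero
  rcases lt_trichotomy a b with hab | hab | hab
  · exfalso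
    obtain ⟨k, rfl⟩ := Nat.exists_eq_add_of_lt hab
    rw [add_assoc, pow_add, mul_assoc] at h
    have := mul_left_cancel₀ (pow_ne_zero a hX) h
    exact hf (this ▸ Dvd.dvd.mul_right (dvd_pow_self _ (by omega)) _)
  · subst hab
    exact ⟨rfl, mul_left_cancel₀ (pow_ne_zero a hX) h⟩
  · exfalso
    obtain ⟨k, rfl⟩ := Nat.exists_eq_add_of_lt hab
    rw [add_assoc, pow_add, mul_assoc] at h
    have := mul_left_cancel₀ (pow_ne_zero b hX) h
    exact hg (this ▸ Dvd.dvd.mul_right (dvd_pow_self _ (by omega)) _)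

lemma exists_X_pow {F : Type} [Field F] {f : F[X]} (hf : f.Monic) :
    ∃ (n : ℕ) (g : MX F), f = X ^ n * g.1 := by
  obtain ⟨n, c, hc, h⟩ := (FiniteMultiplicity.of_prime_left prime_X hf.ne_zero).exists_eq_pow_mul_and_not_dvd |> fun ⟨c, h, h'⟩ => 
    (⟨_, c, h', h⟩ : ∃ (n : ℕ) (c : F[X]), ¬ X ∣ c ∧ f = X ^ n * c)
  exact ⟨n, ⟨c, (monic_X_pow n).of_mul_monic_left (h ▸ hf), hc⟩, h⟩

lemma exists_gcd {F : Type} [Field F] (f g : MX F) :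
    ∃ (d : MX F) (p : CopX F), f.1 = d.1 * p.1.1.1 ∧ g.1 = d.1 * p.1.2.1 := by
  obtain ⟨d, a, b, hd, hc, h1, h2⟩ : ∃ d a b : F[X], d.Monic ∧ IsCoprime a b ∧ f.1 = d * a ∧
      g.1 = d * b := by
    classical
    have hg0 := g.2.1.ne_zero
    set e := EuclideanDomain.gcd f.1 g.1 with he
    have he0 : e ≠ 0 := fun h => hg0 (EuclideanDomain.gcd_eq_zero_iff.1 h).2
    have hl : e.leadingCoeff ≠ 0 := leadingCoeff_ne_zero.2 he0
    obtain ⟨a, ha⟩ := EuclideanDomain.gcd_dvd_left f.1 g.1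
    obtain ⟨b, hb⟩ := EuclideanDomain.gcd_dvd_right f.1 g.1
    have hu : C e.leadingCoeff⁻¹ * C e.leadingCoeff = 1 := by
      rw [← C_mul, inv_mul_cancel₀ hl, C_1]
    have hab : IsCoprime a b := by
      have := EuclideanDomain.gcd_eq_gcd_ab f.1 g.1
      refine ⟨EuclideanDomain.gcdA f.1 g.1, EuclideanDomain.gcdB f.1 g.1, ?_⟩
      apply mul_left_cancel₀ he0
      rw [← he] at this ha hb
      calc _ = (e * a) * EuclideanDomain.gcdA f.1 g.1 + (e * b) * EuclideanDomain.gcdB f.1 g.1 := by ring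
        _ = e := by rw [← ha, ← hb]; exact this.symm
        _ = _ := by ring
    have hUl : IsUnit (C e.leadingCoeff) := isUnit_C.2 (isUnit_iff_ne_zero.2 hl)
    refine ⟨e * C e.leadingCoeff⁻¹, C e.leadingCoeff * a, C e.leadingCoeff * b,
      monic_mul_leadingCoeff_inv he0, ?_, ?_, ?_⟩
    · rw [isCoprime_mul_unit_left_left hUl, isCoprime_mul_unit_left_right hUl]; exact hab
    · rw [← he] at ha; linear_combination ha - e * a * hu
    · rw [← he] at hb; linear_combination hb - e * b * hu
  have hf := f.2; have hg := g.2
  rw [h1] at hf; rw [h2] at hg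
  exact ⟨⟨d, hd, fun h => hf.2 (h.mul_right _)⟩, ⟨(⟨a, hd.of_mul_monic_left hf.1, fun h => hf.2 (h.mul_left _)⟩,
    ⟨b, hd.of_mul_monic_left hg.1, fun h => hg.2 (h.mul_left _)⟩), hc⟩, h1, h2⟩

lemma gcd_unique {F : Type} [Field F] {d d' : MX F} {p p' : CopX F}
    (h1 : d.1 * p.1.1.1 = d'.1 * p'.1.1.1) (h2 : d.1 * p.1.2.1 = d'.1 * p'.1.2.1) :
    d = d' ∧ p = p' := by
  have aux : ∀ {d d' : MX F} {p p' : CopX F}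
    (h1 : d.1 * p.1.1.1 = d'.1 * p'.1.1.1) (h2 : d.1 * p.1.2.1 = d'.1 * p'.1.2.1), d'.1 ∣ d.1 := by
    intro d d' p p' h1 h2
    obtain ⟨u, v, h⟩ := p.2
    exact ⟨u * p'.1.1.1 + v * p'.1.2.1, by linear_combination u * h1 + v * h2 - d.1 * h⟩
  have hd : d.1 = d'.1 := eq_of_monic_of_associated d.2.1 d'.2.1
    (associated_of_dvd_dvd (aux h1.symm h2.symm) (aux h1 h2))
  have h0 := d'.2.1.ne_zero
  rw [hd] at h1 h2
  exact ⟨Subtype.ext hd, Subtype.ext (Prod.ext (Subtype.ext (mul_left_cancel₀ h0 h1))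
    (Subtype.ext (mul_left_cancel₀ h0 h2)))⟩

def monicMap (F : Type) [Field F] (x : ℕ × MX F) : {f : F[X] // f.Monic} :=
  ⟨X ^ x.1 * x.2.1, (monic_X_pow _).mul x.2.2.1⟩

lemma monicMap_bij (F : Type) [Field F] : Function.Bijective (monicMap F) := by
  constructor
  · intro x y h
    have := X_pow_inj x.2.2.2 y.2.2.2 (congrArg Subtype.val h)
    exact Prod.ext this.1 (Subtype.ext this.2)
  · rintro ⟨f, hf⟩
    obtain ⟨n, g, h⟩ := exists_X_pow hf
    exact ⟨(n, g), Subtype.ext h.symm⟩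

def pairMap (F : Type) [Field F] (x : MX F × CopX F) : MX F × MX F :=
  (⟨x.1.1 * x.2.1.1.1, x.1.2.1.mul x.2.1.1.2.1, not_X_dvd_mul x.1.2.2 x.2.1.1.2.2⟩,
   ⟨x.1.1 * x.2.1.2.1, x.1.2.1.mul x.2.1.2.2.1, not_X_dvd_mul x.1.2.2 x.2.1.2.2.2⟩)

lemma pairMap_bij (F : Type) [Field F] : Function.Bijective (pairMap F) := by
  constructor
  · intro x y h
    have h1 := congrArg (fun z => z.1.1) h
    have h2 := congrArg (fun z => z.2.1) h
    have := gcd_unique (d := x.1) (d' := y.1) (p := x.2) (p' := y.2) h1 h2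
    exact Prod.ext this.1 this.2
  · rintro ⟨f, g⟩
    obtain ⟨d, p, h1, h2⟩ := exists_gcd f g
    exact ⟨(d, p), Prod.ext (Subtype.ext h1.symm) (Subtype.ext h2.symm)⟩

lemma hasSum_MX (F : Type) [Field F] [Fintype F] (u : ℂ) (hu : Fintype.card F * ‖u‖ < 1) :
    Summable (fun f : MX F => ‖u ^ f.1.natDegree‖) ∧
    ∑' f : MX F, u ^ f.1.natDegree = (1 - u) * (1 - Fintype.card F * u)⁻¹ := by
  obtain ⟨hs, ht⟩ := hasSum_monic F u hu
  have hu1 : ‖u‖ < 1 := by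
    have : (1 : ℝ) ≤ Fintype.card F := by exact_mod_cast Fintype.card_pos
    nlinarith [norm_nonneg u]
  have hs' : Summable (fun f : MX F => ‖u ^ f.1.natDegree‖) :=
    hs.comp_injective (i := fun f : MX F => (⟨f.1, f.2.1⟩ : {f : F[X] // f.Monic}))
      (fun a b h => Subtype.ext (congrArg (fun z : {f : F[X] // f.Monic} => z.1) h))
  refine ⟨hs', ?_⟩
  rw [← ht, ← (Equiv.ofBijective _ (monicMap_bij F)).tsum_eq]
  have hdeg : ∀ x : ℕ × MX F, (Equiv.ofBijective _ (monicMap_bij F) x).1.natDegree = x.1 + x.2.1.natDegree := by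
    intro x
    change (X ^ x.1 * x.2.1).natDegree = _
    rw [(monic_X_pow _).natDegree_mul x.2.2.1, natDegree_X_pow]
  simp only [hdeg, pow_add]
  have hg : Summable (fun n : ℕ => ‖u ^ n‖) := by
    simpa using summable_geometric_of_lt_one (norm_nonneg u) hu1
  rw [← tsum_mul_tsum_of_summable_norm hg hs', tsum_geometric_of_norm_lt_one hu1, ← mul_assoc,
    mul_inv_cancel₀, one_mul]
  intro h
  have : u = 1 := by linear_combination -h
  rw [this] at hu1; simp at hu1

lemma hasSum_CopX (F : Type) [Field F] [Fintype F] (u v : ℂ) (hu : Fintype.card F * ‖u‖ < 1)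
    (hv : Fintype.card F * ‖v‖ < 1) :
    Summable (fun p : CopX F => ‖u ^ p.1.1.1.natDegree * v ^ p.1.2.1.natDegree‖) ∧
    ∑' p : CopX F, u ^ p.1.1.1.natDegree * v ^ p.1.2.1.natDegree =
      (1 - u) * (1 - Fintype.card F * u)⁻¹ * ((1 - v) * (1 - Fintype.card F * v)⁻¹) *
       ((1 - u * v)⁻¹ * (1 - Fintype.card F * (u * v))) := by
  have hq : (1 : ℝ) ≤ Fintype.card F := by exact_mod_cast Fintype.card_pos
  have hv1 : ‖v‖ < 1 := by nlinarith [norm_nonneg v]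
  have huv : Fintype.card F * ‖u * v‖ < 1 := by
    rw [norm_mul, ← mul_assoc]
    have := mul_nonneg (zero_le_one.trans hq) (norm_nonneg u)
    nlinarith [norm_nonneg v]
  have huv1 : ‖u * v‖ < 1 := by nlinarith [norm_nonneg (u * v)]
  obtain ⟨su, tu⟩ := hasSum_MX F u hu
  obtain ⟨sv, tv⟩ := hasSum_MX F v hv
  obtain ⟨sw, tw⟩ := hasSum_MX F (u * v) huv
  have sp := su.mul_norm sv
  have sc : Summable (fun p : CopX F => ‖u ^ p.1.1.1.natDegree * v ^ p.1.2.1.natDegree‖) :=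
    sp.comp_injective (i := fun p : CopX F => p.1) Subtype.val_injective
  refine ⟨sc, ?_⟩
  have main := tsum_mul_tsum_of_summable_norm su sv
  rw [← (Equiv.ofBijective _ (pairMap_bij F)).tsum_eq] at main
  have hdeg : ∀ x : MX F × CopX F,
      u ^ (Equiv.ofBijective _ (pairMap_bij F) x).1.1.natDegree *
      v ^ (Equiv.ofBijective _ (pairMap_bij F) x).2.1.natDegree =
      (u * v) ^ x.1.1.natDegree * (u ^ x.2.1.1.1.natDegree * v ^ x.2.1.2.1.natDegree) := by
    intro x
    change u ^ (x.1.1 * x.2.1.1.1).natDegree * v ^ (x.1.1 * x.2.1.2.1).natDegree = _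
    rw [x.1.2.1.natDegree_mul x.2.1.1.2.1, x.1.2.1.natDegree_mul x.2.1.2.2.1]
    ring
  simp only [hdeg] at main
  rw [← tsum_mul_tsum_of_summable_norm sw sc, tu, tv, tw] at main
  have n1 : (1 - u * v) ≠ 0 := fun h => by
    have : u * v = 1 := by linear_combination -h
    rw [this] at huv1; simp at huv1
  have n2 : (1 - Fintype.card F * (u * v)) ≠ 0 := fun h => by
    have h3 : Fintype.card F * (u * v) = 1 := by linear_combination -h
    have := congrArg norm h3
    rw [norm_mul, Complex.norm_natCast, norm_one] at this
    linarith
  rw [main]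
  generalize (∑' p : CopX F, u ^ p.1.1.1.natDegree * v ^ p.1.2.1.natDegree) = S
  calc S = ((1 - u * v) * (1 - u * v)⁻¹) *
        ((1 - Fintype.card F * (u * v)) * (1 - Fintype.card F * (u * v))⁻¹) * S := by
        rw [mul_inv_cancel₀ n1, mul_inv_cancel₀ n2]; ring
    _ = _ := by ring

abbrev Par (F : Type) [Field F] := (((ℕ × ℕ) × (ℕ × ℕ)) × (MX F × MX F)) × CopX F

def quadFun (F : Type) [Field F] (x : Par F) : Fin 4 → F[X] :=
  ![X ^ x.1.1.1.1 * (x.1.2.1.1 * x.2.1.1.1), X ^ x.1.1.1.2 * (x.1.2.2.1 * x.2.1.2.1),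
    X ^ x.1.1.2.1 * (x.1.2.1.1 * x.2.1.2.1), X ^ x.1.1.2.2 * (x.1.2.2.1 * x.2.1.1.1)]

lemma quadFun_mem (F : Type) [Field F] (x : Par F) : quadFun F x ∈ QuadSet F := by
  obtain ⟨⟨⟨⟨e0, e1⟩, ⟨e2, e3⟩⟩, ⟨g, h⟩⟩, ⟨⟨a, b⟩, hab⟩⟩ := x
  refine ⟨?_, e2 + e3, e0 + e1, ?_⟩
  · intro i
    fin_cases i
    · exact (monic_X_pow _).mul (g.2.1.mul a.2.1)
    · exact (monic_X_pow _).mul (h.2.1.mul b.2.1)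
    · exact (monic_X_pow _).mul (g.2.1.mul b.2.1)
    · exact (monic_X_pow _).mul (h.2.1.mul a.2.1)
  · change X ^ (e2 + e3) * ((X ^ e0 * (g.1 * a.1)) * (X ^ e1 * (h.1 * b.1))) =
      X ^ (e0 + e1) * ((X ^ e2 * (g.1 * b.1)) * (X ^ e3 * (h.1 * a.1)))
    ring

def quadMap (F : Type) [Field F] (x : Par F) : QuadSet F := ⟨quadFun F x, quadFun_mem F x⟩

lemma quadMap_bij (F : Type) [Field F] : Function.Bijective (quadMap F) := by
  constructor
  · rintro ⟨⟨⟨⟨e0, e1⟩, ⟨e2, e3⟩⟩, ⟨g, h⟩⟩, p⟩ ⟨⟨⟨⟨e0', e1'⟩, ⟨e2', e3'⟩⟩, ⟨g', h'⟩⟩, p'⟩ H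
    have H' := congrArg Subtype.val H
    have k0 : X ^ e0 * (g.1 * p.1.1.1) = X ^ e0' * (g'.1 * p'.1.1.1) := congrFun H' 0
    have k1 : X ^ e1 * (h.1 * p.1.2.1) = X ^ e1' * (h'.1 * p'.1.2.1) := congrFun H' 1
    have k2 : X ^ e2 * (g.1 * p.1.2.1) = X ^ e2' * (g'.1 * p'.1.2.1) := congrFun H' 2
    have k3 : X ^ e3 * (h.1 * p.1.1.1) = X ^ e3' * (h'.1 * p'.1.1.1) := congrFun H' 3
    have nd := fun (g a : MX F) => not_X_dvd_mul g.2.2 a.2.2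
    obtain ⟨rfl, m0⟩ := X_pow_inj (nd _ _) (nd _ _) k0
    obtain ⟨rfl, m1⟩ := X_pow_inj (nd _ _) (nd _ _) k1
    obtain ⟨rfl, m2⟩ := X_pow_inj (nd _ _) (nd _ _) k2
    obtain ⟨rfl, m3⟩ := X_pow_inj (nd _ _) (nd _ _) k3
    obtain ⟨rfl, rfl⟩ := gcd_unique m0 m2
    obtain rfl : h = h' := Subtype.ext (mul_right_cancel₀ p.1.1.2.1.ne_zero m3)
    rfl
  · rintro ⟨f, hm, A, B, hAB⟩
    obtain ⟨e0, g0, k0⟩ := exists_X_pow (hm 0)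
    obtain ⟨e1, g1, k1⟩ := exists_X_pow (hm 1)
    obtain ⟨e2, g2, k2⟩ := exists_X_pow (hm 2)
    obtain ⟨e3, g3, k3⟩ := exists_X_pow (hm 3)
    have nd := fun (g a : MX F) => not_X_dvd_mul g.2.2 a.2.2
    have h4 : X ^ (A + e0 + e1) * (g0.1 * g1.1) = X ^ (B + e2 + e3) * (g2.1 * g3.1) := by
      rw [k0, k1, k2, k3] at hAB
      linear_combination hAB
    have h5 := (X_pow_inj (nd _ _) (nd _ _) h4).2
    obtain ⟨g, p, p0, p2⟩ := exists_gcd g0 g2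
    have h6 : p.1.1.1 * g1.1 = p.1.2.1 * g3.1 := by
      apply mul_left_cancel₀ g.2.1.ne_zero
      rw [p0, p2] at h5
      linear_combination h5
    obtain ⟨h, hh⟩ : p.1.2.1 ∣ g1.1 := p.2.symm.dvd_of_dvd_mul_left ⟨_, h6⟩
    have hh3 : g3.1 = p.1.1.1 * h := by
      apply mul_left_cancel₀ p.1.2.2.1.ne_zero
      rw [← h6, hh]; ring
    have hmon : h.Monic := p.1.2.2.1.of_mul_monic_left (hh ▸ g1.2.1)
    have hX : ¬ X ∣ h := fun hd => g1.2.2 (hh ▸ hd.mul_left _)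
    refine ⟨((((e0, e1), (e2, e3)), (g, ⟨h, hmon, hX⟩)), p), Subtype.ext ?_⟩
    funext i
    fin_cases i
    · change X ^ e0 * (g.1 * p.1.1.1) = f 0
      rw [k0, p0]
    · change X ^ e1 * (h * p.1.2.1) = f 1
      rw [k1, hh]; ring
    · change X ^ e2 * (g.1 * p.1.2.1) = f 2
      rw [k2, p2]
    · change X ^ e3 * (h * p.1.1.1) = f 3
      rw [k3, hh3]; ring

lemma quadTerm_eq (F : Type) [Field F] [Fintype F] (α : Fin 4 → ℂ) (f : Fin 4 → F[X]) :
    quadTerm F α f = ((Fintype.card F : ℂ) ^ (-(1 / 2 : ℂ) - α 0)) ^ (f 0).natDegree *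
      ((Fintype.card F : ℂ) ^ (-(1 / 2 : ℂ) - α 1)) ^ (f 1).natDegree *
      ((Fintype.card F : ℂ) ^ (-(1 / 2 : ℂ) + α 2)) ^ (f 2).natDegree *
      ((Fintype.card F : ℂ) ^ (-(1 / 2 : ℂ) + α 3)) ^ (f 3).natDegree := by
  have hq : (Fintype.card F : ℂ) ≠ 0 := by exact_mod_cast Fintype.card_ne_zero
  unfold quadTerm
  simp only [← Complex.cpow_mul_nat, ← Complex.cpow_add _ _ hq]
  congr 1
  ring

lemma gen_sum {A B C D G H P : Type} (a : A → ℂ) (b : B → ℂ) (c : C → ℂ) (d : D → ℂ) (g : G → ℂ)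
    (h : H → ℂ) (p : P → ℂ) (sa : Summable fun x => ‖a x‖) (sb : Summable fun x => ‖b x‖)
    (sc : Summable fun x => ‖c x‖) (sd : Summable fun x => ‖d x‖) (sg : Summable fun x => ‖g x‖)
    (sh : Summable fun x => ‖h x‖) (sp : Summable fun x => ‖p x‖) :
    Summable (fun x : (((A × B) × (C × D)) × (G × H)) × P =>
      ‖a x.1.1.1.1 * b x.1.1.1.2 * (c x.1.1.2.1 * d x.1.1.2.2) * (g x.1.2.1 * h x.1.2.2) * p x.2‖) ∧
    ∑' x : (((A × B) × (C × D)) × (G × H)) × P,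
      a x.1.1.1.1 * b x.1.1.1.2 * (c x.1.1.2.1 * d x.1.1.2.2) * (g x.1.2.1 * h x.1.2.2) * p x.2 =
    (∑' x, a x) * (∑' x, b x) * ((∑' x, c x) * (∑' x, d x)) * ((∑' x, g x) * (∑' x, h x)) *
      (∑' x, p x) := by
  have sx := sa.mul_norm sb
  have sy := sc.mul_norm sd
  have sxy := sx.mul_norm sy
  have sgh := sg.mul_norm sh
  have s6 := sxy.mul_norm sgh
  refine ⟨s6.mul_norm sp, ?_⟩
  rw [tsum_mul_tsum_of_summable_norm sa sb, tsum_mul_tsum_of_summable_norm sc sd,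
    tsum_mul_tsum_of_summable_norm sx sy, tsum_mul_tsum_of_summable_norm sg sh,
    tsum_mul_tsum_of_summable_norm sxy sgh, tsum_mul_tsum_of_summable_norm s6 sp]

lemma hasSum_of_eq {ι : Type} {f : ι → ℂ} {a b : ℂ} (h : HasSum f a) (e : a = b) : HasSum f b :=
  e ▸ h

lemma quad_sum (F : Type) [Field F] [Fintype F] (x0 x1 y0 y1 : ℂ)
    (h0 : Fintype.card F * ‖x0‖ < 1) (h1 : Fintype.card F * ‖x1‖ < 1)
    (h2 : Fintype.card F * ‖y0‖ < 1) (h3 : Fintype.card F * ‖y1‖ < 1) :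
    Summable (fun x : Par F => ‖x0 ^ x.1.1.1.1 * x1 ^ x.1.1.1.2 * (y0 ^ x.1.1.2.1 * y1 ^ x.1.1.2.2) *
      ((x0 * y0) ^ x.1.2.1.1.natDegree * (x1 * y1) ^ x.1.2.2.1.natDegree) *
      ((x0 * y1) ^ x.2.1.1.1.natDegree * (x1 * y0) ^ x.2.1.2.1.natDegree)‖) ∧
    ∑' x : Par F, x0 ^ x.1.1.1.1 * x1 ^ x.1.1.1.2 * (y0 ^ x.1.1.2.1 * y1 ^ x.1.1.2.2) *
      ((x0 * y0) ^ x.1.2.1.1.natDegree * (x1 * y1) ^ x.1.2.2.1.natDegree) *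
      ((x0 * y1) ^ x.2.1.1.1.natDegree * (x1 * y0) ^ x.2.1.2.1.natDegree) =
     ((1 - x0)⁻¹ * (1 - x1)⁻¹) * ((1 - y0)⁻¹ * (1 - y1)⁻¹) *
     (((1 - x0 * y0) * (1 - Fintype.card F * (x0 * y0))⁻¹) *
      ((1 - x1 * y1) * (1 - Fintype.card F * (x1 * y1))⁻¹)) *
     ((1 - x0 * y1) * (1 - Fintype.card F * (x0 * y1))⁻¹ *
      ((1 - x1 * y0) * (1 - Fintype.card F * (x1 * y0))⁻¹) *
       ((1 - (x0 * y1) * (x1 * y0))⁻¹ * (1 - Fintype.card F * ((x0 * y1) * (x1 * y0))))) := by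
  have hq : (1 : ℝ) ≤ Fintype.card F := by exact_mod_cast Fintype.card_pos
  have lt1 : ∀ u : ℂ, Fintype.card F * ‖u‖ < 1 → ‖u‖ < 1 := fun u hu => by
    nlinarith [norm_nonneg u]
  have hmul : ∀ u v : ℂ, Fintype.card F * ‖u‖ < 1 → Fintype.card F * ‖v‖ < 1 →
      Fintype.card F * ‖u * v‖ < 1 := fun u v hu hv => by
    rw [norm_mul, ← mul_assoc]
    have := mul_nonneg (zero_le_one.trans hq) (norm_nonneg u)
    nlinarith [norm_nonneg v, lt1 v hv]
  have geo : ∀ u : ℂ, Fintype.card F * ‖u‖ < 1 → Summable (fun n : ℕ => ‖u ^ n‖) := fun u hu => by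
    simpa using summable_geometric_of_lt_one (norm_nonneg u) (lt1 u hu)
  obtain ⟨sg, tg⟩ := hasSum_MX F _ (hmul _ _ h0 h2)
  obtain ⟨sh, th⟩ := hasSum_MX F _ (hmul _ _ h1 h3)
  obtain ⟨sc, tc⟩ := hasSum_CopX F _ _ (hmul _ _ h0 h3) (hmul _ _ h1 h2)
  have key := gen_sum (fun n : ℕ => x0 ^ n) (fun n : ℕ => x1 ^ n) (fun n : ℕ => y0 ^ n)
    (fun n : ℕ => y1 ^ n) (fun f : MX F => (x0 * y0) ^ f.1.natDegree)
    (fun f : MX F => (x1 * y1) ^ f.1.natDegree)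
    (fun p : CopX F => (x0 * y1) ^ p.1.1.1.natDegree * (x1 * y0) ^ p.1.2.1.natDegree)
    (geo _ h0) (geo _ h1) (geo _ h2) (geo _ h3) sg sh sc
  rw [tg, th, tc,
    tsum_geometric_of_norm_lt_one (lt1 _ h0), tsum_geometric_of_norm_lt_one (lt1 _ h1),
    tsum_geometric_of_norm_lt_one (lt1 _ h2), tsum_geometric_of_norm_lt_one (lt1 _ h3)] at key
  exact key

/-- the diagonal sum of the fourth moment converges absolutely in the
region `Re α₁, Re α₂ > 1/2`, `Re α₃, Re α₄ < -1/2`, and is given by an explicit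
rational function of the `q^{α_i}`. -/
theorem statement14 (F : Type) [Field F] [Fintype F] (α : Fin 4 → ℂ)
    (h1 : 1 / 2 < (α 0).re) (h2 : 1 / 2 < (α 1).re)
    (h3 : (α 2).re < -(1 / 2)) (h4 : (α 3).re < -(1 / 2)) :
    Summable (fun f : QuadSet F => ‖quadTerm F α (f : Fin 4 → Polynomial F)‖) ∧
    HasSum (fun f : QuadSet F => quadTerm F α (f : Fin 4 → Polynomial F))
      (((1 - (Fintype.card F : ℂ) ^ (-1 - α 0 - α 1 + α 2 + α 3)) /
          (1 - (Fintype.card F : ℂ) ^ (-2 - α 0 - α 1 + α 2 + α 3))) *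
        ((1 - (Fintype.card F : ℂ) ^ (-(1 / 2 : ℂ) - α 0)) *
          (1 - (Fintype.card F : ℂ) ^ (-(1 / 2 : ℂ) - α 1)) *
          (1 - (Fintype.card F : ℂ) ^ (-(1 / 2 : ℂ) + α 2)) *
          (1 - (Fintype.card F : ℂ) ^ (-(1 / 2 : ℂ) + α 3)))⁻¹ *
        (((1 - (Fintype.card F : ℂ) ^ (-1 - α 0 + α 2)) /
            (1 - (Fintype.card F : ℂ) ^ (-α 0 + α 2))) *
          ((1 - (Fintype.card F : ℂ) ^ (-1 - α 0 + α 3)) /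
            (1 - (Fintype.card F : ℂ) ^ (-α 0 + α 3))) *
          ((1 - (Fintype.card F : ℂ) ^ (-1 - α 1 + α 2)) /
            (1 - (Fintype.card F : ℂ) ^ (-α 1 + α 2))) *
          ((1 - (Fintype.card F : ℂ) ^ (-1 - α 1 + α 3)) /
            (1 - (Fintype.card F : ℂ) ^ (-α 1 + α 3))))) := by
  have hq : (Fintype.card F : ℂ) ≠ 0 := by exact_mod_cast Fintype.card_ne_zero
  have hq1 : (1 : ℝ) < Fintype.card F := by exact_mod_cast Fintype.one_lt_card
  have small : ∀ s : ℂ, s.re < -1 → Fintype.card F * ‖(Fintype.card F : ℂ) ^ s‖ < 1 := by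
    intro s hs
    rw [Complex.norm_natCast_cpow_of_pos Fintype.card_pos]
    calc (Fintype.card F : ℝ) * (Fintype.card F : ℝ) ^ s.re
        = (Fintype.card F : ℝ) ^ (1 + s.re) := by
          rw [Real.rpow_add (by linarith), Real.rpow_one]
      _ < 1 := Real.rpow_lt_one_of_one_lt_of_neg hq1 (by linarith)
  have e02 : (Fintype.card F : ℂ) ^ (-1 - α 0 + α 2) = (Fintype.card F : ℂ) ^ (-(1 / 2 : ℂ) - α 0) * (Fintype.card F : ℂ) ^ (-(1 / 2 : ℂ) + α 2) := by
    rw [← Complex.cpow_add _ _ hq]; congr 1; ring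
  have e03 : (Fintype.card F : ℂ) ^ (-1 - α 0 + α 3) = (Fintype.card F : ℂ) ^ (-(1 / 2 : ℂ) - α 0) * (Fintype.card F : ℂ) ^ (-(1 / 2 : ℂ) + α 3) := by
    rw [← Complex.cpow_add _ _ hq]; congr 1; ring
  have e12 : (Fintype.card F : ℂ) ^ (-1 - α 1 + α 2) = (Fintype.card F : ℂ) ^ (-(1 / 2 : ℂ) - α 1) * (Fintype.card F : ℂ) ^ (-(1 / 2 : ℂ) + α 2) := by
    rw [← Complex.cpow_add _ _ hq]; congr 1; ring
  have e13 : (Fintype.card F : ℂ) ^ (-1 - α 1 + α 3) = (Fintype.card F : ℂ) ^ (-(1 / 2 : ℂ) - α 1) * (Fintype.card F : ℂ) ^ (-(1 / 2 : ℂ) + α 3) := by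
    rw [← Complex.cpow_add _ _ hq]; congr 1; ring
  have up : ∀ s t : ℂ, s = 1 + t → (Fintype.card F : ℂ) ^ s = Fintype.card F * (Fintype.card F : ℂ) ^ t := by
    intro s t h
    rw [h, Complex.cpow_add _ _ hq, Complex.cpow_one]
  have f02 := up (-α 0 + α 2) (-1 - α 0 + α 2) (by ring)
  have f03 := up (-α 0 + α 3) (-1 - α 0 + α 3) (by ring)
  have f12 := up (-α 1 + α 2) (-1 - α 1 + α 2) (by ring)
  have f13 := up (-α 1 + α 3) (-1 - α 1 + α 3) (by ring)
  have fa := up (-1 - α 0 - α 1 + α 2 + α 3) (-2 - α 0 - α 1 + α 2 + α 3) (by ring)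
  have ea : (Fintype.card F : ℂ) ^ (-2 - α 0 - α 1 + α 2 + α 3) =
      ((Fintype.card F : ℂ) ^ (-(1 / 2 : ℂ) - α 0) * (Fintype.card F : ℂ) ^ (-(1 / 2 : ℂ) + α 3)) *
      ((Fintype.card F : ℂ) ^ (-(1 / 2 : ℂ) - α 1) * (Fintype.card F : ℂ) ^ (-(1 / 2 : ℂ) + α 2)) := by
    simp only [← Complex.cpow_add _ _ hq]; congr 1; ring
  rw [fa, f02, f03, f12, f13, ea, e02, e03, e12, e13]
  have s0 := small (-(1 / 2 : ℂ) - α 0) (by simp; linarith)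
  have s1 := small (-(1 / 2 : ℂ) - α 1) (by simp; linarith)
  have s2 := small (-(1 / 2 : ℂ) + α 2) (by simp; linarith)
  have s3 := small (-(1 / 2 : ℂ) + α 3) (by simp; linarith)
  simp only [quadTerm_eq]
  generalize (Fintype.card F : ℂ) ^ (-(1 / 2 : ℂ) - α 0) = x0 at *
  generalize (Fintype.card F : ℂ) ^ (-(1 / 2 : ℂ) - α 1) = x1 at *
  generalize (Fintype.card F : ℂ) ^ (-(1 / 2 : ℂ) + α 2) = y0 at *
  generalize (Fintype.card F : ℂ) ^ (-(1 / 2 : ℂ) + α 3) = y1 at *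
  obtain ⟨S, T⟩ := quad_sum F x0 x1 y0 y1 s0 s1 s2 s3
  have hterm : ∀ x : Par F, x0 ^ ((quadMap F x).1 0).natDegree * x1 ^ ((quadMap F x).1 1).natDegree *
      y0 ^ ((quadMap F x).1 2).natDegree * y1 ^ ((quadMap F x).1 3).natDegree =
      x0 ^ x.1.1.1.1 * x1 ^ x.1.1.1.2 * (y0 ^ x.1.1.2.1 * y1 ^ x.1.1.2.2) *
      ((x0 * y0) ^ x.1.2.1.1.natDegree * (x1 * y1) ^ x.1.2.2.1.natDegree) *
      ((x0 * y1) ^ x.2.1.1.1.natDegree * (x1 * y0) ^ x.2.1.2.1.natDegree) := by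
    intro x
    have nd : ∀ (n : ℕ) (g a : MX F), (X ^ n * (g.1 * a.1)).natDegree =
        n + (g.1.natDegree + a.1.natDegree) := fun n g a => by
      rw [(monic_X_pow _).natDegree_mul (g.2.1.mul a.2.1), g.2.1.natDegree_mul a.2.1,
        natDegree_X_pow]
    change x0 ^ (X ^ x.1.1.1.1 * (x.1.2.1.1 * x.2.1.1.1)).natDegree *
      x1 ^ (X ^ x.1.1.1.2 * (x.1.2.2.1 * x.2.1.2.1)).natDegree *
      y0 ^ (X ^ x.1.1.2.1 * (x.1.2.1.1 * x.2.1.2.1)).natDegree *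
      y1 ^ (X ^ x.1.1.2.2 * (x.1.2.2.1 * x.2.1.1.1)).natDegree = _
    simp only [nd]
    ring
  simp only [← hterm] at S T
  have S' : Summable (fun f : QuadSet F => ‖x0 ^ (f.1 0).natDegree * x1 ^ (f.1 1).natDegree *
      y0 ^ (f.1 2).natDegree * y1 ^ (f.1 3).natDegree‖) :=
    ((Equiv.ofBijective _ (quadMap_bij F)).summable_iff).1 S
  refine ⟨S', ?_⟩
  have T' := (Equiv.ofBijective _ (quadMap_bij F)).tsum_eq (fun f : QuadSet F =>
    x0 ^ (f.1 0).natDegree * x1 ^ (f.1 1).natDegree *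
      y0 ^ (f.1 2).natDegree * y1 ^ (f.1 3).natDegree)
  have H := S'.of_norm.hasSum
  refine hasSum_of_eq H ((T'.symm.trans T).trans ?_)
  simp only [div_eq_mul_inv, mul_inv]
  ring

end
end
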